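/- arXiv:1702.06983 — 2 statements merged into one kernel-verified Lean document; each statement's English description precedes it below -/
import Mathlib

section
/- There exists a constant c_p > 0 depending only on p such that if ψ̂(0) ≥ c_p·‖ψ‖₂, then there exist constants a₀, a₁ > 0 and t₀ ∈ (0,T) such that for all t ∈ (t₀, T): ((p+1)/p)^{1/(p+1)}·k̂(0,t) ≤ [(T−t) − a₀·(T−t)^{1 + (6p−2)/(p+1)}]^{−1/(p+1)} and ((p+1)/p)^{1/(p+1)}·k̂(0,t) ≥ [(T−t) + a₁·(T−t)^{1 + (6p−2)/(p+1)}]^{−1/(p+1)}. -/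
open Real MeasureTheory Filter Set

/-- The `n`-th Fourier coefficient of a `2π`-periodic function `f : ℝ → ℝ`:
`f̂(n) = (1/2π) ∫₀^{2π} f(θ) e^{-inθ} dθ`. -/
noncomputable def fCoeff (f : ℝ → ℝ) (n : ℤ) : ℂ :=
  (1 / (2 * Real.pi)) * ∫ θ in (0:ℝ)..(2 * Real.pi),
    (f θ : ℂ) * Complex.exp (-(Complex.I * n * θ))

/-- The seminorm `‖f‖₂ = max{sup_n n²|Re f̂(n)|, sup_n n²|Im f̂(n)|}`. -/
noncomputable def seminorm2 (f : ℝ → ℝ) : ℝ :=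
  max (⨆ n : ℤ, (n : ℝ)^2 * |(fCoeff f n).re|)
      (⨆ n : ℤ, (n : ℝ)^2 * |(fCoeff f n).im|)

/-- The `C^l[0,2π]` norm: `max_{0 ≤ j ≤ l} sup_{θ ∈ [0,2π]} |f^{(j)}(θ)|`. -/
noncomputable def ClNorm (l : ℕ) (f : ℝ → ℝ) : ℝ :=
  ⨆ j : Fin (l + 1), ⨆ θ : Set.Icc (0:ℝ) (2 * Real.pi),
    |iteratedDeriv (j : ℕ) f (θ : ℝ)|

/-- `k : ℝ × [0,T) → ℝ` is a smooth, `2π`-periodic (in space), strictly positive solution of the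
`p`-curve shortening equation
`∂k/∂t = k²(k^{p-1} ∂²k/∂θ² + (p-1) k^{p-2} (∂k/∂θ)² + (1/p) k^p)`
with initial datum `ψ` (smooth, strictly positive, `2π`-periodic), blow-up time `T`
(i.e. `sup_θ k(θ,t) → ∞` as `t → T⁻`), such that `k(·,t)` is the curvature of a simple closed
convex curve for each `t`, i.e. `∫₀^{2π} e^{iθ}/k(θ,t) dθ = 0`. -/
def IsPCSF (p : ℕ) (T : ℝ) (k : ℝ → ℝ → ℝ) (ψ : ℝ → ℝ) : Prop :=
  ContDiffOn ℝ (⊤ : ℕ∞) (fun q : ℝ × ℝ => k q.1 q.2) (Set.univ ×ˢ Set.Ico 0 T) ∧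
  (∀ θ t, k (θ + 2 * Real.pi) t = k θ t) ∧
  (∀ θ : ℝ, ∀ t ∈ Set.Ico (0:ℝ) T, 0 < k θ t) ∧
  (∀ θ : ℝ, ∀ t ∈ Set.Ico (0:ℝ) T,
    HasDerivAt (fun s => k θ s)
      ((k θ t)^2 * ((k θ t)^(p - 1) * deriv (deriv (fun x => k x t)) θ
        + ((p : ℝ) - 1) * (k θ t)^(p - 2) * (deriv (fun x => k x t) θ)^2
        + (1 / (p : ℝ)) * (k θ t)^p)) t) ∧
  (∀ θ, k θ 0 = ψ θ) ∧
  ContDiff ℝ (⊤ : ℕ∞) ψ ∧ (∀ θ, 0 < ψ θ) ∧ (∀ θ, ψ (θ + 2 * Real.pi) = ψ θ) ∧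
  Filter.Tendsto (fun t => ⨆ θ : Set.Icc (0:ℝ) (2 * Real.pi), k (θ : ℝ) t)
    (nhdsWithin T (Set.Iio T)) Filter.atTop ∧
  (∀ t ∈ Set.Ico (0:ℝ) T,
    (∫ θ in (0:ℝ)..(2 * Real.pi), Complex.exp (Complex.I * θ) / (k θ t)) = 0)

/-- The original time `t` corresponding to the rescaled time `τ`:
`t = T(1 - e^{-(p+1)τ})`, i.e. `τ = -(1/(p+1))·log(1 - t/T)`. -/
noncomputable def tOf (p : ℕ) (T τ : ℝ) : ℝ := T * (1 - Real.exp (-((p : ℝ) + 1) * τ))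

/-- The normalized curvature `k̃(θ,τ) = ((p+1)/p)^{1/(p+1)} (T-t)^{1/(p+1)} k(θ,t)`,
with `t = T(1 - e^{-(p+1)τ})`. -/
noncomputable def ktilde (p : ℕ) (T : ℝ) (k : ℝ → ℝ → ℝ) (θ τ : ℝ) : ℝ :=
  (((p : ℝ) + 1) / (p : ℝ)) ^ ((1 : ℝ) / ((p : ℝ) + 1))
    * (T - tOf p T τ) ^ ((1 : ℝ) / ((p : ℝ) + 1)) * k θ (tOf p T τ)

lemma fCoeff_eq_on (f : ℝ → ℝ) (n : ℤ) :
    fCoeff f n = fourierCoeffOn (Real.two_pi_pos) (fun x => (f x : ℂ)) n := by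
  rw [fourierCoeffOn_eq_integral, fCoeff]
  rw [Complex.real_smul]
  congr 1
  · push_cast; simp
  · apply intervalIntegral.integral_congr
    intro x _
    simp only [smul_eq_mul]
    rw [mul_comm]
    congr 1
    rw [fourier_coe_apply]
    congr 1
    have : (Real.pi : ℂ) ≠ 0 := by exact_mod_cast Real.pi_ne_zero
    push_cast
    field_simp
    ring

lemma fCoeff_parseval (f : ℝ → ℝ) (hf : Continuous f) :
    HasSum (fun n : ℤ => ‖fCoeff f n‖ ^ 2)
      ((2 * Real.pi)⁻¹ * ∫ x in (0:ℝ)..(2 * Real.pi), f x ^ 2) := by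
  have hc : Continuous (fun x => (f x : ℂ)) := Complex.continuous_ofReal.comp hf
  have hL : MemLp (fun x => (f x : ℂ)) 2 (volume.restrict (Ioc 0 (2 * Real.pi))) := by
    obtain ⟨C, hC⟩ := isCompact_Icc.exists_bound_of_continuousOn
      (s := Icc (0:ℝ) (2 * Real.pi)) hc.continuousOn
    refine MemLp.of_bound hc.aestronglyMeasurable C ?_
    rw [ae_restrict_iff' measurableSet_Ioc]
    exact Filter.Eventually.of_forall fun x hx => hC x (Ioc_subset_Icc_self hx)
  have := hasSum_sq_fourierCoeffOn Real.two_pi_pos hL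
  simp only [fCoeff_eq_on]
  convert this using 1
  simp

lemma fCoeff_deriv (f g : ℝ → ℝ) (hf : ∀ x, HasDerivAt f (g x) x) (hg : Continuous g)
    (hper : f (2 * Real.pi) = f 0) (n : ℤ) :
    fCoeff g n = Complex.I * n * fCoeff f n := by
  have hfc : Continuous f := continuous_iff_continuousAt.2 fun x => (hf x).continuousAt
  have hcf : Continuous (fun x => (f x : ℂ)) := Complex.continuous_ofReal.comp hfc
  have hcg : Continuous (fun x => (g x : ℂ)) := Complex.continuous_ofReal.comp hg
  have hce : Continuous (fun x : ℝ => Complex.exp (-(Complex.I * n * x))) := by fun_prop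
  have key : ∀ x : ℝ, HasDerivAt (fun x : ℝ => (f x : ℂ) * Complex.exp (-(Complex.I * n * x)))
      ((g x : ℂ) * Complex.exp (-(Complex.I * n * x)) -
        Complex.I * n * ((f x : ℂ) * Complex.exp (-(Complex.I * n * x)))) x := by
    intro x
    have h1 : HasDerivAt (fun x : ℝ => (f x : ℂ)) (g x : ℂ) x := (hf x).ofReal_comp
    have h2 : HasDerivAt (fun x : ℝ => Complex.exp (-(Complex.I * n * x)))
        (Complex.exp (-(Complex.I * n * x)) * (-(Complex.I * n * 1))) x := by
      apply HasDerivAt.cexp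
      apply HasDerivAt.fun_neg
      apply HasDerivAt.const_mul
      exact Complex.ofRealCLM.hasDerivAt
    have h3 := h1.mul h2
    refine h3.congr_deriv ?_
    ring
  have hI := intervalIntegral.integral_eq_sub_of_hasDerivAt (a := 0) (b := 2 * Real.pi)
    (fun x _ => key x) (by apply Continuous.intervalIntegrable; fun_prop)
  rw [intervalIntegral.integral_sub (by apply Continuous.intervalIntegrable; fun_prop)
    (by apply Continuous.intervalIntegrable; fun_prop), intervalIntegral.integral_const_mul] at hI
  have he : Complex.exp (-(Complex.I * n * ((2 * Real.pi : ℝ) : ℂ))) = 1 := by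
    rw [Complex.exp_eq_one_iff]
    exact ⟨-n, by push_cast; ring⟩
  rw [he, hper] at hI
  simp only [Complex.ofReal_zero, mul_zero, neg_zero, Complex.exp_zero, sub_self] at hI
  unfold fCoeff
  rw [sub_eq_zero.1 hI]
  ring

lemma fCoeff_zero (f : ℝ → ℝ) :
    (fCoeff f 0).re = (2 * Real.pi)⁻¹ * ∫ x in (0:ℝ)..(2 * Real.pi), f x := by
  unfold fCoeff
  simp only [Int.cast_zero, mul_zero, zero_mul, neg_zero, Complex.exp_zero, mul_one]
  rw [intervalIntegral.integral_ofReal]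
  have : (1 / (2 * (Real.pi : ℂ))) * ((∫ x in (0:ℝ)..(2 * Real.pi), f x : ℝ) : ℂ)
    = (((2 * Real.pi)⁻¹ * ∫ x in (0:ℝ)..(2 * Real.pi), f x : ℝ) : ℂ) := by
    push_cast; rw [one_div]
  rw [this, Complex.ofReal_re]

lemma fCoeff_re (f : ℝ → ℝ) (hf : Continuous f) (n : ℤ) :
    (fCoeff f n).re = (2 * Real.pi)⁻¹ * ∫ x in (0:ℝ)..(2 * Real.pi), f x * Real.cos (n * x) := by
  have hcf : Continuous (fun x => (f x : ℂ)) := Complex.continuous_ofReal.comp hf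
  have h1 : (∫ θ in (0:ℝ)..(2 * Real.pi), (f θ : ℂ) * Complex.exp (-(Complex.I * n * θ))).re
    = ∫ x in (0:ℝ)..(2 * Real.pi), f x * Real.cos (n * x) := by
    have := Complex.reCLM.intervalIntegral_comp_comm (μ := volume) (a := 0) (b := 2 * Real.pi)
      (f := fun θ : ℝ => (f θ : ℂ) * Complex.exp (-(Complex.I * n * θ)))
      (by apply Continuous.intervalIntegrable; fun_prop)
    rw [Complex.reCLM_apply] at this
    rw [← this]
    apply intervalIntegral.integral_congr
    intro x _
    simp [Complex.exp_re]
  have h2 : (1 / (2 * (Real.pi : ℂ))) = (((2 * Real.pi)⁻¹ : ℝ) : ℂ) := by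
    push_cast; rw [one_div]
  rw [fCoeff, h2, Complex.re_ofReal_mul, h1]

lemma fCoeff_im (f : ℝ → ℝ) (hf : Continuous f) (n : ℤ) :
    (fCoeff f n).im = -((2 * Real.pi)⁻¹ * ∫ x in (0:ℝ)..(2 * Real.pi), f x * Real.sin (n * x)) := by
  have hcf : Continuous (fun x => (f x : ℂ)) := Complex.continuous_ofReal.comp hf
  have h1 : (∫ θ in (0:ℝ)..(2 * Real.pi), (f θ : ℂ) * Complex.exp (-(Complex.I * n * θ))).im
    = - ∫ x in (0:ℝ)..(2 * Real.pi), f x * Real.sin (n * x) := by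
    have := Complex.imCLM.intervalIntegral_comp_comm (μ := volume) (a := 0) (b := 2 * Real.pi)
      (f := fun θ : ℝ => (f θ : ℂ) * Complex.exp (-(Complex.I * n * θ)))
      (by apply Continuous.intervalIntegrable; fun_prop)
    rw [Complex.imCLM_apply] at this
    rw [← this, ← intervalIntegral.integral_neg]
    apply intervalIntegral.integral_congr
    intro x _
    simp [Complex.exp_im]
  have h2 : (1 / (2 * (Real.pi : ℂ))) = (((2 * Real.pi)⁻¹ : ℝ) : ℂ) := by
    push_cast; rw [one_div]
  rw [fCoeff, h2, Complex.im_ofReal_mul, h1]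
  ring

/-- Wirtinger type inequality with the first mode removed. -/
lemma wirt (f g : ℝ → ℝ) (hf : ∀ x, HasDerivAt f (g x) x) (hg : Continuous g)
    (hper : f (2 * Real.pi) = f 0) (h0 : ∫ x in (0:ℝ)..(2 * Real.pi), f x = 0) :
    4 * (∫ x in (0:ℝ)..(2 * Real.pi), f x ^ 2) -
      3 * ((∫ x in (0:ℝ)..(2 * Real.pi), f x * Real.cos x) ^ 2
        + (∫ x in (0:ℝ)..(2 * Real.pi), f x * Real.sin x) ^ 2)
      ≤ ∫ x in (0:ℝ)..(2 * Real.pi), g x ^ 2 := by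
  have hfc : Continuous f := continuous_iff_continuousAt.2 fun x => (hf x).continuousAt
  have P1 := fCoeff_parseval f hfc
  have P2 := fCoeff_parseval g hg
  have hz : fCoeff f 0 = 0 := by
    apply Complex.ext
    · rw [fCoeff_zero, h0]; simp
    · rw [fCoeff_im f hfc]; simp
  set A := ∫ x in (0:ℝ)..(2 * Real.pi), f x * Real.cos x
  set B := ∫ x in (0:ℝ)..(2 * Real.pi), f x * Real.sin x
  have hn1 : ‖fCoeff f 1‖ ^ 2 = (2 * Real.pi)⁻¹ ^ 2 * (A ^ 2 + B ^ 2) := by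
    rw [← Complex.normSq_eq_norm_sq, Complex.normSq_apply, fCoeff_re f hfc, fCoeff_im f hfc]
    simp only [Int.cast_one, one_mul]
    ring
  have hnm1 : ‖fCoeff f (-1)‖ ^ 2 = (2 * Real.pi)⁻¹ ^ 2 * (A ^ 2 + B ^ 2) := by
    rw [← Complex.normSq_eq_norm_sq, Complex.normSq_apply, fCoeff_re f hfc, fCoeff_im f hfc]
    simp only [Int.cast_neg, Int.cast_one, neg_mul, one_mul, Real.cos_neg, Real.sin_neg, mul_neg,
      intervalIntegral.integral_neg]
    ring
  have H := (P2.sub (P1.mul_left 4)).add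
    ((hasSum_ite_eq (1:ℤ) (3 * ‖fCoeff f 1‖ ^ 2)).add
      (hasSum_ite_eq (-1:ℤ) (3 * ‖fCoeff f (-1)‖ ^ 2)))
  have hnn := H.nonneg (by
    intro n
    rw [fCoeff_deriv f g hf hg hper n]
    simp only [norm_mul, Complex.norm_I, one_mul, mul_pow, Complex.norm_intCast, sq_abs]
    by_cases h1 : n = 1
    · subst h1; simp; ring_nf; positivity
    by_cases h2 : n = -1
    · subst h2; simp; ring_nf; positivity
    by_cases h3 : n = 0
    · subst h3; simp [hz]
    simp only [h1, h2, if_false, add_zero]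
    have h4 : (4:ℝ) ≤ (n:ℝ) ^ 2 := by
      have : (4:ℤ) ≤ n ^ 2 := by
        have : 2 ≤ |n| := by
          rcases abs_cases n with h | h <;> omega
        rw [← sq_abs]; nlinarith
      exact_mod_cast this
    nlinarith [sq_nonneg ‖fCoeff f n‖])
  rw [hn1, hnm1] at hnn
  have hpi := Real.pi_gt_three
  have h5 : (2 * Real.pi)⁻¹ * 2 ≤ 1 := by
    rw [inv_mul_le_iff₀ (by positivity)]; linarith
  have hpp : 0 < (2 * Real.pi)⁻¹ := by positivity
  set X := (2 * Real.pi)⁻¹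
  set F := ∫ x in (0:ℝ)..(2 * Real.pi), f x ^ 2
  set G := ∫ x in (0:ℝ)..(2 * Real.pi), g x ^ 2
  have h6 : 0 ≤ X * (G - 4 * F + 3 * ((2 * X) * (A ^ 2 + B ^ 2))) := by nlinarith
  have h7 := nonneg_of_mul_nonneg_right h6 hpp
  have h8 : (X * 2) * (A ^ 2 + B ^ 2) ≤ 1 * (A ^ 2 + B ^ 2) :=
    mul_le_mul_of_nonneg_right h5 (by positivity)
  nlinarith

lemma cs_int (a b : ℝ → ℝ) (ha : Continuous a) (hb : Continuous b) :
    (∫ x in (0:ℝ)..(2 * Real.pi), a x * b x) ^ 2 ≤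
      (∫ x in (0:ℝ)..(2 * Real.pi), a x ^ 2) * (∫ x in (0:ℝ)..(2 * Real.pi), b x ^ 2) := by
  have h : ∀ t : ℝ, 0 ≤ (∫ x in (0:ℝ)..(2 * Real.pi), a x ^ 2) * (t * t) +
      (2 * ∫ x in (0:ℝ)..(2 * Real.pi), a x * b x) * t + ∫ x in (0:ℝ)..(2 * Real.pi), b x ^ 2 := by
    intro t
    have h1 : 0 ≤ ∫ x in (0:ℝ)..(2 * Real.pi), (a x * t + b x) ^ 2 :=
      intervalIntegral.integral_nonneg Real.two_pi_pos.le fun x _ => sq_nonneg _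
    have h2 : ∫ x in (0:ℝ)..(2 * Real.pi), (a x * t + b x) ^ 2 =
      ∫ x in (0:ℝ)..(2 * Real.pi), (a x ^ 2 * (t * t) + (a x * b x) * (2 * t) + b x ^ 2) := by
      congr 1; ext x; ring
    rw [h2, intervalIntegral.integral_add (by apply Continuous.intervalIntegrable; fun_prop)
      (by apply Continuous.intervalIntegrable; fun_prop),
      intervalIntegral.integral_add (by apply Continuous.intervalIntegrable; fun_prop)
      (by apply Continuous.intervalIntegrable; fun_prop),
      intervalIntegral.integral_mul_const, intervalIntegral.integral_mul_const] at h1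
    linarith
  have := discrim_le_zero h
  unfold discrim at this
  nlinarith

lemma sup_bound (f g : ℝ → ℝ) (m : ℝ) (hf : ∀ x, HasDerivAt f (g x) x) (hg : Continuous g)
    (hm : ∫ x in (0:ℝ)..(2 * Real.pi), f x = 2 * Real.pi * m) (x : ℝ)
    (hx : x ∈ Icc 0 (2 * Real.pi)) :
    (f x - m) ^ 2 ≤ 2 * Real.pi * ∫ x in (0:ℝ)..(2 * Real.pi), g x ^ 2 := by
  have hfc : Continuous f := continuous_iff_continuousAt.2 fun x => (hf x).continuousAt
  have hpi := Real.two_pi_pos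
  set J := ∫ x in (0:ℝ)..(2 * Real.pi), |g x| with hJ
  have h1 : ∀ y ∈ Icc 0 (2 * Real.pi), |f x - f y| ≤ J := by
    intro y hy
    have e := intervalIntegral.integral_eq_sub_of_hasDerivAt (a := y) (b := x)
      (fun x _ => hf x) (hg.intervalIntegrable _ _)
    rw [← e]
    refine (intervalIntegral.norm_integral_le_abs_integral_norm (f := g)).trans ?_
    simp only [Real.norm_eq_abs]
    rw [hJ, ← abs_of_nonneg (intervalIntegral.integral_nonneg (f := fun x => |g x|)
      hpi.le fun x _ => abs_nonneg _)]
    refine intervalIntegral.abs_integral_mono_interval ?_ ?_ ?_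
    · rw [uIoc_of_le hpi.le]
      rintro z ⟨hz1, hz2⟩
      exact ⟨lt_of_le_of_lt (le_min hy.1 hx.1) hz1, hz2.trans (max_le hy.2 hx.2)⟩
    · exact Filter.Eventually.of_forall fun x => abs_nonneg _
    · exact hg.abs.intervalIntegrable _ _
  have h2 : |∫ y in (0:ℝ)..(2 * Real.pi), (f x - f y)| ≤ J * |2 * Real.pi - 0| := by
    rw [← Real.norm_eq_abs (∫ y in (0:ℝ)..(2 * Real.pi), (f x - f y))]
    apply intervalIntegral.norm_integral_le_of_norm_le_const
    intro y hy
    rw [uIoc_of_le hpi.le] at hy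
    exact h1 y (Ioc_subset_Icc_self hy)
  rw [intervalIntegral.integral_sub (by simp) (hfc.intervalIntegrable _ _), hm] at h2
  simp only [intervalIntegral.integral_const, sub_zero, smul_eq_mul] at h2
  rw [← mul_sub, abs_mul, mul_comm, abs_of_pos hpi] at h2
  have h3 : |f x - m| ≤ J := le_of_mul_le_mul_right h2 hpi
  have h4 := cs_int (fun x => |g x|) (fun _ => 1) hg.abs continuous_const
  simp only [mul_one, sq_abs, one_pow, intervalIntegral.integral_const, sub_zero,
    smul_eq_mul] at h4
  rw [← sq_abs]
  calc |f x - m| ^ 2 ≤ J ^ 2 := by gcongr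
    _ ≤ _ := by rw [hJ]; linarith

lemma pow_taylor (n : ℕ) : ∃ C : ℝ, 0 ≤ C ∧ ∀ r w : ℝ, 0 < r → |w| ≤ r →
    |(r + w) ^ (n + 2) - r ^ (n + 2) - (n + 2) * r ^ (n + 1) * w| ≤ C * (r ^ n * w ^ 2) := by
  induction n with
  | zero =>
    refine ⟨1, by norm_num, fun r w hr hw => ?_⟩
    have : (r + w) ^ (0 + 2) - r ^ (0 + 2) - ((0:ℕ) + 2) * r ^ (0 + 1) * w = w ^ 2 := by
      push_cast; ring
    rw [this]; simp
  | succ n ih =>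
    obtain ⟨C, hC, h⟩ := ih
    refine ⟨2 * C + (n + 2), by positivity, fun r w hr hw => ?_⟩
    have h1 := h r w hr hw
    have e : (r + w) ^ (n + 1 + 2) - r ^ (n + 1 + 2) - ((n + 1 : ℕ) + 2) * r ^ (n + 1 + 1) * w
      = (r + w) * ((r + w) ^ (n + 2) - r ^ (n + 2) - (n + 2) * r ^ (n + 1) * w)
        + (n + 2) * (r ^ (n + 1) * w ^ 2) := by
      push_cast; ring
    rw [e]
    have h2 : |r + w| ≤ 2 * r := by
      have := abs_add_le r w
      rw [abs_of_pos hr] at this; linarith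
    calc _ ≤ |r + w| * |(r + w) ^ (n + 2) - r ^ (n + 2) - (n + 2) * r ^ (n + 1) * w| +
          |(n + 2) * (r ^ (n + 1) * w ^ 2)| := by
            rw [← abs_mul]; exact abs_add_le _ _
      _ ≤ (2 * r) * (C * (r ^ n * w ^ 2)) + (n + 2) * (r ^ (n + 1) * w ^ 2) := by
            rw [abs_of_nonneg (a := (n + 2) * (r ^ (n + 1) * w ^ 2)) (by positivity)]
            gcongr
      _ = _ := by ring

lemma pow_le_lin (n : ℕ) (d : ℝ) (h0 : 0 ≤ d) (h1 : d ≤ 1) : (1 + d) ^ n ≤ 1 + 3 ^ n * d := by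
  induction n with
  | zero => simp [h0]
  | succ n ih =>
    have h3 : (1:ℝ) ≤ 3 ^ n := one_le_pow₀ (by norm_num)
    rw [pow_succ, pow_succ]
    calc (1 + d) ^ n * (1 + d) ≤ (1 + 3 ^ n * d) * (1 + d) := by gcongr
      _ ≤ _ := by nlinarith [mul_nonneg (by positivity : (0:ℝ) ≤ 3 ^ n * d) (sub_nonneg.2 h1),
                    mul_nonneg (sub_nonneg.2 h3) h0]

lemma ibp (f g : ℝ → ℝ) (hf : ∀ x, HasDerivAt f (g x) x) (hg : Continuous g)
    (hper : f (2 * Real.pi) = f 0) : ∫ x in (0:ℝ)..(2 * Real.pi), g x = 0 := by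
  rw [intervalIntegral.integral_eq_sub_of_hasDerivAt (fun x _ => hf x) (hg.intervalIntegrable _ _),
    hper, sub_self]

lemma mono_int (f g : ℝ → ℝ) (hf : Continuous f) (hg : Continuous g)
    (h : ∀ x ∈ Icc (0:ℝ) (2 * Real.pi), f x ≤ g x) :
    ∫ x in (0:ℝ)..(2 * Real.pi), f x ≤ ∫ x in (0:ℝ)..(2 * Real.pi), g x :=
  intervalIntegral.integral_mono_on Real.two_pi_pos.le (hf.intervalIntegrable _ _)
    (hg.intervalIntegrable _ _) h

lemma abs_int_le (f g : ℝ → ℝ) (hf : Continuous f) (hg : Continuous g)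
    (h : ∀ x ∈ Icc (0:ℝ) (2 * Real.pi), |f x| ≤ g x) :
    |∫ x in (0:ℝ)..(2 * Real.pi), f x| ≤ ∫ x in (0:ℝ)..(2 * Real.pi), g x := by
  rw [abs_le, ← intervalIntegral.integral_neg]
  exact ⟨mono_int _ _ hg.neg hf fun x hx => (abs_le.1 (h x hx)).1,
    mono_int _ _ hf hg fun x hx => (abs_le.1 (h x hx)).2⟩

/-- first mode bound from the closing condition -/
lemma first_mode (k c : ℝ → ℝ) (r d : ℝ) (hk : Continuous k) (hc : Continuous c)
    (hpos : ∀ x, 0 < k x) (hr : 0 < r) (_hd0 : 0 ≤ d) (hd : d ≤ 1 / 2)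
    (hw : ∀ x ∈ Icc (0:ℝ) (2 * Real.pi), |k x - r| ≤ d * r) (hc1 : ∀ x, |c x| ≤ 1)
    (hc0 : ∫ x in (0:ℝ)..(2 * Real.pi), c x = 0)
    (hck : ∫ x in (0:ℝ)..(2 * Real.pi), c x / k x = 0) :
    (∫ x in (0:ℝ)..(2 * Real.pi), k x * c x) ^ 2 ≤ 16 * Real.pi ^ 2 * d ^ 4 * r ^ 2 := by
  have hkne : ∀ x, k x ≠ 0 := fun x => (hpos x).ne'
  have e : ∫ x in (0:ℝ)..(2 * Real.pi), k x * c x =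
      ∫ x in (0:ℝ)..(2 * Real.pi), (k x - r) ^ 2 * c x / k x := by
    have e1 : ∫ x in (0:ℝ)..(2 * Real.pi), (k x - r) ^ 2 * c x / k x =
      ∫ x in (0:ℝ)..(2 * Real.pi), (k x * c x - (2 * r) * c x + r ^ 2 * (c x / k x)) := by
      congr 1; ext x; have := hkne x; field_simp; ring
    rw [e1, intervalIntegral.integral_add, intervalIntegral.integral_sub,
      intervalIntegral.integral_const_mul, intervalIntegral.integral_const_mul, hc0, hck]
    · simp
    all_goals apply Continuous.intervalIntegrable; fun_prop (disch := exact hkne _)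
  have h2 : |∫ x in (0:ℝ)..(2 * Real.pi), k x * c x| ≤
      ∫ x in (0:ℝ)..(2 * Real.pi), 2 * d ^ 2 * r := by
    rw [e]
    refine abs_int_le _ _ (by fun_prop (disch := exact hkne _)) (by fun_prop) fun x hx => ?_
    have h := hw x hx
    have hk2 : r / 2 ≤ k x := by
      have := (abs_le.1 h).1
      nlinarith
    rw [abs_div, abs_of_pos (hpos x), div_le_iff₀ (hpos x), abs_mul, abs_of_nonneg (sq_nonneg _),
      ← sq_abs]
    calc |k x - r| ^ 2 * |c x| ≤ (d * r) ^ 2 * 1 := by gcongr; exact hc1 x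
      _ = 2 * d ^ 2 * r * (r / 2) := by ring
      _ ≤ _ := by gcongr
  simp only [intervalIntegral.integral_const, sub_zero, smul_eq_mul] at h2
  rw [← sq_abs]
  calc _ ≤ (2 * Real.pi * (2 * d ^ 2 * r)) ^ 2 := by gcongr
    _ = _ := by ring

set_option maxHeartbeats 2000000 in
lemma static_main (p : ℕ) (hp : 1 ≤ p) : ∃ d0 C : ℝ, 0 < d0 ∧ d0 ≤ 1 / 2 ∧ 0 ≤ C ∧
    ∀ (k k1 k2 kt : ℝ → ℝ) (r D d : ℝ), (∀ x, HasDerivAt k (k1 x) x) →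
    (∀ x, HasDerivAt k1 (k2 x) x) → Continuous k2 → k (2 * Real.pi) = k 0 →
    k1 (2 * Real.pi) = k1 0 → (∀ x, 0 < k x) → 
    (∫ x in (0:ℝ)..(2 * Real.pi), k x = 2 * Real.pi * r) →
    (∫ x in (0:ℝ)..(2 * Real.pi), k1 x ^ 2 = D) → 0 < r → 0 ≤ d → d ≤ d0 →
    2 * Real.pi * D = d ^ 2 * r ^ 2 →
    (∫ x in (0:ℝ)..(2 * Real.pi), Real.cos x / k x = 0) →
    (∫ x in (0:ℝ)..(2 * Real.pi), Real.sin x / k x = 0) →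
    (∀ x, kt x = k x ^ 2 * (k x ^ (p - 1) * k2 x + ((p:ℝ) - 1) * k x ^ (p - 2) * k1 x ^ 2
      + (1 / (p:ℝ)) * k x ^ p)) →
    (∀ x ∈ Icc (0:ℝ) (2 * Real.pi), k x ≤ 2 * r) ∧ 
    |p * (∫ x in (0:ℝ)..(2 * Real.pi), kt x) - 2 * Real.pi * r ^ (p + 2)| ≤ C * r ^ p * D ∧
    p * (-2 * ∫ x in (0:ℝ)..(2 * Real.pi), k2 x * kt x) ≤
      r ^ (p + 1) * D * (-(6 * p - 4) + C * d) := by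
  obtain ⟨C1, hC1, hT⟩ := pow_taylor p
  have hp1 : (1:ℝ) ≤ p := by exact_mod_cast hp
  have hp0 : (0:ℝ) < p := by linarith
  set c1 : ℝ := 2 * p * (p + 1) + 2 * p * (p - 1) * 2 ^ p with hc1
  have hc1pos : 0 < c1 := by
    have : 0 ≤ 2 * (p:ℝ) * (p - 1) * 2 ^ p := by
      have : (0:ℝ) ≤ p - 1 := by linarith
      positivity
    positivity
  set c2 : ℝ := 2 * (p + 2) * 3 ^ (p + 1) with hc2
  have hc2pos : 0 < c2 := by positivity
  set c3 : ℝ := C1 * 4 * Real.pi ^ 2 + 2 * p * 2 ^ p with hc3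
  have hc3pos : 0 < c3 := by positivity
  refine ⟨min (1 / 2) (2 * p / c1), 4 * c1 + 2 * p * 6144 + c2 + c3, by positivity,
    min_le_left _ _, by positivity, ?_⟩
  intro k k1 k2 kt r D d hk hk1 hk2c hkper hk1per hpos hmean hD hr hd hdd0 hDd hcos hsin hkt
  have hd2 : d ≤ 1 / 2 := hdd0.trans (min_le_left _ _)
  have hdc : c1 * d ≤ 2 * p := by
    have := hdd0.trans (min_le_right _ _)
    rw [le_div_iff₀ hc1pos] at this; linarith
  have hkc : Continuous k := continuous_iff_continuousAt.2 fun x => (hk x).continuousAt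
  have hk1c : Continuous k1 := continuous_iff_continuousAt.2 fun x => (hk1 x).continuousAt
  have hpi := Real.two_pi_pos
  have hD0 : 0 ≤ D := by
    rw [← hD]; exact intervalIntegral.integral_nonneg hpi.le fun x _ => sq_nonneg _
  have hw : ∀ x ∈ Icc (0:ℝ) (2 * Real.pi), |k x - r| ≤ d * r := by
    intro x hx
    have := sup_bound k k1 r hk hk1c hmean x hx
    rw [hD, hDd, ← mul_pow] at this
    exact abs_le_of_sq_le_sq this (by positivity)
  have hkhi : ∀ x ∈ Icc (0:ℝ) (2 * Real.pi), k x ≤ r * (1 + d) := fun x hx => by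
    have := (abs_le.1 (hw x hx)).2; linarith
  have hklo : ∀ x ∈ Icc (0:ℝ) (2 * Real.pi), r * (1 - d) ≤ k x := fun x hx => by
    have := (abs_le.1 (hw x hx)).1; linarith
  have hk2r : ∀ x ∈ Icc (0:ℝ) (2 * Real.pi), k x ≤ 2 * r := fun x hx => by
    have := hkhi x hx; nlinarith
  -- simplified form of kt
  have hkt' : ∀ x, p * kt x = p * (k x ^ (p + 1) * k2 x) + p * (p - 1) * (k x ^ p * k1 x ^ 2)
      + k x ^ (p + 2) := by
    intro x
    rw [hkt]
    obtain ⟨q, rfl⟩ : ∃ q, p = q + 1 := ⟨p - 1, by omega⟩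
    rcases q with _ | q
    · norm_num; ring
    · simp only [Nat.add_sub_cancel]
      have : q + 1 + 1 - 2 = q := by omega
      rw [this]
      push_cast
      have : (q:ℝ) + 1 + 1 ≠ 0 := by positivity
      field_simp
      ring
  refine ⟨hk2r, ?_, ?_⟩
  · -- evolution of the mean
    have hibp : ∫ x in (0:ℝ)..(2 * Real.pi), (((p + 1 : ℕ) * k x ^ p * k1 x) * k1 x +
        k x ^ (p + 1) * k2 x) = 0 := by
      apply ibp (fun x => k x ^ (p + 1) * k1 x)
      · intro x; exact ((hk x).pow (p + 1)).mul (hk1 x)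
      · fun_prop
      · simp [hkper, hk1per]
    have e : p * (∫ x in (0:ℝ)..(2 * Real.pi), kt x) - 2 * Real.pi * r ^ (p + 2) =
        ∫ x in (0:ℝ)..(2 * Real.pi), ((k x ^ (p + 2) - r ^ (p + 2)
          - (p + 2) * r ^ (p + 1) * (k x - r)) - 2 * p * (k x ^ p * k1 x ^ 2)) := by
      rw [← intervalIntegral.integral_const_mul]
      have e1 : ∫ x in (0:ℝ)..(2 * Real.pi), p * kt x = ∫ x in (0:ℝ)..(2 * Real.pi),
          (((k x ^ (p + 2) - r ^ (p + 2)
          - (p + 2) * r ^ (p + 1) * (k x - r)) - 2 * p * (k x ^ p * k1 x ^ 2)) + 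
          p * (((p + 1 : ℕ) * k x ^ p * k1 x) * k1 x + k x ^ (p + 1) * k2 x) +
          ((p + 2) * r ^ (p + 1)) * k x + (r ^ (p + 2) - (p + 2) * r ^ (p + 1) * r)) := by
        congr 1; ext x; rw [hkt']; push_cast; ring
      rw [e1, intervalIntegral.integral_add, intervalIntegral.integral_add,
        intervalIntegral.integral_add, intervalIntegral.integral_const_mul (p:ℝ), hibp,
        intervalIntegral.integral_const_mul ((p + 2) * r ^ (p + 1)), hmean]
      · simp only [intervalIntegral.integral_const, sub_zero, smul_eq_mul]
        ring
      all_goals apply Continuous.intervalIntegrable; fun_prop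
    rw [e]
    have h1 : |∫ x in (0:ℝ)..(2 * Real.pi), ((k x ^ (p + 2) - r ^ (p + 2)
          - (p + 2) * r ^ (p + 1) * (k x - r)) - 2 * p * (k x ^ p * k1 x ^ 2))| ≤
        ∫ x in (0:ℝ)..(2 * Real.pi), (C1 * (r ^ p * (2 * Real.pi * D)) +
          2 * p * ((2 * r) ^ p) * k1 x ^ 2) := by
      refine abs_int_le _ _ (by fun_prop) (by fun_prop) fun x hx => ?_
      have hwx := hw x hx
      have h3 := hT r (k x - r) hr (hwx.trans (by nlinarith))
      rw [add_sub_cancel] at h3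
      have h4 : (k x - r) ^ 2 ≤ 2 * Real.pi * D := by
        rw [hDd, ← sq_abs, ← mul_pow]; gcongr
      refine (abs_sub _ _).trans (add_le_add (h3.trans (by gcongr)) ?_)
      have := (hpos x).le
      rw [abs_of_nonneg (by positivity)]
      have h5 : k x ^ p ≤ (2 * r) ^ p := by gcongr; exact hk2r x hx
      calc _ ≤ 2 * p * ((2 * r) ^ p * k1 x ^ 2) := by gcongr
        _ = _ := by ring
    refine h1.trans ?_
    rw [intervalIntegral.integral_add (by simp) (by apply Continuous.intervalIntegrable; fun_prop),
      intervalIntegral.integral_const_mul (2 * p * ((2 * r) ^ p)), hD]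
    simp only [intervalIntegral.integral_const, sub_zero, smul_eq_mul]
    calc _ = c3 * r ^ p * D := by rw [hc3, mul_pow]; ring
      _ ≤ _ := by gcongr; nlinarith
  · -- energy
    set Q := ∫ x in (0:ℝ)..(2 * Real.pi), k2 x ^ 2 with hQ
    have hQ0 : 0 ≤ Q := intervalIntegral.integral_nonneg hpi.le fun x _ => sq_nonneg _
    have hk10 : ∫ x in (0:ℝ)..(2 * Real.pi), k1 x = 0 := ibp k k1 hk hk1c hkper
    have hA : (∫ x in (0:ℝ)..(2 * Real.pi), k1 x * Real.cos x) ^ 2 ≤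
        16 * Real.pi ^ 2 * d ^ 4 * r ^ 2 := by
      have h1 := ibp (fun x => k x * Real.cos x) (fun x => k1 x * Real.cos x + k x * (-Real.sin x))
        (fun x => (hk x).mul (Real.hasDerivAt_cos x)) (by fun_prop) (by simp [hkper])
      rw [intervalIntegral.integral_add (by apply Continuous.intervalIntegrable; fun_prop)
        (by apply Continuous.intervalIntegrable; fun_prop)] at h1
      simp only [mul_neg, intervalIntegral.integral_neg] at h1
      have h2 := first_mode k Real.sin r d hkc Real.continuous_sin hpos hr hd hd2 hw
        Real.abs_sin_le_one (by simp) hsin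
      have h3 : ∫ x in (0:ℝ)..(2 * Real.pi), k1 x * Real.cos x =
        ∫ x in (0:ℝ)..(2 * Real.pi), k x * Real.sin x := by linarith
      rw [h3]; exact h2
    have hB : (∫ x in (0:ℝ)..(2 * Real.pi), k1 x * Real.sin x) ^ 2 ≤
        16 * Real.pi ^ 2 * d ^ 4 * r ^ 2 := by
      have h1 := ibp (fun x => k x * Real.sin x) (fun x => k1 x * Real.sin x + k x * (Real.cos x))
        (fun x => (hk x).mul (Real.hasDerivAt_sin x)) (by fun_prop) (by simp)
      rw [intervalIntegral.integral_add (by apply Continuous.intervalIntegrable; fun_prop)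
        (by apply Continuous.intervalIntegrable; fun_prop)] at h1
      have h2 := first_mode k Real.cos r d hkc Real.continuous_cos hpos hr hd hd2 hw
        Real.abs_cos_le_one (by simp) hcos
      have h3 : ∫ x in (0:ℝ)..(2 * Real.pi), k1 x * Real.sin x =
        -∫ x in (0:ℝ)..(2 * Real.pi), k x * Real.cos x := by linarith
      rw [h3, neg_sq]; exact h2
    have hW := wirt k1 k2 hk1 hk2c hk1per hk10
    rw [hD, ← hQ] at hW
    have hQlow : (4 - 6144 * d) * D ≤ Q := by
      have e1 : 16 * Real.pi ^ 2 * d ^ 4 * r ^ 2 = 32 * Real.pi ^ 3 * d ^ 2 * D := by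
        linear_combination -16 * Real.pi ^ 2 * d ^ 2 * hDd
      have hpi3 : Real.pi ^ 3 ≤ 32 := by
        have : Real.pi ≤ 3.15 := Real.pi_lt_d2.le
        calc Real.pi ^ 3 ≤ 3.15 ^ 3 := by gcongr
          _ ≤ 32 := by norm_num
      have e2 : 32 * Real.pi ^ 3 * d ^ 2 * D ≤ 32 * 32 * d * D := by
        have : d ^ 2 ≤ d := by nlinarith
        gcongr
      rw [e1] at hA hB
      linarith
    -- the three integrals
    set I1 := ∫ x in (0:ℝ)..(2 * Real.pi), k x ^ (p + 1) * k2 x ^ 2 with hI1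
    set I2 := ∫ x in (0:ℝ)..(2 * Real.pi), k x ^ p * k1 x ^ 2 * k2 x with hI2
    set I3 := ∫ x in (0:ℝ)..(2 * Real.pi), k x ^ (p + 1) * k1 x ^ 2 with hI3
    have hibp : ∫ x in (0:ℝ)..(2 * Real.pi), (((p + 2 : ℕ) * k x ^ (p + 1) * k1 x) * k1 x +
        k x ^ (p + 2) * k2 x) = 0 := by
      apply ibp (fun x => k x ^ (p + 2) * k1 x)
      · intro x; exact ((hk x).pow (p + 2)).mul (hk1 x)
      · fun_prop
      · simp [hkper, hk1per]
    have e : p * (-2 * ∫ x in (0:ℝ)..(2 * Real.pi), k2 x * kt x) =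
        -2 * p * I1 - 2 * p * (p - 1) * I2 + 2 * (p + 2) * I3 := by
      have : p * (-2 * ∫ x in (0:ℝ)..(2 * Real.pi), k2 x * kt x) =
        -2 * ∫ x in (0:ℝ)..(2 * Real.pi), k2 x * (p * kt x) := by
        rw [← mul_assoc, mul_comm (p:ℝ) (-2), mul_assoc, ← intervalIntegral.integral_const_mul]
        congr 2; ext x; ring
      rw [this]
      have e1 : ∫ x in (0:ℝ)..(2 * Real.pi), k2 x * (p * kt x) = ∫ x in (0:ℝ)..(2 * Real.pi),
          (p * (k x ^ (p + 1) * k2 x ^ 2) + (p * (p - 1)) * (k x ^ p * k1 x ^ 2 * k2 x)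
            + (((p + 2 : ℕ) * k x ^ (p + 1) * k1 x) * k1 x + k x ^ (p + 2) * k2 x)
            + (-(p + 2)) * (k x ^ (p + 1) * k1 x ^ 2)) := by
        congr 1; ext x; rw [hkt']; push_cast; ring
      rw [e1, intervalIntegral.integral_add, intervalIntegral.integral_add,
        intervalIntegral.integral_add, intervalIntegral.integral_const_mul (p:ℝ), hibp,
        intervalIntegral.integral_const_mul (p * (p - 1) : ℝ),
        intervalIntegral.integral_const_mul (-(p + 2) : ℝ), ← hI1, ← hI2, ← hI3]
      · ring
      all_goals apply Continuous.intervalIntegrable; fun_prop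
    have b1 : r ^ (p + 1) * (1 - (p + 1) * d) * Q ≤ I1 := by
      rw [hQ, ← intervalIntegral.integral_const_mul, hI1]
      refine mono_int _ _ (by fun_prop) (by fun_prop) fun x hx => ?_
      apply mul_le_mul_of_nonneg_right _ (sq_nonneg _)
      have h1 : (1:ℝ) + (p + 1 : ℕ) * (-d) ≤ (1 + -d) ^ (p + 1) :=
        one_add_mul_le_pow (by linarith) _
      calc r ^ (p + 1) * (1 - (p + 1) * d) ≤ r ^ (p + 1) * (1 - d) ^ (p + 1) := by
            gcongr
            push_cast at h1
            rw [← sub_eq_add_neg] at h1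
            linarith
        _ = (r * (1 - d)) ^ (p + 1) := by rw [mul_pow]
        _ ≤ _ := by
            have : 0 ≤ r * (1 - d) := mul_nonneg hr.le (by linarith)
            gcongr
            exact hklo x hx
    have b3 : I3 ≤ r ^ (p + 1) * (1 + 3 ^ (p + 1) * d) * D := by
      rw [← hD, ← intervalIntegral.integral_const_mul, hI3]
      refine mono_int _ _ (by fun_prop) (by fun_prop) fun x hx => ?_
      apply mul_le_mul_of_nonneg_right _ (sq_nonneg _)
      calc k x ^ (p + 1) ≤ (r * (1 + d)) ^ (p + 1) := by
            have := (hpos x).le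
            gcongr
            exact hkhi x hx
        _ = r ^ (p + 1) * (1 + d) ^ (p + 1) := mul_pow _ _ _
        _ ≤ _ := by
            gcongr
            exact pow_le_lin _ _ hd (by linarith)
    have b2 : |I2| ≤ 2 ^ p * r ^ (p + 1) * d * Q := by
      have h1 : |I2| ≤ ∫ x in (0:ℝ)..(2 * Real.pi),
          ((2 * r) ^ p * Real.sqrt (2 * Real.pi * Q)) * (|k1 x| * |k2 x|) := by
        refine abs_int_le _ _ (by fun_prop) (by fun_prop) fun x hx => ?_
        have h2 := sup_bound k1 k2 0 hk1 hk2c (by simpa using hk10) x hx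
        rw [sub_zero] at h2
        have h3 : |k1 x| ≤ Real.sqrt (2 * Real.pi * Q) := Real.abs_le_sqrt h2
        have := (hpos x).le
        rw [abs_mul, abs_mul, abs_of_nonneg (pow_nonneg this p), abs_of_nonneg (sq_nonneg _),
          ← sq_abs]
        calc k x ^ p * |k1 x| ^ 2 * |k2 x| = k x ^ p * |k1 x| * (|k1 x| * |k2 x|) := by ring
          _ ≤ _ := by
            gcongr
            exact hk2r x hx
      rw [intervalIntegral.integral_const_mul] at h1
      have h4 := cs_int (fun x => |k1 x|) (fun x => |k2 x|) hk1c.abs hk2c.abs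
      simp only [sq_abs] at h4
      rw [hD, ← hQ] at h4
      have h5 := (Real.le_sqrt' (y := D * Q) (x := ∫ x in (0:ℝ)..(2 * Real.pi), |k1 x| * |k2 x|))
      have h6 : ∫ x in (0:ℝ)..(2 * Real.pi), |k1 x| * |k2 x| ≤ Real.sqrt (D * Q) :=
        Real.le_sqrt_of_sq_le h4
      have h7 : Real.sqrt (2 * Real.pi * Q) * Real.sqrt (D * Q) = d * r * Q := by
        rw [← Real.sqrt_mul (by positivity)]
        have : 2 * Real.pi * Q * (D * Q) = (d * r * Q) ^ 2 := by
          linear_combination Q ^ 2 * hDd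
        rw [this, Real.sqrt_sq (by positivity)]
      calc |I2| ≤ _ := h1
        _ ≤ ((2 * r) ^ p * Real.sqrt (2 * Real.pi * Q)) * Real.sqrt (D * Q) := by gcongr
        _ = (2 * r) ^ p * (d * r * Q) := by rw [mul_assoc, h7]
        _ = _ := by rw [mul_pow]; ring
    rw [e]
    set R := r ^ (p + 1) with hR
    have hR0 : 0 < R := by positivity
    have hpm : (0:ℝ) ≤ 2 * p * (p - 1) := by
      have : (0:ℝ) ≤ p - 1 := by linarith
      positivity
    have s1 : -2 * p * I1 - 2 * p * (p - 1) * I2 + 2 * (p + 2) * I3 ≤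
        R * (-(2 * p - c1 * d) * Q + (2 * (p + 2) + c2 * d) * D) := by
      have t1 := mul_le_mul_of_nonneg_left b1 (by positivity : (0:ℝ) ≤ 2 * p)
      have t2 := mul_le_mul_of_nonneg_left ((neg_le_abs I2).trans b2) hpm
      have t3 := mul_le_mul_of_nonneg_left b3 (by positivity : (0:ℝ) ≤ 2 * (p + 2))
      have t4 : R * (-(2 * p - c1 * d) * Q + (2 * (p + 2) + c2 * d) * D) =
        -(2 * p * (R * (1 - (p + 1) * d) * Q)) + 2 * p * (p - 1) * (2 ^ p * R * d * Q)
          + 2 * (p + 2) * (R * (1 + 3 ^ (p + 1) * d) * D) := by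
        rw [hc1, hc2]; ring
      rw [t4]; linarith
    refine s1.trans ?_
    rw [mul_assoc R D]
    apply mul_le_mul_of_nonneg_left _ hR0.le
    have s2 := mul_le_mul_of_nonneg_left hQlow (by linarith : 0 ≤ 2 * p - c1 * d)
    have s3 : 0 ≤ c1 * d * (6144 * d) * D := by positivity
    have s4 : 0 ≤ c3 * d * D := by positivity
    linarith

lemma mvt_lim (g g' : ℝ → ℝ) (t T c B : ℝ) (htT : t < T)
    (hg : ∀ s ∈ Ico t T, HasDerivAt g (g' s) s) (hB : ∀ s ∈ Ico t T, |g' s + c| ≤ B)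
    (hlim : Tendsto g (nhdsWithin T (Iio T)) (nhds 0)) : |g t - c * (T - t)| ≤ B * (T - t) := by
  have h1 : ∀ s ∈ Ico t T, |(g s + c * s) - (g t + c * t)| ≤ B * (s - t) := by
    intro s hs
    have := (convex_Ico t T).norm_image_sub_le_of_norm_hasDerivWithin_le
      (f := fun s => g s + c * s) (f' := fun s => g' s + c) (C := B)
      (fun x hx => ((hg x hx).add ((hasDerivAt_id x).const_mul c |>.congr_deriv
        (mul_one c))).hasDerivWithinAt) hB
      (left_mem_Ico.2 htT) hs
    rw [Real.norm_eq_abs, Real.norm_eq_abs, abs_of_nonneg (sub_nonneg.2 hs.1)] at this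
    exact this
  have hid : Tendsto (fun s : ℝ => s) (nhdsWithin T (Iio T)) (nhds T) :=
    tendsto_id.mono_left nhdsWithin_le_nhds
  have l1 : Tendsto (fun s => |(g s + c * s) - (g t + c * t)|) (nhdsWithin T (Iio T))
      (nhds |(0 + c * T) - (g t + c * t)|) :=
    ((hlim.add (hid.const_mul c)).sub_const _).abs
  have l2 : Tendsto (fun s => B * (s - t)) (nhdsWithin T (Iio T)) (nhds (B * (T - t))) :=
    (hid.sub_const t).const_mul B
  have hev : ∀ᶠ s in nhdsWithin T (Iio T), |(g s + c * s) - (g t + c * t)| ≤ B * (s - t) := by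
    filter_upwards [Ico_mem_nhdsLT htT] with s hs using h1 s hs
  have := le_of_tendsto_of_tendsto l1 l2 hev
  have e : (0 + c * T) - (g t + c * t) = -(g t - c * (T - t)) := by ring
  rw [e, abs_neg] at this
  exact this

lemma ode_main (p : ℕ) (hp : 1 ≤ p) (ε C T t1 : ℝ) (hε : 0 < ε) (hC : 0 ≤ C)
    (hCε : C * Real.sqrt ε ≤ 1) (hCε2 : C * ε ≤ 1 / 2) (htT : t1 < T)
    (r Y r' Y' : ℝ → ℝ) (hr : ∀ t ∈ Ico t1 T, 0 < r t) (hY : ∀ t ∈ Ico t1 T, 0 ≤ Y t)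
    (hdr : ∀ t ∈ Ico t1 T, HasDerivAt r (r' t) t)
    (hdY : ∀ t ∈ Ico t1 T, HasDerivAt Y (Y' t) t)
    (hest : ∀ t ∈ Ico t1 T, Y t ≤ ε * r t ^ 2 →
      |p * r' t - r t ^ (p + 2)| ≤ C * (r t ^ p * Y t) ∧
      p * Y' t ≤ r t ^ (p + 1) * Y t * (-(6 * p - 4) + C * (Real.sqrt (Y t) / r t)))
    (hinit : Y t1 ≤ ε * r t1 ^ 2)
    (hblow : (∀ t ∈ Ico t1 T, Y t ≤ ε * r t ^ 2) → Tendsto r (nhdsWithin T (Iio T)) atTop) :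
    ∃ a > (0:ℝ), ∀ t ∈ Ico t1 T,
      |(p / (p + 1)) * (r t ^ (p + 1))⁻¹ - (T - t)| ≤
        a * (T - t) ^ (1 + (6 * (p : ℝ) - 2) / ((p : ℝ) + 1)) := by
  have hp1 : (1:ℝ) ≤ p := by exact_mod_cast hp
  have hp0 : (0:ℝ) < p := by linarith
  -- pointwise consequences
  have hcons : ∀ t ∈ Ico t1 T, Y t ≤ ε * r t ^ 2 →
      r t ^ (p + 2) / 2 ≤ p * r' t ∧ Y' t ≤ 0 := by
    intro t ht hYt
    obtain ⟨h1, h2⟩ := hest t ht hYt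
    have hrt := hr t ht
    have hYn := hY t ht
    constructor
    · have h3 := (abs_le.1 h1).1
      have : C * (r t ^ p * Y t) ≤ r t ^ (p + 2) / 2 := by
        calc C * (r t ^ p * Y t) ≤ C * (r t ^ p * (ε * r t ^ 2)) := by gcongr
          _ = (C * ε) * r t ^ (p + 2) := by ring
          _ ≤ (1 / 2) * r t ^ (p + 2) := by gcongr
          _ = _ := by ring
      linarith
    · have hs : Real.sqrt (Y t) / r t ≤ Real.sqrt ε := by
        rw [div_le_iff₀ hrt]
        calc Real.sqrt (Y t) ≤ Real.sqrt (ε * r t ^ 2) := Real.sqrt_le_sqrt hYt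
          _ = _ := by rw [Real.sqrt_mul hε.le, Real.sqrt_sq hrt.le]
      have h4 : C * (Real.sqrt (Y t) / r t) ≤ 1 :=
        (mul_le_mul_of_nonneg_left hs hC).trans hCε
      have h5 : r t ^ (p + 1) * Y t * (-(6 * p - 4) + C * (Real.sqrt (Y t) / r t)) ≤ 0 :=
        mul_nonpos_of_nonneg_of_nonpos (by positivity) (by linarith)
      have h6 : p * Y' t ≤ 0 := h2.trans h5
      by_contra hcon
      push Not at hcon
      have := mul_pos hp0 hcon
      linarith
  have S1 : ∀ t ∈ Ico t1 T, Y t ≤ ε * r t ^ 2 := by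
    intro t ht
    have hsub : Icc t1 t ⊆ Ico t1 T := fun x hx => ⟨hx.1, hx.2.trans_lt ht.2⟩
    refine image_le_of_deriv_right_lt_deriv_boundary' (a := t1) (b := t) (f := Y) (f' := Y')
      (B := fun t => ε * r t ^ 2) (B' := fun t => ε * (2 * r t * r' t))
      (fun x hx => (hdY x (hsub hx)).continuousAt.continuousWithinAt)
      (fun x hx => (hdY x (hsub (Ico_subset_Icc_self hx))).hasDerivWithinAt)
      hinit ?_ ?_ ?_ ⟨ht.1, le_rfl⟩
    · exact fun x hx => (((hdr x (hsub hx)).continuousAt.pow 2).const_mul ε).continuousWithinAt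
    · intro x hx
      have := ((hdr x (hsub (Ico_subset_Icc_self hx))).pow 2).const_mul ε
      refine (this.congr_deriv ?_).hasDerivWithinAt
      push_cast; ring
    · intro x hx hxe
      have hx' := hsub (Ico_subset_Icc_self hx)
      obtain ⟨h1, h2⟩ := hcons x hx' hxe.le
      have hrx := hr x hx'
      have h3 : 0 < r' x := by
        have : 0 < p * r' x := lt_of_lt_of_le (by positivity) h1
        exact pos_of_mul_pos_right this hp0.le
      have : 0 < ε * (2 * r x * r' x) := by positivity
      linarith
  have hr'pos : ∀ t ∈ Ico t1 T, 0 < r' t := by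
    intro t ht
    have h1 := (hcons t ht (S1 t ht)).1
    have := hr t ht
    have : 0 < p * r' t := lt_of_lt_of_le (by positivity) h1
    exact pos_of_mul_pos_right this hp0.le
  have hrtop := hblow S1
  have h1mem : t1 ∈ Ico t1 T := left_mem_Ico.2 htT
  have hint : interior (Ico t1 T) ⊆ Ico t1 T := interior_subset
  have hYmono : ∀ t ∈ Ico t1 T, Y t ≤ Y t1 := by
    have : AntitoneOn Y (Ico t1 T) := by
      refine antitoneOn_of_hasDerivWithinAt_nonpos (convex_Ico _ _) (f' := Y')
        (fun x hx => (hdY x hx).continuousAt.continuousWithinAt)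
        (fun x hx => (hdY x (hint hx)).hasDerivWithinAt) ?_
      exact fun x hx => (hcons x (hint hx) (S1 x (hint hx))).2
    exact fun t ht => this h1mem ht ht.1
  have hrmono : ∀ t ∈ Ico t1 T, r t1 ≤ r t := by
    have : MonotoneOn r (Ico t1 T) := by
      refine monotoneOn_of_hasDerivWithinAt_nonneg (convex_Ico _ _) (f' := r')
        (fun x hx => (hdr x hx).continuousAt.continuousWithinAt)
        (fun x hx => (hdr x (hint hx)).hasDerivWithinAt) ?_
      exact fun x hx => (hr'pos x (hint hx)).le
    exact fun t ht => this h1mem ht ht.1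
  obtain ⟨N, hN⟩ : ∃ N : ℕ, N + 4 = 6 * p := ⟨6 * p - 4, by omega⟩
  have hNr : (N:ℝ) = 6 * p - 4 := by
    have : ((N + 4 : ℕ) : ℝ) = ((6 * p : ℕ) : ℝ) := by rw [hN]
    push_cast at this; linarith
  have hr1 : 0 < r t1 := hr t1 h1mem
  have hY1 : 0 ≤ Y t1 := hY t1 h1mem
  set K : ℝ := 2 * (C * Real.sqrt (Y t1) + N * C * (Y t1 / r t1)) with hK
  have hK0 : 0 ≤ K := by positivity
  -- weighted energy bounded
  obtain ⟨M, hM0, hM⟩ : ∃ M : ℝ, 0 ≤ M ∧ ∀ t ∈ Ico t1 T, Y t * r t ^ N ≤ M := by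
    have hanti : AntitoneOn (fun t => Y t * r t ^ N * Real.exp (K * (r t)⁻¹)) (Ico t1 T) := by
      have hder : ∀ x ∈ Ico t1 T, HasDerivAt (fun t => Y t * r t ^ N * Real.exp (K * (r t)⁻¹))
          ((Y' x * r x ^ N + Y x * (N * r x ^ (N - 1) * r' x)) * Real.exp (K * (r x)⁻¹) +
            Y x * r x ^ N * (Real.exp (K * (r x)⁻¹) * (K * (-r' x / r x ^ 2)))) x := by
        intro x hx
        exact ((hdY x hx).mul ((hdr x hx).pow N)).mul
          ((((hdr x hx).inv (hr x hx).ne').const_mul K).exp)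
      refine antitoneOn_of_hasDerivWithinAt_nonpos (convex_Ico _ _)
        (fun x hx => (hder x hx).continuousAt.continuousWithinAt)
        (fun x hx => (hder x (hint hx)).hasDerivWithinAt) ?_
      intro x hx
      have hx := hint hx
      have hrx := hr x hx
      have hYx := hY x hx
      obtain ⟨e1, e2⟩ := hest x hx (S1 x hx)
      have e3 := (hcons x hx (S1 x hx)).1
      have hN1 : r x ^ (N - 1) = r x ^ N / r x := by
        rw [eq_div_iff hrx.ne', ← pow_succ]; congr 1; omega
      rw [hN1]
      have key : p * (Y' x + N * Y x * (r' x / r x) - K * Y x * (r' x / r x ^ 2)) ≤ 0 := by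
        have e4 : p * r' x ≤ r x ^ (p + 2) + C * (r x ^ p * Y x) := by
          have := (abs_le.1 e1).2; linarith
        have f1 : p * (r' x / r x) ≤ r x ^ (p + 1) + C * r x ^ p * (Y t1 / r t1) := by
          rw [← mul_div_assoc, div_le_iff₀ hrx]
          refine e4.trans ?_
          have : Y x ≤ Y t1 / r t1 * r x := by
            calc Y x ≤ Y t1 := hYmono x hx
              _ = Y t1 / r t1 * r t1 := by field_simp
              _ ≤ _ := by gcongr; exact hrmono x hx
          calc _ ≤ r x ^ (p + 2) + C * (r x ^ p * (Y t1 / r t1 * r x)) := by gcongr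
            _ = _ := by ring
        have f2 : r x ^ p / 2 ≤ p * (r' x / r x ^ 2) := by
          rw [← mul_div_assoc, le_div_iff₀ (by positivity)]
          calc _ = r x ^ (p + 2) / 2 := by ring
            _ ≤ _ := e3
        have f3 : r x ^ (p + 1) * Y x * (-(6 * p - 4) + C * (Real.sqrt (Y x) / r x)) ≤
            Y x * (-N * r x ^ (p + 1) + C * r x ^ p * Real.sqrt (Y t1)) := by
          rw [← hNr]
          have : r x ^ (p + 1) * Y x * (-(N:ℝ) + C * (Real.sqrt (Y x) / r x)) =
            Y x * (-N * r x ^ (p + 1) + C * r x ^ p * Real.sqrt (Y x)) := by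
            field_simp
            ring
          rw [this]
          gcongr
          exact hYmono x hx
        have g1 := mul_le_mul_of_nonneg_left f1 (by positivity : 0 ≤ N * Y x)
        have g2 := mul_le_mul_of_nonneg_left f2 (by positivity : 0 ≤ K * Y x)
        have g3 : K * Y x * (r x ^ p / 2) = Y x * (r x ^ p * (C * Real.sqrt (Y t1))) +
          N * Y x * (C * r x ^ p * (Y t1 / r t1)) := by rw [hK]; ring
        linarith
      have key2 : Y' x + N * Y x * (r' x / r x) - K * Y x * (r' x / r x ^ 2) ≤ 0 := by
        by_contra hcon
        push Not at hcon
        have := mul_pos hp0 hcon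
        linarith
      have : (Y' x * r x ^ N + Y x * (N * (r x ^ N / r x) * r' x)) * Real.exp (K * (r x)⁻¹) +
            Y x * r x ^ N * (Real.exp (K * (r x)⁻¹) * (K * (-r' x / r x ^ 2))) =
          (r x ^ N * Real.exp (K * (r x)⁻¹)) *
            (Y' x + N * Y x * (r' x / r x) - K * Y x * (r' x / r x ^ 2)) := by
        field_simp
        ring
      rw [this]
      exact mul_nonpos_of_nonneg_of_nonpos (by positivity) key2
    refine ⟨Y t1 * r t1 ^ N * Real.exp (K * (r t1)⁻¹), by positivity, fun t ht => ?_⟩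
    refine le_trans ?_ (hanti h1mem ht ht.1)
    have := hr t ht
    have h2 := hY t ht
    have h3 : 1 ≤ Real.exp (K * (r t)⁻¹) := Real.one_le_exp (by positivity)
    exact le_mul_of_one_le_right (by positivity) h3
  -- the function g
  set g : ℝ → ℝ := fun t => (r t ^ (p + 1))⁻¹ with hg
  set g' : ℝ → ℝ := fun t => -((p + 1) * (r' t / r t ^ (p + 2))) with hg'
  have hdg : ∀ t ∈ Ico t1 T, HasDerivAt g (g' t) t := by
    intro t ht
    have hrt := hr t ht
    have := ((hdr t ht).pow (p + 1)).inv (pow_ne_zero _ hrt.ne')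
    refine this.congr_deriv ?_
    simp only [hg', Nat.add_sub_cancel, Pi.pow_apply]
    push_cast
    field_simp
    ring
  have hglim : Tendsto g (nhdsWithin T (Iio T)) (nhds 0) := by
    have : Tendsto (fun t => r t ^ (p + 1)) (nhdsWithin T (Iio T)) atTop :=
      (tendsto_pow_atTop (by omega)).comp hrtop
    exact this.inv_tendsto_atTop
  set c : ℝ := (p + 1) / p with hc
  have hc0 : 0 < c := by positivity
  have hgest : ∀ t ∈ Ico t1 T, |g' t + c| ≤ c * (C * (Y t / r t ^ 2)) := by
    intro t ht
    have hrt := hr t ht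
    have h1 := (hest t ht (S1 t ht)).1
    have : g' t + c = -(c * ((p * r' t - r t ^ (p + 2)) / r t ^ (p + 2))) := by
      simp only [hg', hc]; field_simp; ring
    rw [this, abs_neg, abs_mul, abs_of_pos hc0, abs_div, abs_of_pos (pow_pos hrt (p + 2))]
    gcongr
    rw [div_le_iff₀ (by positivity)]
    refine h1.trans (le_of_eq ?_)
    field_simp
    ring
  have hg1 : ∀ t ∈ Ico t1 T, g t ≤ (2 * c) * (T - t) := by
    intro t ht
    have := mvt_lim g g' t T c c ht.2 (fun s hs => hdg s ⟨ht.1.trans hs.1, hs.2⟩) (by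
      intro s hs
      have hs' : s ∈ Ico t1 T := ⟨ht.1.trans hs.1, hs.2⟩
      refine (hgest s hs').trans ?_
      have hrs := hr s hs'
      have : Y s / r s ^ 2 ≤ ε := by
        rw [div_le_iff₀ (by positivity)]; exact S1 s hs'
      calc _ ≤ c * (C * ε) := by gcongr
        _ ≤ c * 1 := by gcongr; linarith
        _ = c := mul_one c) hglim
    have := (abs_le.1 this).2
    linarith
  set β : ℝ := (6 * (p : ℝ) - 2) / ((p : ℝ) + 1) with hβ
  have hβ0 : 0 < β := by apply div_pos <;> linarith
  set A : ℝ := c * (C * (M * (2 * c) ^ β)) with hA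
  have hA0 : 0 ≤ A := by positivity
  have hg2 : ∀ t ∈ Ico t1 T, |g' t + c| ≤ A * (T - t) ^ β := by
    intro t ht
    refine (hgest t ht).trans ?_
    have hrt := hr t ht
    have hTt : 0 < T - t := sub_pos.2 ht.2
    have h1 : (r t ^ (N + 2))⁻¹ = g t ^ β := by
      simp only [hg]
      rw [Real.inv_rpow (by positivity), ← Real.rpow_natCast, ← Real.rpow_natCast,
        ← Real.rpow_mul hrt.le]
      congr 2
      rw [hβ]; push_cast; rw [hNr]; field_simp; ring
    have h2 : Y t / r t ^ 2 ≤ M * (r t ^ (N + 2))⁻¹ := by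
      rw [← div_eq_mul_inv, div_le_div_iff₀ (by positivity) (by positivity)]
      have := mul_le_mul_of_nonneg_right (hM t ht) (by positivity : 0 ≤ r t ^ 2)
      calc _ = Y t * r t ^ N * r t ^ 2 := by ring
        _ ≤ _ := this
    have h3 : g t ^ β ≤ (2 * c) ^ β * (T - t) ^ β := by
      rw [← Real.mul_rpow (by positivity) hTt.le]
      apply Real.rpow_le_rpow _ (hg1 t ht) hβ0.le
      simp only [hg]; positivity
    calc _ ≤ c * (C * (M * (r t ^ (N + 2))⁻¹)) := by gcongr
      _ ≤ c * (C * (M * ((2 * c) ^ β * (T - t) ^ β))) := by rw [h1]; gcongr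
      _ = _ := by rw [hA]; ring
  refine ⟨A / c + 1, by positivity, fun t ht => ?_⟩
  have hTt : 0 < T - t := sub_pos.2 ht.2
  have := mvt_lim g g' t T c (A * (T - t) ^ β) ht.2
    (fun s hs => hdg s ⟨ht.1.trans hs.1, hs.2⟩) (by
      intro s hs
      have hs' : s ∈ Ico t1 T := ⟨ht.1.trans hs.1, hs.2⟩
      refine (hg2 s hs').trans ?_
      have : 0 ≤ T - s := (sub_pos.2 hs.2).le
      have : T - s ≤ T - t := by linarith [hs.1]
      gcongr) hglim
  have e1 : (p / (p + 1)) * (r t ^ (p + 1))⁻¹ - (T - t) = (1 / c) * (g t - c * (T - t)) := by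
    simp only [hg, hc]; field_simp
  rw [e1, abs_mul, abs_of_pos (by positivity : 0 < 1 / c), Real.rpow_add hTt, Real.rpow_one]
  calc _ ≤ (1 / c) * (A * (T - t) ^ β * (T - t)) := by gcongr
    _ = (A / c) * ((T - t) * (T - t) ^ β) := by ring
    _ ≤ _ := by gcongr; linarith

lemma final_conv (p : ℕ) (hp : 1 ≤ p) (T t1 a : ℝ) (ht1 : 0 < t1) (htT : t1 < T) (ha : 0 < a)
    (r : ℝ → ℝ) (hr : ∀ t ∈ Ico t1 T, 0 < r t)
    (h : ∀ t ∈ Ico t1 T,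
      |(p / (p + 1)) * (r t ^ (p + 1))⁻¹ - (T - t)| ≤
        a * (T - t) ^ (1 + (6 * (p : ℝ) - 2) / ((p : ℝ) + 1))) :
      ∃ a₀ > (0:ℝ), ∃ a₁ > (0:ℝ), ∃ t₀ : ℝ, 0 < t₀ ∧ t₀ < T ∧
        ∀ t : ℝ, t₀ < t → t < T →
          0 < (T - t) - a₀ * (T - t) ^ (1 + (6 * (p : ℝ) - 2) / ((p : ℝ) + 1)) ∧
          (((p : ℝ) + 1) / (p : ℝ)) ^ ((1 : ℝ) / ((p : ℝ) + 1)) * r t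
            ≤ ((T - t) - a₀ * (T - t) ^ (1 + (6 * (p : ℝ) - 2) / ((p : ℝ) + 1)))
                ^ (-((1 : ℝ) / ((p : ℝ) + 1))) ∧
          ((T - t) + a₁ * (T - t) ^ (1 + (6 * (p : ℝ) - 2) / ((p : ℝ) + 1)))
                ^ (-((1 : ℝ) / ((p : ℝ) + 1)))
            ≤ (((p : ℝ) + 1) / (p : ℝ)) ^ ((1 : ℝ) / ((p : ℝ) + 1)) * r t := by
  have hp1 : (1:ℝ) ≤ p := by exact_mod_cast hp
  have hp0 : (0:ℝ) < p := by linarith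
  set β : ℝ := (6 * (p : ℝ) - 2) / ((p : ℝ) + 1) with hβ
  have hβ0 : 0 < β := by apply div_pos <;> linarith
  set δ : ℝ := (1 / (2 * a)) ^ (1 / β) with hδ
  have hδ0 : 0 < δ := by positivity
  refine ⟨a, ha, a, ha, max t1 (T - δ), lt_max_of_lt_left ht1, max_lt htT (by linarith), ?_⟩
  intro t ht htlt
  have htm : t ∈ Ico t1 T := ⟨((le_max_left _ _).trans_lt ht).le, htlt⟩
  have hTt : 0 < T - t := by linarith
  have hTd : T - t ≤ δ := by have := (le_max_right t1 (T - δ)).trans_lt ht; linarith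
  have hrt := hr t htm
  have h1 : a * (T - t) ^ (1 + β) ≤ (T - t) / 2 := by
    rw [Real.rpow_add hTt, Real.rpow_one]
    have : (T - t) ^ β ≤ 1 / (2 * a) := by
      calc (T - t) ^ β ≤ δ ^ β := by gcongr
        _ = _ := by
          rw [hδ, ← Real.rpow_mul (by positivity), one_div_mul_cancel hβ0.ne', Real.rpow_one]
    calc a * ((T - t) * (T - t) ^ β) ≤ a * ((T - t) * (1 / (2 * a))) := by gcongr
      _ = _ := by field_simp
  have h2 := abs_le.1 (h t htm)
  have hpos : 0 < (T - t) - a * (T - t) ^ (1 + β) := by linarith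
  set G := (p / (p + 1)) * (r t ^ (p + 1))⁻¹ with hG
  have hGpos : 0 < G := by positivity
  have e : (((p : ℝ) + 1) / (p : ℝ)) ^ ((1 : ℝ) / ((p : ℝ) + 1)) * r t
      = G ^ (-((1 : ℝ) / ((p : ℝ) + 1))) := by
    rw [Real.rpow_neg hGpos.le, ← Real.inv_rpow hGpos.le]
    have : G⁻¹ = ((p + 1) / p) * r t ^ (p + 1) := by rw [hG]; field_simp
    rw [this, Real.mul_rpow (by positivity) (by positivity)]
    congr 1
    rw [← Real.rpow_natCast, ← Real.rpow_mul hrt.le]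
    push_cast
    rw [mul_one_div_cancel (by positivity), Real.rpow_one]
  rw [e]
  have hneg : -((1 : ℝ) / ((p : ℝ) + 1)) ≤ 0 := by
    have : (0:ℝ) < 1 / (p + 1) := by positivity
    linarith
  refine ⟨hpos, ?_, ?_⟩
  · exact Real.rpow_le_rpow_of_nonpos hpos (by linarith [h2.1]) hneg
  · exact Real.rpow_le_rpow_of_nonpos hGpos (by linarith [h2.2]) hneg


/-- Directional derivative within the strip. -/
noncomputable def dW (T : ℝ) (v : ℝ × ℝ) (F : ℝ × ℝ → ℝ) (q : ℝ × ℝ) : ℝ :=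
  fderivWithin ℝ F (univ ×ˢ Ico 0 T) q v

lemma strip_uniq (T : ℝ) : UniqueDiffOn ℝ ((univ : Set ℝ) ×ˢ Ico (0:ℝ) T) :=
  uniqueDiffOn_univ.prod (uniqueDiffOn_Ico 0 T)

lemma dW_smooth (T : ℝ) (v : ℝ × ℝ) (F : ℝ × ℝ → ℝ)
    (hF : ContDiffOn ℝ (⊤ : ℕ∞) F (univ ×ˢ Ico 0 T)) :
    ContDiffOn ℝ (⊤ : ℕ∞) (dW T v F) (univ ×ˢ Ico 0 T) := by
  have h := hF.fderivWithin (m := ((⊤ : ℕ∞) : WithTop ℕ∞)) (strip_uniq T) (by norm_cast)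
  exact h.clm_apply contDiffOn_const

lemma dW_has (T : ℝ) (F : ℝ × ℝ → ℝ)
    (hF : ContDiffOn ℝ (⊤ : ℕ∞) F (univ ×ˢ Ico 0 T)) (q : ℝ × ℝ) (hq : q ∈ univ ×ˢ Ico 0 T) :
    HasFDerivWithinAt F (fderivWithin ℝ F (univ ×ˢ Ico 0 T) q) (univ ×ˢ Ico 0 T) q :=
  ((hF q hq).differentiableWithinAt (by norm_num)).hasFDerivWithinAt

lemma dW_x (T : ℝ) (F : ℝ × ℝ → ℝ)
    (hF : ContDiffOn ℝ (⊤ : ℕ∞) F (univ ×ˢ Ico 0 T)) (θ t : ℝ) (ht : t ∈ Ico 0 T) :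
    HasDerivAt (fun x => F (x, t)) (dW T (1, 0) F (θ, t)) θ := by
  have h1 := dW_has T F hF (θ, t) ⟨mem_univ _, ht⟩
  have h2 : HasDerivWithinAt (fun x : ℝ => (x, t)) ((1:ℝ), (0:ℝ)) univ θ :=
    ((hasDerivAt_id θ).prodMk (hasDerivAt_const θ t)).hasDerivWithinAt
  have := HasFDerivWithinAt.comp_hasDerivWithinAt (t := univ ×ˢ Ico 0 T) θ h1 h2
    (fun x _ => ⟨mem_univ _, ht⟩)
  exact hasDerivWithinAt_univ.1 this

lemma dW_t (T : ℝ) (F : ℝ × ℝ → ℝ)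
    (hF : ContDiffOn ℝ (⊤ : ℕ∞) F (univ ×ˢ Ico 0 T)) (θ t : ℝ) (ht : t ∈ Ioo 0 T) :
    HasDerivAt (fun s => F (θ, s)) (dW T (0, 1) F (θ, t)) t := by
  have h1 := dW_has T F hF (θ, t) ⟨mem_univ _, Ioo_subset_Ico_self ht⟩
  have h2 : HasDerivWithinAt (fun x : ℝ => (θ, x)) ((0:ℝ), (1:ℝ)) (Ico 0 T) t :=
    ((hasDerivAt_const t θ).prodMk (hasDerivAt_id t)).hasDerivWithinAt
  have := HasFDerivWithinAt.comp_hasDerivWithinAt (t := univ ×ˢ Ico 0 T) t h1 h2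
    (fun x hx => ⟨mem_univ _, hx⟩)
  exact this.hasDerivAt (Ico_mem_nhds ht.1 ht.2)

lemma dW_dW (T : ℝ) (v w : ℝ × ℝ) (F : ℝ × ℝ → ℝ)
    (hF : ContDiffOn ℝ (⊤ : ℕ∞) F (univ ×ˢ Ico 0 T)) (q : ℝ × ℝ) (hq : q ∈ univ ×ˢ Ico 0 T) :
    dW T w (dW T v F) q =
      fderivWithin ℝ (fderivWithin ℝ F (univ ×ˢ Ico 0 T)) (univ ×ˢ Ico 0 T) q w v := by
  have h := hF.fderivWithin (m := ((⊤ : ℕ∞) : WithTop ℕ∞)) (strip_uniq T) (by norm_cast)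
  have h1 := ((h q hq).differentiableWithinAt (by norm_num)).hasFDerivWithinAt
  have h2 := h1.clm_apply (hasFDerivWithinAt_const v q _)
  have h3 := h2.fderivWithin (strip_uniq T q hq)
  unfold dW
  erw [h3]
  simp

lemma dW_comm (T : ℝ) (F : ℝ × ℝ → ℝ)
    (hF : ContDiffOn ℝ (⊤ : ℕ∞) F (univ ×ˢ Ico 0 T)) (θ t : ℝ) (ht : t ∈ Ioo 0 T) :
    dW T (0, 1) (dW T (1, 0) F) (θ, t) = dW T (1, 0) (dW T (0, 1) F) (θ, t) := by
  have hq : (θ, t) ∈ (univ : Set ℝ) ×ˢ Ico 0 T := ⟨mem_univ _, Ioo_subset_Ico_self ht⟩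
  rw [dW_dW T _ _ F hF _ hq, dW_dW T _ _ F hF _ hq]
  refine (hF _ hq).isSymmSndFDerivWithinAt (by simp; norm_cast) (strip_uniq T) ?_ hq _ _
  apply subset_closure
  rw [interior_prod_eq, interior_univ, interior_Ico]
  exact ⟨mem_univ _, ht⟩

lemma slice_cont (T : ℝ) (F : ℝ × ℝ → ℝ) (hF : ContinuousOn F (univ ×ˢ Ico 0 T)) (t : ℝ)
    (ht : t ∈ Ico 0 T) : Continuous (fun x => F (x, t)) :=
  hF.comp_continuous (by fun_prop) (fun x => ⟨mem_univ _, ht⟩)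

lemma int_deriv (T : ℝ) (F : ℝ × ℝ → ℝ)
    (hF : ContDiffOn ℝ (⊤ : ℕ∞) F (univ ×ˢ Ico 0 T)) (t : ℝ) (ht : t ∈ Ioo 0 T) :
    HasDerivAt (fun s => ∫ θ in (0:ℝ)..(2 * π), F (θ, s))
      (∫ θ in (0:ℝ)..(2 * π), dW T (0, 1) F (θ, t)) t := by
  have hG := (dW_smooth T (0, 1) F hF).continuousOn
  obtain ⟨δ, hδ, hsub⟩ : ∃ δ > 0, Icc (t - δ) (t + δ) ⊆ Ioo 0 T := by
    refine ⟨min t (T - t) / 2, ?_, ?_⟩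
    · have := ht.1; have := ht.2
      have : 0 < min t (T - t) := lt_min (by linarith) (by linarith)
      linarith
    · intro s hs
      have := ht.1; have := ht.2
      have h0 : 0 < min t (T - t) := lt_min (by linarith) (by linarith)
      have h1 := min_le_left t (T - t)
      have h2 := min_le_right t (T - t)
      exact ⟨by linarith [hs.1], by linarith [hs.2]⟩
  have hK : IsCompact (Icc (0:ℝ) (2 * π) ×ˢ Icc (t - δ) (t + δ)) :=
    isCompact_Icc.prod isCompact_Icc
  obtain ⟨B, hB⟩ := hK.exists_bound_of_continuousOn (f := dW T (0, 1) F)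
    (hG.mono (fun q hq => ⟨mem_univ _, Ioo_subset_Ico_self (hsub hq.2)⟩))
  have hπ : (0:ℝ) ≤ 2 * π := by positivity
  refine (intervalIntegral.hasDerivAt_integral_of_dominated_loc_of_deriv_le
    (F := fun s θ => F (θ, s)) (F' := fun s θ => dW T (0, 1) F (θ, s))
    (bound := fun _ => B) (s := Icc (t - δ) (t + δ))
    (Icc_mem_nhds (by linarith) (by linarith)) ?_ ?_ ?_ ?_ ?_ ?_).2
  · filter_upwards [Ioo_mem_nhds ht.1 ht.2] with s hs
    exact (slice_cont T F hF.continuousOn s (Ioo_subset_Ico_self hs)).aestronglyMeasurable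
  · exact (slice_cont T F hF.continuousOn t (Ioo_subset_Ico_self ht)).intervalIntegrable _ _
  · exact (slice_cont T _ hG t (Ioo_subset_Ico_self ht)).aestronglyMeasurable
  · refine Eventually.of_forall (fun θ hθ s hs => hB (θ, s) ⟨?_, hs⟩)
    rw [uIoc_of_le hπ] at hθ
    exact Ioc_subset_Icc_self hθ
  · exact intervalIntegrable_const
  · exact Eventually.of_forall (fun θ _ s hs => dW_t T F hF θ s (hsub hs))

lemma int_cont (T : ℝ) (F : ℝ × ℝ → ℝ) (hF : ContinuousOn F (univ ×ˢ Ico 0 T)) :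
    ContinuousOn (fun s => ∫ θ in (0:ℝ)..(2 * π), F (θ, s)) (Ico 0 T) := by
  rw [continuousOn_iff_continuous_domRestrict]
  refine intervalIntegral.continuous_parametric_intervalIntegral_of_continuous'
    (f := fun (s : Ico 0 T) θ => F (θ, s)) ?_ 0 (2 * π)
  exact hF.comp_continuous (f := fun q : Ico 0 T × ℝ => (q.2, (q.1 : ℝ))) (by fun_prop)
    (fun q => ⟨mem_univ _, q.1.2⟩)

lemma closing (k : ℝ → ℝ) (hk : Continuous k) (hpos : ∀ x, 0 < k x)
    (h : (∫ θ in (0:ℝ)..(2 * Real.pi), Complex.exp (Complex.I * θ) / (k θ)) = 0) :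
    (∫ x in (0:ℝ)..(2 * π), cos x / k x = 0) ∧ (∫ x in (0:ℝ)..(2 * π), sin x / k x = 0) := by
  have hc : Continuous (fun θ : ℝ => Complex.exp (Complex.I * θ) / (k θ : ℂ)) := by
    refine Continuous.div (by fun_prop) (by fun_prop) (fun x => ?_)
    exact_mod_cast (hpos x).ne'
  have hi := hc.intervalIntegrable (μ := volume) 0 (2 * π)
  have e : ∀ θ : ℝ, Complex.exp (Complex.I * θ) / (k θ : ℂ) =
      ((cos θ / k θ : ℝ) : ℂ) + ((sin θ / k θ : ℝ) : ℂ) * Complex.I := by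
    intro θ
    rw [mul_comm, Complex.exp_mul_I]
    push_cast
    ring
  constructor
  · have := Complex.reCLM.intervalIntegral_comp_comm hi
    rw [h] at this
    simpa [e, -Complex.ofReal_div, -Complex.ofReal_cos, -Complex.ofReal_sin] using this
  · have := Complex.imCLM.intervalIntegral_comp_comm hi
    rw [h] at this
    simpa [e, -Complex.ofReal_div, -Complex.ofReal_cos, -Complex.ofReal_sin] using this

lemma init_small : ∃ A : ℝ, 0 ≤ A ∧ ∀ (ψ ψ1 ψ2 : ℝ → ℝ), (∀ x, HasDerivAt ψ (ψ1 x) x) →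
    (∀ x, HasDerivAt ψ1 (ψ2 x) x) → Continuous ψ2 → ψ (2 * π) = ψ 0 → ψ1 (2 * π) = ψ1 0 →
    0 ≤ seminorm2 ψ ∧
    2 * π * (∫ x in (0:ℝ)..(2 * π), ψ1 x ^ 2) ≤ A * seminorm2 ψ ^ 2 := by
  have hZ : Summable (fun n : ℤ => 1 / (n:ℝ) ^ 2) :=
    Real.summable_one_div_int_pow.2 (by norm_num)
  refine ⟨8 * π ^ 2 * ∑' n : ℤ, 1 / (n:ℝ) ^ 2, ?_, ?_⟩
  · have : 0 ≤ ∑' n : ℤ, 1 / (n:ℝ) ^ 2 := tsum_nonneg (fun n => by positivity)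
    positivity
  intro ψ ψ1 ψ2 h1 h2 hc2 hper hper1
  have hc1 : Continuous ψ1 := continuous_iff_continuousAt.2 (fun x => (h2 x).continuousAt)
  have e1 := fun n => fCoeff_deriv ψ ψ1 h1 hc1 hper n
  have e2 := fun n => fCoeff_deriv ψ1 ψ2 h2 hc2 hper1 n
  have P1 := fCoeff_parseval ψ1 hc1
  have P2 := fCoeff_parseval ψ2 hc2
  set Q := (2 * π)⁻¹ * ∫ x in (0:ℝ)..(2 * π), ψ2 x ^ 2 with hQ
  have hQn : ∀ n : ℤ, (n:ℝ) ^ 2 * ‖fCoeff ψ n‖ ≤ Real.sqrt Q := by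
    intro n
    apply Real.le_sqrt_of_sq_le
    have h := le_hasSum P2 n (fun j _ => by positivity)
    have : ‖fCoeff ψ2 n‖ = (n:ℝ) ^ 2 * ‖fCoeff ψ n‖ := by
      rw [e2, e1]
      simp only [norm_mul, Complex.norm_I, Complex.norm_intCast]
      rw [← sq_abs (n:ℝ)]
      ring
    rwa [this] at h
  have b1 : BddAbove (range (fun n : ℤ => (n:ℝ) ^ 2 * |(fCoeff ψ n).re|)) := by
    refine ⟨Real.sqrt Q, ?_⟩
    rintro _ ⟨n, rfl⟩
    exact (mul_le_mul_of_nonneg_left (Complex.abs_re_le_norm _) (by positivity)).trans (hQn n)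
  have b2 : BddAbove (range (fun n : ℤ => (n:ℝ) ^ 2 * |(fCoeff ψ n).im|)) := by
    refine ⟨Real.sqrt Q, ?_⟩
    rintro _ ⟨n, rfl⟩
    exact (mul_le_mul_of_nonneg_left (Complex.abs_im_le_norm _) (by positivity)).trans (hQn n)
  have s1 : ∀ n : ℤ, (n:ℝ) ^ 2 * |(fCoeff ψ n).re| ≤ seminorm2 ψ := fun n =>
    (le_ciSup b1 n).trans (le_max_left _ _)
  have s2 : ∀ n : ℤ, (n:ℝ) ^ 2 * |(fCoeff ψ n).im| ≤ seminorm2 ψ := fun n =>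
    (le_ciSup b2 n).trans (le_max_right _ _)
  have sn0 : 0 ≤ seminorm2 ψ := by
    have := s1 0
    simpa using this
  refine ⟨sn0, ?_⟩
  have key : ∀ n : ℤ, ‖fCoeff ψ1 n‖ ^ 2 ≤ 2 * seminorm2 ψ ^ 2 * (1 / (n:ℝ) ^ 2) := by
    intro n
    rcases eq_or_ne n 0 with hn | hn
    · rw [e1, hn]; simp
    · have hn' : (0:ℝ) < (n:ℝ) ^ 2 := by positivity
      rw [mul_one_div, le_div_iff₀ hn', e1]
      have a1 := pow_le_pow_left₀ (by positivity) (s1 n) 2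
      have a2 := pow_le_pow_left₀ (by positivity) (s2 n) 2
      have : ‖Complex.I * n * fCoeff ψ n‖ ^ 2 * (n:ℝ) ^ 2 =
          ((n:ℝ) ^ 2 * |(fCoeff ψ n).re|) ^ 2 + ((n:ℝ) ^ 2 * |(fCoeff ψ n).im|) ^ 2 := by
        simp only [norm_mul, Complex.norm_I, Complex.norm_intCast, mul_pow, sq_abs]
        rw [Complex.sq_norm, Complex.normSq_apply]
        ring
      rw [this]
      linarith
  have := hasSum_le key P1 (hZ.hasSum.mul_left (2 * seminorm2 ψ ^ 2))
  rw [inv_mul_le_iff₀ (by positivity)] at this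
  calc _ ≤ 2 * π * (2 * π * (2 * seminorm2 ψ ^ 2 * ∑' n : ℤ, 1 / (n:ℝ) ^ 2)) := by gcongr
    _ = _ := by ring

/-- There is `c_p > 0` depending only on `p` such that if `ψ̂(0) ≥ c_p ‖ψ‖₂`,
then there are `a₀, a₁ > 0` and `t₀ ∈ (0,T)` such that for all `t ∈ (t₀,T)`:
`((p+1)/p)^{1/(p+1)} k̂(0,t) ≤ [(T-t) - a₀(T-t)^{1+(6p-2)/(p+1)}]^{-1/(p+1)}` and
`((p+1)/p)^{1/(p+1)} k̂(0,t) ≥ [(T-t) + a₁(T-t)^{1+(6p-2)/(p+1)}]^{-1/(p+1)}`. -/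
theorem statement14 (p : ℕ) (hp : 1 ≤ p) :
    ∃ cp > (0:ℝ), ∀ (T : ℝ), 0 < T → ∀ (k : ℝ → ℝ → ℝ) (ψ : ℝ → ℝ),
      IsPCSF p T k ψ →
      cp * seminorm2 ψ ≤ (fCoeff ψ 0).re →
      ∃ a₀ > (0:ℝ), ∃ a₁ > (0:ℝ), ∃ t₀ : ℝ, 0 < t₀ ∧ t₀ < T ∧
        ∀ t : ℝ, t₀ < t → t < T →
          0 < (T - t) - a₀ * (T - t) ^ (1 + (6 * (p : ℝ) - 2) / ((p : ℝ) + 1)) ∧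
          (((p : ℝ) + 1) / (p : ℝ)) ^ ((1 : ℝ) / ((p : ℝ) + 1))
              * (fCoeff (fun θ => k θ t) 0).re
            ≤ ((T - t) - a₀ * (T - t) ^ (1 + (6 * (p : ℝ) - 2) / ((p : ℝ) + 1)))
                ^ (-((1 : ℝ) / ((p : ℝ) + 1))) ∧
          ((T - t) + a₁ * (T - t) ^ (1 + (6 * (p : ℝ) - 2) / ((p : ℝ) + 1)))
                ^ (-((1 : ℝ) / ((p : ℝ) + 1)))
            ≤ (((p : ℝ) + 1) / (p : ℝ)) ^ ((1 : ℝ) / ((p : ℝ) + 1))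
              * (fCoeff (fun θ => k θ t) 0).re := by
  obtain ⟨d0, C, hd0, hd01, hC, hst⟩ := static_main p hp
  obtain ⟨A, hA, hinit⟩ := init_small
  obtain ⟨δ, hδ, hδd, hCδ, hδ1⟩ : ∃ δ : ℝ, 0 < δ ∧ δ ≤ d0 ∧ C * δ ≤ 1 / 2 ∧ δ ≤ 1 := by
    refine ⟨min d0 (1 / (2 * (C + 1))), lt_min hd0 (by positivity), min_le_left _ _, ?_,
      (min_le_left _ _).trans (by linarith)⟩
    calc C * min d0 (1 / (2 * (C + 1))) ≤ C * (1 / (2 * (C + 1))) := by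
          gcongr; exact min_le_right _ _
      _ ≤ 1 / 2 := by
          rw [mul_one_div, div_le_div_iff₀ (by positivity) (by norm_num)]
          linarith
  have hεs : Real.sqrt (δ ^ 2) = δ := Real.sqrt_sq hδ.le
  set ε : ℝ := δ ^ 2 with hε
  have hε0 : 0 < ε := by positivity
  refine ⟨(A + 1) / ε + 1, by positivity, ?_⟩
  intro T hT k ψ hk hsmall
  obtain ⟨hsm, hper, hpos, hpde, hk0, -, hψpos, -, hbl, hcl⟩ := hk
  set K : ℝ × ℝ → ℝ := fun q => k q.1 q.2 with hK
  have hK1s := dW_smooth T (1, 0) K hsm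
  have hK2s := dW_smooth T (1, 0) _ hK1s
  have hKts := dW_smooth T (0, 1) K hsm
  set K1 := dW T (1, 0) K with hK1
  set K2 := dW T (1, 0) K1 with hK2
  set Kt := dW T (0, 1) K with hKt
  have D1 : ∀ t ∈ Ico 0 T, ∀ x, HasDerivAt (fun x => k x t) (K1 (x, t)) x :=
    fun t ht x => dW_x T K hsm x t ht
  have D2 : ∀ t ∈ Ico 0 T, ∀ x, HasDerivAt (fun x => K1 (x, t)) (K2 (x, t)) x :=
    fun t ht x => dW_x T K1 hK1s x t ht
  have c0 : ∀ t ∈ Ico 0 T, Continuous (fun x => k x t) :=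
    fun t ht => slice_cont T K hsm.continuousOn t ht
  have c1 : ∀ t ∈ Ico 0 T, Continuous (fun x => K1 (x, t)) :=
    fun t ht => slice_cont T K1 hK1s.continuousOn t ht
  have c2 : ∀ t ∈ Ico 0 T, Continuous (fun x => K2 (x, t)) :=
    fun t ht => slice_cont T K2 hK2s.continuousOn t ht
  have ct : ∀ t ∈ Ico 0 T, Continuous (fun x => Kt (x, t)) :=
    fun t ht => slice_cont T Kt hKts.continuousOn t ht
  have p0 : ∀ t, k (2 * π) t = k 0 t := fun t => by
    have := hper 0 t
    rwa [zero_add] at this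
  have p1 : ∀ t ∈ Ico 0 T, K1 (2 * π, t) = K1 (0, t) := by
    intro t ht
    have h1 := D1 t ht (0 + 2 * π)
    have h2 := h1.comp_add_const 0 (2 * π)
    have h3 : (fun x => k (x + 2 * π) t) = fun x => k x t := funext (fun x => hper x t)
    rw [h3] at h2
    have := h2.unique (D1 t ht 0)
    rwa [zero_add] at this
  have pt : ∀ t ∈ Ioo 0 T, Kt (2 * π, t) = Kt (0, t) := by
    intro t ht
    have h1 : HasDerivAt (fun s => k (2 * π) s) (Kt (2 * π, t)) t := dW_t T K hsm (2 * π) t ht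
    have h2 : HasDerivAt (fun s => k 0 s) (Kt (0, t)) t := dW_t T K hsm 0 t ht
    have h3 : (fun s => k (2 * π) s) = fun s => k 0 s := funext p0
    rw [h3] at h1
    exact h1.unique h2
  have e1 : ∀ t ∈ Ico 0 T, deriv (fun x => k x t) = fun x => K1 (x, t) :=
    fun t ht => funext (fun x => (D1 t ht x).deriv)
  have e2 : ∀ t ∈ Ico 0 T, deriv (deriv (fun x => k x t)) = fun x => K2 (x, t) := by
    intro t ht
    rw [e1 t ht]
    exact funext (fun x => (D2 t ht x).deriv)
  have hpde2 : ∀ t ∈ Ioo 0 T, ∀ x, Kt (x, t) = k x t ^ 2 * (k x t ^ (p - 1) * K2 (x, t)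
      + ((p:ℝ) - 1) * k x t ^ (p - 2) * K1 (x, t) ^ 2 + (1 / (p:ℝ)) * k x t ^ p) := by
    intro t ht x
    have h1 : HasDerivAt (fun s => k x s) (Kt (x, t)) t := dW_t T K hsm x t ht
    have ht' := Ioo_subset_Ico_self ht
    have h2 := hpde x t ht'
    rw [e2 t ht', e1 t ht'] at h2
    exact h1.unique h2
  have hcl2 := fun t ht => closing (fun x => k x t) (c0 t ht) (fun x => hpos x t ht) (hcl t ht)
  set r : ℝ → ℝ := fun t => (fCoeff (fun θ => k θ t) 0).re with hr
  have hreq : ∀ t, r t = (2 * π)⁻¹ * ∫ x in (0:ℝ)..(2 * π), k x t := fun t => fCoeff_zero _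
  have hπ : (0:ℝ) < 2 * π := by positivity
  have hrpos : ∀ t ∈ Ico 0 T, 0 < r t := by
    intro t ht
    rw [hreq]
    refine mul_pos (by positivity) ?_
    exact intervalIntegral.intervalIntegral_pos_of_pos ((c0 t ht).intervalIntegrable _ _)
      (fun x => hpos x t ht) hπ
  set Y : ℝ → ℝ := fun t => 2 * π * ∫ x in (0:ℝ)..(2 * π), K1 (x, t) ^ 2 with hY
  have hYpos : ∀ t, 0 ≤ Y t := fun t => mul_nonneg hπ.le
    (intervalIntegral.integral_nonneg hπ.le (fun x _ => sq_nonneg _))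
  have hsq : ContDiffOn ℝ (⊤ : ℕ∞) (fun q => K1 q ^ 2) (univ ×ˢ Ico 0 T) := hK1s.pow 2
  -- continuity
  have hrc : ContinuousOn r (Ico 0 T) := by
    have := (int_cont T K hsm.continuousOn).const_smul ((2 * π)⁻¹)
    exact this.congr (fun t _ => hreq t)
  have hYc : ContinuousOn Y (Ico 0 T) := (int_cont T _ hsq.continuousOn).const_smul (2 * π)
  -- derivatives
  set r' : ℝ → ℝ := fun t => (2 * π)⁻¹ * ∫ x in (0:ℝ)..(2 * π), Kt (x, t) with hr'
  set Y' : ℝ → ℝ := fun t => 2 * π * (-2 * ∫ x in (0:ℝ)..(2 * π), K2 (x, t) * Kt (x, t)) with hY'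
  have hdr : ∀ t ∈ Ioo 0 T, HasDerivAt r (r' t) t := by
    intro t ht
    have h1 := (int_deriv T K hsm t ht).const_mul ((2 * π)⁻¹)
    have h2 : r = fun t => (2 * π)⁻¹ * ∫ x in (0:ℝ)..(2 * π), K (x, t) := funext hreq
    rw [h2]
    exact h1
  have hdY : ∀ t ∈ Ioo 0 T, HasDerivAt Y (Y' t) t := by
    intro t ht
    have ht' := Ioo_subset_Ico_self ht
    have h1 := (int_deriv T _ hsq t ht).const_mul (2 * π)
    refine h1.congr_deriv ?_
    simp only [hY']
    congr 1
    have e : ∀ x, dW T (0, 1) (fun q => K1 q ^ 2) (x, t) = 2 * K1 (x, t) * dW T (1, 0) Kt (x, t) := by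
      intro x
      have a1 := dW_t T _ hsq x t ht
      have a2 := (dW_t T K1 hK1s x t ht).pow 2
      have a3 := a1.unique a2
      rw [a3, dW_comm T K hsm x t ht]
      simp [hKt]
    simp only [e]
    have cx : Continuous (fun x => dW T (1, 0) Kt (x, t)) :=
      slice_cont T _ (dW_smooth T (1, 0) Kt hKts).continuousOn t ht'
    have hI := ibp (fun x => K1 (x, t) * Kt (x, t))
      (fun x => K2 (x, t) * Kt (x, t) + K1 (x, t) * dW T (1, 0) Kt (x, t))
      (fun x => (D2 t ht' x).mul (dW_x T Kt hKts x t ht'))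
      (((c2 t ht').mul (ct t ht')).add ((c1 t ht').mul cx))
      (by simp only [p1 t ht', pt t ht])
    have i1 : IntervalIntegrable (fun x => K2 (x, t) * Kt (x, t)) volume 0 (2 * π) :=
      ((c2 t ht').mul (ct t ht')).intervalIntegrable _ _
    have i2 : IntervalIntegrable (fun x => K1 (x, t) * dW T (1, 0) Kt (x, t)) volume 0 (2 * π) :=
      ((c1 t ht').mul cx).intervalIntegrable _ _
    rw [intervalIntegral.integral_add i1 i2] at hI
    have : ∀ x, 2 * K1 (x, t) * dW T (1, 0) Kt (x, t) = 2 * (K1 (x, t) * dW T (1, 0) Kt (x, t)) :=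
      fun x => by ring
    simp only [this]
    rw [intervalIntegral.integral_const_mul]
    linarith
  -- static estimates
  have hstat : ∀ t ∈ Ioo 0 T, Y t ≤ ε * r t ^ 2 →
      (∀ x ∈ Icc 0 (2 * π), k x t ≤ 2 * r t) ∧
      |p * r' t - r t ^ (p + 2)| ≤ C * (r t ^ p * Y t) ∧
      p * Y' t ≤ r t ^ (p + 1) * Y t * (-(6 * p - 4) + C * (Real.sqrt (Y t) / r t)) := by
    intro t ht hYt
    have ht' := Ioo_subset_Ico_self ht
    have hrt := hrpos t ht'
    have hYt0 := hYpos t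
    have hd : Real.sqrt (Y t) / r t ≤ d0 := by
      rw [div_le_iff₀ hrt]
      calc Real.sqrt (Y t) ≤ Real.sqrt (ε * r t ^ 2) := Real.sqrt_le_sqrt hYt
        _ = δ * r t := by
          rw [Real.sqrt_mul hε0.le, hεs, Real.sqrt_sq hrt.le]
        _ ≤ _ := by gcongr
    have := hst (fun x => k x t) (fun x => K1 (x, t)) (fun x => K2 (x, t)) (fun x => Kt (x, t))
      (r t) (∫ x in (0:ℝ)..(2 * π), K1 (x, t) ^ 2) (Real.sqrt (Y t) / r t)
      (D1 t ht') (D2 t ht') (c2 t ht') (p0 t) (p1 t ht') (fun x => hpos x t ht')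
      (by rw [hreq]; field_simp) rfl hrt (by positivity) hd
      (by rw [div_pow, Real.sq_sqrt hYt0, div_mul_cancel₀ _ (by positivity)])
      (hcl2 t ht').1 (hcl2 t ht').2 (hpde2 t ht)
    obtain ⟨s1, s2, s3⟩ := this
    refine ⟨s1, ?_, ?_⟩
    · have e : p * r' t - r t ^ (p + 2) = (2 * π)⁻¹ *
          (p * (∫ x in (0:ℝ)..(2 * π), Kt (x, t)) - 2 * π * r t ^ (p + 2)) := by
        simp only [hr']; field_simp
      rw [e, abs_mul, abs_of_pos (inv_pos.2 hπ)]
      have hD0 : 0 ≤ ∫ x in (0:ℝ)..(2 * π), K1 (x, t) ^ 2 :=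
        intervalIntegral.integral_nonneg hπ.le (fun x _ => sq_nonneg _)
      have h3 := Real.pi_gt_three
      have h1 : (2 * π)⁻¹ ≤ 2 * π := by
        have : (2 * π)⁻¹ ≤ 1 := inv_le_one_of_one_le₀ (by linarith)
        linarith
      calc _ ≤ (2 * π) * (C * r t ^ p * ∫ x in (0:ℝ)..(2 * π), K1 (x, t) ^ 2) := by gcongr
        _ = _ := by simp only [hY]; ring
    · calc p * Y' t = 2 * π * (p * (-2 * ∫ x in (0:ℝ)..(2 * π), K2 (x, t) * Kt (x, t))) := by
            simp only [hY']; ring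
        _ ≤ 2 * π * (r t ^ (p + 1) * (∫ x in (0:ℝ)..(2 * π), K1 (x, t) ^ 2) *
            (-(6 * p - 4) + C * (Real.sqrt (Y t) / r t))) := by gcongr
        _ = _ := by simp only [hY]; ring
  -- initial smallness
  have h0mem : (0:ℝ) ∈ Ico 0 T := ⟨le_rfl, hT⟩
  have hψ : (fun x => k x 0) = ψ := funext hk0
  have hini : Y 0 < ε * r 0 ^ 2 := by
    have h1 := hinit (fun x => k x 0) (fun x => K1 (x, 0)) (fun x => K2 (x, 0))
      (D1 0 h0mem) (D2 0 h0mem) (c2 0 h0mem) (p0 0) (p1 0 h0mem)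
    rw [hψ] at h1
    obtain ⟨hs0, h1⟩ := h1
    have hr0 := hrpos 0 h0mem
    have h2 : ((A + 1) / ε + 1) * seminorm2 ψ ≤ r 0 := by
      simp only [hr, hψ]; exact hsmall
    have h3 : A + 1 ≤ ε * ((A + 1) / ε + 1) ^ 2 := by
      have h4 : (A + 1) / ε ≤ ((A + 1) / ε + 1) ^ 2 := by
        have : 0 ≤ (A + 1) / ε := by positivity
        nlinarith
      calc A + 1 = ε * ((A + 1) / ε) := by field_simp
        _ ≤ _ := by gcongr
    have h5 : (A + 1) * seminorm2 ψ ^ 2 ≤ ε * r 0 ^ 2 := by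
      calc _ ≤ ε * ((A + 1) / ε + 1) ^ 2 * seminorm2 ψ ^ 2 := by gcongr
        _ = ε * (((A + 1) / ε + 1) * seminorm2 ψ) ^ 2 := by ring
        _ ≤ _ := by gcongr
    have h6 : Y 0 ≤ A * seminorm2 ψ ^ 2 := h1
    rcases hs0.eq_or_lt with hs | hs
    · rw [← hs] at h6
      have : 0 < ε * r 0 ^ 2 := by positivity
      nlinarith
    · have : 0 < seminorm2 ψ ^ 2 := by positivity
      linarith
  obtain ⟨t1, ht1, ht1s⟩ : ∃ t1 ∈ Ioo 0 T, Y t1 ≤ ε * r t1 ^ 2 := by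
    have a1 := (hYc 0 h0mem).mono Ioo_subset_Ico_self
    have a2 := (((hrc 0 h0mem).mono Ioo_subset_Ico_self).pow 2).const_smul ε
    have a3 : ∀ᶠ t in nhdsWithin 0 (Ioo 0 T), Y t < ε * r t ^ 2 :=
      Tendsto.eventually_lt a1 a2 hini
    have : (nhdsWithin (0:ℝ) (Ioo 0 T)).NeBot := left_nhdsWithin_Ioo_neBot hT
    obtain ⟨t, h1, h2⟩ := (a3.and self_mem_nhdsWithin).exists
    exact ⟨t, h2, h1.le⟩
  have hsub : Ico t1 T ⊆ Ioo 0 T := fun t ht => ⟨ht1.1.trans_le ht.1, ht.2⟩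
  have hsub2 : Ico t1 T ⊆ Ico 0 T := hsub.trans Ioo_subset_Ico_self
  obtain ⟨a, ha, hfin⟩ := ode_main p hp ε C T t1 hε0 hC (by rw [hεs]; linarith)
    (by
      have : C * ε ≤ C * δ := by
        apply mul_le_mul_of_nonneg_left _ hC
        rw [hε]; nlinarith
      linarith) ht1.2 r Y r' Y' (fun t ht => hrpos t (hsub2 ht)) (fun t _ => hYpos t)
    (fun t ht => hdr t (hsub ht)) (fun t ht => hdY t (hsub ht))
    (fun t ht h => (hstat t (hsub ht) h).2) ht1s
    (by
      intro hS
      have h2 : Tendsto (fun t => (⨆ θ : Set.Icc (0:ℝ) (2 * Real.pi), k (θ : ℝ) t) / 2)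
        (nhdsWithin T (Set.Iio T)) atTop := hbl.atTop_div_const (by norm_num)
      refine tendsto_atTop_mono' _ ?_ h2
      filter_upwards [Ico_mem_nhdsLT ht1.2] with t ht
      have h3 := (hstat t (hsub ht) (hS t ht)).1
      have : Nonempty (Set.Icc (0:ℝ) (2 * Real.pi)) := ⟨⟨0, le_rfl, hπ.le⟩⟩
      have : (⨆ θ : Set.Icc (0:ℝ) (2 * Real.pi), k (θ : ℝ) t) ≤ 2 * r t :=
        ciSup_le (fun θ => h3 θ θ.2)
      linarith)
  exact final_conv p hp T t1 a ht1.1 ht1.2 ha r (fun t ht => hrpos t (hsub2 ht)) hfin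
end

section
/- There exists a constant c_p > 0 depending only on p such that if ψ̂(0) ≥ c_p·‖ψ‖₂, then there is a constant C > 0 such that the mean of the normalized curvature satisfies |(1/2π)∫₀^{2π} k̃(θ,τ) dθ − 1| ≤ C·e^{−(6p−2)τ} for all sufficiently large τ. -/
open Real MeasureTheory Filter Set

lemma aux_cs {a b : ℝ} (hab : a ≤ b) {f g : ℝ → ℝ} (hf : Continuous f) (hg : Continuous g) :
    (∫ x in a..b, f x * g x)^2 ≤ (∫ x in a..b, f x ^ 2) * (∫ x in a..b, g x ^ 2) := by
  have key : ∀ s : ℝ, 0 ≤ (∫ x in a..b, g x ^ 2) * (s * s) + (2 * ∫ x in a..b, f x * g x) * s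
      + ∫ x in a..b, f x ^ 2 := by
    intro s
    have h1 : (∫ x in a..b, (f x + s * g x)^2) = (∫ x in a..b, g x ^ 2) * (s * s)
        + (2 * ∫ x in a..b, f x * g x) * s + ∫ x in a..b, f x ^ 2 := by
      have : ∀ x, (f x + s * g x)^2 = (g x ^2 * (s*s) + (2 * (f x * g x)) * s) + f x ^2 := by
        intro x; ring
      simp_rw [this]
      rw [intervalIntegral.integral_add, intervalIntegral.integral_add,
        intervalIntegral.integral_mul_const, intervalIntegral.integral_mul_const,
        intervalIntegral.integral_const_mul]
      all_goals exact Continuous.intervalIntegrable (by fun_prop) _ _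
    rw [← h1]
    exact intervalIntegral.integral_nonneg hab (fun x _ => by positivity)
  have := discrim_le_zero key
  unfold discrim at this
  nlinarith

lemma aux_sup {f f' : ℝ → ℝ} (hf : ∀ x, HasDerivAt f (f' x) x) (hf' : Continuous f')
    (h0 : (∫ x in (0:ℝ)..(2*π), f x) = 0) {x : ℝ} (hx : x ∈ Icc 0 (2*π)) :
    f x ^ 2 ≤ 2 * π * ∫ x in (0:ℝ)..(2*π), f' x ^ 2 := by
  have hpi := Real.two_pi_pos
  have hc : Continuous f := continuous_iff_continuousAt.2 fun x => (hf x).continuousAt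
  obtain ⟨c, hcm, hc0⟩ : ∃ c ∈ Icc 0 (2*π), f c = 0 := by
    by_contra hcon
    push Not at hcon
    have hpre : IsPreconnected (f '' Icc 0 (2*π)) := isPreconnected_Icc.image _ hc.continuousOn
    have hsgn : (∀ y ∈ Icc 0 (2*π), 0 < f y) ∨ (∀ y ∈ Icc 0 (2*π), f y < 0) := by
      by_contra h
      push Not at h
      obtain ⟨⟨y, hy, hy0⟩, ⟨z, hz, hz0⟩⟩ := h
      have := hpre.ordConnected.out (mem_image_of_mem f hy) (mem_image_of_mem f hz) ⟨hy0, hz0⟩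
      obtain ⟨c, hc, hc'⟩ := this
      exact hcon c hc hc'
    rcases hsgn with h | h
    · have := intervalIntegral.intervalIntegral_pos_of_pos_on (hc.intervalIntegrable 0 (2*π))
        (fun y hy => h y (Ioo_subset_Icc_self hy)) hpi
      linarith
    · have := intervalIntegral.intervalIntegral_pos_of_pos_on (hc.neg.intervalIntegrable 0 (2*π))
        (fun y hy => by have := h y (Ioo_subset_Icc_self hy); simp; linarith) hpi
      simp only [Pi.neg_apply, intervalIntegral.integral_neg] at this
      linarith
  have main : ∀ a b, a ∈ Icc 0 (2*π) → b ∈ Icc 0 (2*π) → a ≤ b →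
      (f b - f a)^2 ≤ 2 * π * ∫ x in (0:ℝ)..(2*π), f' x ^ 2 := by
    intro a b ha hb hab
    rw [← intervalIntegral.integral_eq_sub_of_hasDerivAt (fun x _ => hf x)
      (hf'.intervalIntegrable a b)]
    have h1 := aux_cs hab (f := fun _ => 1) continuous_const hf'
    simp only [one_mul, one_pow, intervalIntegral.integral_const, smul_eq_mul, mul_one] at h1
    have h2 : (∫ x in a..b, f' x ^ 2) ≤ ∫ x in (0:ℝ)..(2*π), f' x ^ 2 :=
      intervalIntegral.integral_mono_interval ha.1 hab hb.2
        (Eventually.of_forall fun x => by positivity)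
        (Continuous.intervalIntegrable (by fun_prop) _ _)
    have h3 : 0 ≤ ∫ x in a..b, f' x ^ 2 :=
      intervalIntegral.integral_nonneg hab (fun x _ => by positivity)
    calc _ ≤ _ := h1
      _ ≤ _ := mul_le_mul (by linarith [ha.1, hb.2]) h2 h3 hpi.le
  rcases le_total c x with h | h
  · have := main c x hcm hx h
    rwa [hc0, sub_zero] at this
  · have := main x c hx hcm h
    rw [hc0, zero_sub, neg_sq] at this
    exact this

lemma aux_coef (f : ℝ → ℝ) (n : ℤ) :
    fourierCoeffOn Real.two_pi_pos (fun x => (f x : ℂ)) n = fCoeff f n := by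
  rw [fourierCoeffOn_eq_integral, fCoeff]
  simp only [sub_zero, smul_eq_mul, Complex.real_smul]
  congr 1
  · push_cast; rfl
  · apply intervalIntegral.integral_congr
    intro x _
    simp only
    rw [fourier_coe_apply, mul_comm]
    congr 2
    have : (π : ℂ) ≠ 0 := by exact_mod_cast Real.pi_ne_zero
    push_cast
    field_simp
    norm_num
    ring

lemma aux_parseval {f : ℝ → ℝ} (hf : Continuous f) :
    HasSum (fun n : ℤ => ‖fCoeff f n‖^2) (1/(2*π) * ∫ x in (0:ℝ)..(2*π), f x ^ 2) := by
  have hL : MemLp (fun x => (f x : ℂ)) 2 (volume.restrict (Ioc 0 (2*π))) := by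
    have hc : Continuous (fun x => (f x : ℂ)) := by fun_prop
    obtain ⟨C, hC⟩ := (isCompact_Icc (a := (0:ℝ)) (b := 2*π)).exists_bound_of_continuousOn
      hc.continuousOn
    exact MemLp.of_bound hc.aestronglyMeasurable C
      ((ae_restrict_iff' measurableSet_Ioc).2
        (Eventually.of_forall fun x hx => hC x (Ioc_subset_Icc_self hx)))
  have := hasSum_sq_fourierCoeffOn Real.two_pi_pos hL
  simp only [aux_coef, sub_zero, smul_eq_mul, Complex.norm_real, Real.norm_eq_abs, sq_abs] at this
  simpa using this

lemma aux_coef_deriv {f f' : ℝ → ℝ} (hf : ∀ x, HasDerivAt f (f' x) x) (hf' : Continuous f')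
    (hper : f (2*π) = f 0) (n : ℤ) : fCoeff f' n = Complex.I * n * fCoeff f n := by
  by_cases hn : n = 0
  · subst hn
    simp only [fCoeff]
    have : (∫ x in (0:ℝ)..(2*π), (f' x : ℂ)) = 0 := by
      rw [intervalIntegral.integral_ofReal,
        intervalIntegral.integral_eq_sub_of_hasDerivAt (fun x _ => hf x)
        (hf'.intervalIntegrable _ _), hper]
      simp
    simp [this]
  · have h := fourierCoeffOn_of_hasDerivAt Real.two_pi_pos (f := fun x => (f x : ℂ))
      (f' := fun x => (f' x : ℂ)) hn (fun x _ => (hf x).ofReal_comp)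
      (Continuous.intervalIntegrable (by fun_prop) _ _)
    rw [aux_coef, aux_coef, hper] at h
    rw [h]
    have : (π : ℂ) ≠ 0 := by exact_mod_cast Real.pi_ne_zero
    have hn' : (n:ℂ) ≠ 0 := by exact_mod_cast hn
    push_cast
    field_simp
    simp
    ring

lemma aux_coef_neg (f : ℝ → ℝ) (n : ℤ) : ‖fCoeff f (-n)‖ = ‖fCoeff f n‖ := by
  have : fCoeff f (-n) = (starRingEnd ℂ) (fCoeff f n) := by
    unfold fCoeff
    rw [map_mul, ← intervalIntegral.intervalIntegral_conj]
    congr 1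
    · simp [map_ofNat]
    · apply intervalIntegral.integral_congr
      intro x _
      simp [← Complex.exp_conj]
  rw [this, Complex.norm_conj]

lemma aux_wirt {r r1 r2 : ℝ → ℝ} (h1 : ∀ x, HasDerivAt r (r1 x) x)
    (h2 : ∀ x, HasDerivAt r1 (r2 x) x) (hr2 : Continuous r2)
    (hp : r (2*π) = r 0) (hp1 : r1 (2*π) = r1 0)
    (hcl : (∫ x in (0:ℝ)..(2*π), Complex.exp (Complex.I * x) * (r x : ℂ)) = 0) :
    4 * (∫ x in (0:ℝ)..(2*π), r1 x ^ 2) ≤ ∫ x in (0:ℝ)..(2*π), r2 x ^ 2 := by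
  have hc1 : Continuous r1 := continuous_iff_continuousAt.2 fun x => (h2 x).continuousAt
  have hm1 : ‖fCoeff r (-1)‖ = 0 := by
    rw [norm_eq_zero]
    unfold fCoeff
    convert mul_zero _
    rw [← hcl]
    apply intervalIntegral.integral_congr
    intro x _
    simp [mul_comm]
  have hm1' : ‖fCoeff r 1‖ = 0 := by rw [← aux_coef_neg]; exact hm1
  have key : ∀ n : ℤ, 4 * ‖fCoeff r1 n‖^2 ≤ ‖fCoeff r2 n‖^2 := by
    intro n
    rw [aux_coef_deriv h2 hr2 hp1, aux_coef_deriv h1 hc1 hp]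
    simp only [norm_mul, Complex.norm_I, one_mul, Complex.norm_intCast]
    by_cases h : n = 0
    · simp [h]
    by_cases h' : n = 1
    · simp [h', hm1']
    by_cases h'' : n = -1
    · simp [h'', hm1]
    have : (4:ℤ) ≤ n^2 := by
      have : n ≤ -2 ∨ 2 ≤ n := by omega
      rcases this with h | h <;> nlinarith
    have h4 : (4:ℝ) ≤ |(n:ℝ)|^2 := by rw [sq_abs]; exact_mod_cast this
    rw [mul_pow |(n:ℝ)| (_ * _)]
    exact mul_le_mul_of_nonneg_right h4 (by positivity)
  have := hasSum_le key ((aux_parseval hc1).mul_left 4) (aux_parseval hr2)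
  have hpi : 0 < 1/(2*π) := by positivity
  nlinarith

lemma aux_sum : ∃ S : ℝ, 0 < S ∧ ∀ ψ ψ' : ℝ → ℝ, (∀ x, HasDerivAt ψ (ψ' x) x) → Continuous ψ' →
    ψ (2*π) = ψ 0 → BddAbove (range fun n : ℤ => (n : ℝ)^2 * |(fCoeff ψ n).re|) →
    BddAbove (range fun n : ℤ => (n : ℝ)^2 * |(fCoeff ψ n).im|) →
    (∫ x in (0:ℝ)..(2*π), ψ' x ^ 2) ≤ S * seminorm2 ψ ^ 2 := by
  have hs : Summable (fun n : ℤ => 1 / (n:ℝ)^2) := Real.summable_one_div_int_pow.2 (by norm_num)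
  refine ⟨2 * π * (2 * ∑' n : ℤ, 1 / (n:ℝ)^2) + 1, ?_, ?_⟩
  · have : 0 ≤ ∑' n : ℤ, 1 / (n:ℝ)^2 := tsum_nonneg fun n => by positivity
    positivity
  intro ψ ψ' hd hc hp hb1 hb2
  have key : ∀ n : ℤ, ‖fCoeff ψ' n‖^2 ≤ 2 * seminorm2 ψ ^2 * (1 / (n:ℝ)^2) := by
    intro n
    rw [aux_coef_deriv hd hc hp]
    simp only [norm_mul, Complex.norm_I, one_mul, Complex.norm_intCast]
    by_cases h : n = 0
    · simp [h]
    have hn : (n:ℝ) ≠ 0 := by exact_mod_cast h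
    have e1 : (n : ℝ)^2 * |(fCoeff ψ n).re| ≤ seminorm2 ψ :=
      (le_ciSup hb1 n).trans (le_max_left _ _)
    have e2 : (n : ℝ)^2 * |(fCoeff ψ n).im| ≤ seminorm2 ψ :=
      (le_ciSup hb2 n).trans (le_max_right _ _)
    have e1' := pow_le_pow_left₀ (by positivity) e1 2
    have e2' := pow_le_pow_left₀ (by positivity) e2 2
    rw [mul_pow, sq_abs] at e1' e2'
    have hsq : ‖fCoeff ψ n‖^2 = (fCoeff ψ n).re^2 + (fCoeff ψ n).im^2 := by
      rw [Complex.sq_norm, Complex.normSq_apply]; ring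
    rw [mul_pow, sq_abs, hsq, mul_one_div, le_div_iff₀ (by positivity)]
    nlinarith
  have := hasSum_le key (aux_parseval hc) (hs.hasSum.mul_left _)
  have hpi : 0 < 2*π := Real.two_pi_pos
  rw [one_div, inv_mul_le_iff₀ hpi] at this
  nlinarith [sq_nonneg (seminorm2 ψ)]

lemma aux_pow1 (n : ℕ) : ∃ C : ℝ, 0 ≤ C ∧ ∀ x : ℝ, |x - 1| ≤ 1/2 → |(x⁻¹)^n - 1| ≤ C * |x - 1| := by
  induction n with
  | zero => exact ⟨0, le_rfl, fun x _ => by simp⟩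
  | succ n ih =>
    obtain ⟨C, hC, h⟩ := ih
    refine ⟨2 * C + 2, by positivity, fun x hx => ?_⟩
    have hx' := abs_le.1 hx
    have hx0 : 0 < x := by linarith
    have hi : x⁻¹ ≤ 2 := by rw [inv_le_comm₀ hx0 (by norm_num)]; linarith
    have hi0 : 0 < x⁻¹ := inv_pos.2 hx0
    have e : (x⁻¹)^(n+1) - 1 = x⁻¹ * ((x⁻¹)^n - 1) - x⁻¹ * (x - 1) := by
      rw [pow_succ]; field_simp; ring
    rw [e]
    calc _ ≤ |x⁻¹ * ((x⁻¹)^n - 1)| + |x⁻¹ * (x - 1)| := abs_sub _ _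
      _ = x⁻¹ * |(x⁻¹)^n - 1| + x⁻¹ * |x - 1| := by rw [abs_mul, abs_mul, abs_of_pos hi0]
      _ ≤ 2 * (C * |x - 1|) + 2 * |x - 1| := by
        have := h x hx
        gcongr
      _ = _ := by ring

lemma aux_pow2 (n : ℕ) : ∃ C : ℝ, 0 ≤ C ∧ ∀ x : ℝ, |x - 1| ≤ 1/2 →
    |(x⁻¹)^n - 1 + n * (x - 1)| ≤ C * (x - 1)^2 := by
  induction n with
  | zero => exact ⟨0, le_rfl, fun x _ => by simp⟩
  | succ n ih =>
    obtain ⟨C, hC, h⟩ := ih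
    refine ⟨2 * C + 2 * (n+1), by positivity, fun x hx => ?_⟩
    have hx' := abs_le.1 hx
    have hx0 : 0 < x := by linarith
    have hi : x⁻¹ ≤ 2 := by rw [inv_le_comm₀ hx0 (by norm_num)]; linarith
    have hi0 : 0 < x⁻¹ := inv_pos.2 hx0
    have e : (x⁻¹)^(n+1) - 1 + (n+1:ℕ) * (x-1) = x⁻¹ * ((x⁻¹)^n - 1 + n * (x - 1))
        + x⁻¹ * ((n+1) * (x - 1)^2) := by
      rw [pow_succ]; push_cast; field_simp; ring
    rw [e]
    calc _ ≤ |x⁻¹ * ((x⁻¹)^n - 1 + n * (x - 1))| + |x⁻¹ * ((n+1) * (x - 1)^2)| := abs_add_le _ _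
      _ = x⁻¹ * |(x⁻¹)^n - 1 + n * (x - 1)| + x⁻¹ * ((n+1) * (x - 1)^2) := by
        rw [abs_mul, abs_of_pos hi0, abs_of_nonneg (a := x⁻¹ * ((n+1) * (x - 1)^2)) (by positivity)]
      _ ≤ 2 * (C * (x - 1)^2) + 2 * ((n+1) * (x - 1)^2) := by
        have := h x hx
        gcongr
      _ = _ := by ring

structure AuxSp (r r1 r2 : ℝ → ℝ) : Prop where
  h1 : ∀ x, HasDerivAt r (r1 x) x
  h2 : ∀ x, HasDerivAt r1 (r2 x) x
  c2 : Continuous r2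
  p0 : r (2*π) = r 0
  p1 : r1 (2*π) = r1 0
  pos : ∀ x, 0 < r x
  cl : (∫ x in (0:ℝ)..(2*π), Complex.exp (Complex.I * x) * (r x : ℂ)) = 0

namespace AuxSp

lemma c1 {r r1 r2 : ℝ → ℝ} (H : AuxSp r r1 r2) : Continuous r1 := continuous_iff_continuousAt.2 fun x => (H.h2 x).continuousAt
lemma c0 {r r1 r2 : ℝ → ℝ} (H : AuxSp r r1 r2) : Continuous r := continuous_iff_continuousAt.2 fun x => (H.h1 x).continuousAt
lemma ck {r r1 r2 : ℝ → ℝ} (H : AuxSp r r1 r2) : Continuous (fun x => (r x)⁻¹) := H.c0.inv₀ fun x => (H.pos x).ne'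

lemma rho_pos {r r1 r2 : ℝ → ℝ} (H : AuxSp r r1 r2) : 0 < 1/(2*π) * ∫ x in (0:ℝ)..(2*π), r x := by
  have := intervalIntegral.intervalIntegral_pos_of_pos_on (H.c0.intervalIntegrable 0 (2*π))
        (fun y _ => H.pos y) Real.two_pi_pos
  have := Real.pi_pos
  positivity

lemma close {r r1 r2 : ℝ → ℝ} (H : AuxSp r r1 r2) {ρ e : ℝ} (hρ : ρ = 1/(2*π) * ∫ x in (0:ℝ)..(2*π), r x) (he : 0 ≤ e)
    (hG : (e * ρ)^2 = 2 * π * ∫ x in (0:ℝ)..(2*π), r1 x ^ 2) {x : ℝ} (hx : x ∈ Icc 0 (2*π)) :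
    |r x / ρ - 1| ≤ e := by
  have hpi := Real.pi_pos
  have hρ0 : 0 < ρ := hρ ▸ H.rho_pos
  have h0 : (∫ x in (0:ℝ)..(2*π), (r x - ρ)) = 0 := by
    rw [intervalIntegral.integral_sub (H.c0.intervalIntegrable _ _)
      (continuous_const.intervalIntegrable _ _)]
    simp only [intervalIntegral.integral_const, smul_eq_mul]
    rw [hρ]; field_simp; ring
  have := aux_sup (f := fun x => r x - ρ) (fun x => (H.h1 x).sub_const ρ) H.c1 h0 hx
  rw [← hG] at this
  have h2 := abs_le_of_sq_le_sq this (by positivity)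
  have : r x / ρ - 1 = (r x - ρ)/ρ := by field_simp
  rw [this, abs_div, abs_of_pos hρ0, div_le_iff₀ hρ0]
  exact h2

lemma dk {r r1 r2 : ℝ → ℝ} (H : AuxSp r r1 r2) (n : ℕ) (x : ℝ) : HasDerivAt (fun x => ((r x)⁻¹)^n * r1 x)
    (((r x)⁻¹)^n * r2 x - n * ((r x)⁻¹)^(n+1) * (r1 x)^2) x := by
  have hx := (H.pos x).ne'
  have h := (((H.h1 x).inv hx).pow n).mul (H.h2 x)
  refine h.congr_deriv ?_
  cases n with
  | zero => simp
  | succ n => simp only [Pi.inv_apply, Pi.pow_apply, Nat.add_sub_cancel]; push_cast; rw [div_eq_mul_inv, ← inv_pow]; ring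

lemma parts {r r1 r2 : ℝ → ℝ} (H : AuxSp r r1 r2) (n : ℕ) : (∫ x in (0:ℝ)..(2*π),
    (((r x)⁻¹)^n * r2 x - n * ((r x)⁻¹)^(n+1) * (r1 x)^2)) = 0 := by
  have := H.ck
  have := H.c1
  have := H.c2
  rw [intervalIntegral.integral_eq_sub_of_hasDerivAt (fun x _ => H.dk n x)
    (Continuous.intervalIntegrable (by fun_prop) _ _), H.p0, H.p1, sub_self]

end AuxSp

lemma aux_mean (n : ℕ) : ∃ C : ℝ, 0 ≤ C ∧ ∀ (r r1 r2 : ℝ → ℝ) (ρ e : ℝ), AuxSp r r1 r2 →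
    ρ = 1/(2*π) * (∫ x in (0:ℝ)..(2*π), r x) → 0 ≤ e → e ≤ 1/2 →
    (e * ρ)^2 = 2 * π * (∫ x in (0:ℝ)..(2*π), r1 x ^ 2) →
    |1/(2*π) * (∫ x in (0:ℝ)..(2*π), ((r x)⁻¹)^n) - (ρ⁻¹)^n| ≤ C * e^2 * (ρ⁻¹)^n := by
  obtain ⟨C, hC, h⟩ := aux_pow2 n
  refine ⟨C, hC, fun r r1 r2 ρ e H hρ he he2 hG => ?_⟩
  have hpi := Real.pi_pos
  have hρ0 : 0 < ρ := hρ ▸ H.rho_pos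
  have hb : ∀ x ∈ Set.uIoc 0 (2*π), ‖((r x)⁻¹)^n - (ρ⁻¹)^n + n * (ρ⁻¹)^n * (r x / ρ - 1)‖ ≤
      C * e^2 * (ρ⁻¹)^n := by
    intro x hx
    rw [uIoc_of_le Real.two_pi_pos.le] at hx
    have h1 := H.close hρ he hG (Ioc_subset_Icc_self hx)
    have h2 := h _ (h1.trans he2)
    have e1 : ((r x)⁻¹)^n = (ρ⁻¹)^n * ((r x / ρ)⁻¹)^n := by
      rw [← mul_pow]; congr 1; field_simp
    have e2 : ((r x)⁻¹)^n - (ρ⁻¹)^n + n * (ρ⁻¹)^n * (r x / ρ - 1) =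
      (ρ⁻¹)^n * (((r x / ρ)⁻¹)^n - 1 + n * (r x / ρ - 1)) := by rw [e1]; ring
    rw [e2, Real.norm_eq_abs, abs_mul, abs_of_pos (by positivity : 0 < (ρ⁻¹)^n), mul_comm]
    gcongr
    refine h2.trans ?_
    have : (r x / ρ - 1)^2 ≤ e^2 := by rw [← sq_abs]; gcongr
    gcongr
  have := intervalIntegral.norm_integral_le_of_norm_le_const hb
  have hck := H.ck
  have hc0 := H.c0
  rw [intervalIntegral.integral_add (Continuous.intervalIntegrable (by fun_prop) _ _)
     (Continuous.intervalIntegrable (by fun_prop) _ _),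
    intervalIntegral.integral_sub (Continuous.intervalIntegrable (by fun_prop) _ _)
     (Continuous.intervalIntegrable (by fun_prop) _ _), intervalIntegral.integral_const_mul,
    intervalIntegral.integral_sub (Continuous.intervalIntegrable (by fun_prop) _ _)
     (Continuous.intervalIntegrable (by fun_prop) _ _), intervalIntegral.integral_div] at this
  have e3 : (∫ x in (0:ℝ)..(2*π), r x) / ρ = 2*π := by
    have : (∫ x in (0:ℝ)..(2*π), r x) = 2*π*ρ := by rw [hρ]; field_simp
    rw [this]; field_simp
  simp only [intervalIntegral.integral_const, smul_eq_mul, sub_zero, e3, mul_one, sub_self,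
    mul_zero, add_zero, Real.norm_eq_abs] at this
  rw [abs_of_pos Real.two_pi_pos] at this
  have e4 : 1/(2*π) * (∫ x in (0:ℝ)..(2*π), ((r x)⁻¹)^n) - (ρ⁻¹)^n =
    1/(2*π) * ((∫ x in (0:ℝ)..(2*π), ((r x)⁻¹)^n) - 2*π*(ρ⁻¹)^n) := by field_simp
  rw [e4, abs_mul, abs_of_pos (by positivity : 0 < 1/(2*π)), one_div, inv_mul_le_iff₀ (by positivity)]
  linarith

lemma aux_S4 (p : ℕ) (hp : 1 ≤ p) : ∃ C : ℝ, 0 ≤ C ∧ ∀ (r r1 r2 : ℝ → ℝ) (ρ e : ℝ), AuxSp r r1 r2 →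
    ρ = 1/(2*π) * (∫ x in (0:ℝ)..(2*π), r x) → 0 ≤ e → e ≤ 1/2 →
    (e * ρ)^2 = 2 * π * (∫ x in (0:ℝ)..(2*π), r1 x ^ 2) →
    |1/(2*π) * (∫ x in (0:ℝ)..(2*π), (((r x)⁻¹)^(p+1) * r2 x
      - (p+1) * ((r x)⁻¹)^(p+2) * (r1 x)^2 - 1/p * ((r x)⁻¹)^p)) + 1/p * (ρ⁻¹)^p|
      ≤ C * e^2 * (1/p * (ρ⁻¹)^p) := by
  obtain ⟨C, hC, h⟩ := aux_mean p
  refine ⟨C, hC, fun r r1 r2 ρ e H hρ he he2 hG => ?_⟩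
  have h1 := h r r1 r2 ρ e H hρ he he2 hG
  have hck := H.ck
  have hc1 := H.c1
  have hc2 := H.c2
  have hp0 : 0 < (p:ℝ) := by exact_mod_cast hp
  have h2 := H.parts (p+1)
  push_cast at h2
  rw [intervalIntegral.integral_sub (Continuous.intervalIntegrable (by fun_prop) _ _)
     (Continuous.intervalIntegrable (by fun_prop) _ _), h2, intervalIntegral.integral_const_mul]
  have e4 : 1/(2*π) * (0 - 1/p * ∫ x in (0:ℝ)..(2*π), ((r x)⁻¹)^p) + 1/p * (ρ⁻¹)^p =
    -(1/p * (1/(2*π) * (∫ x in (0:ℝ)..(2*π), ((r x)⁻¹)^p) - (ρ⁻¹)^p)) := by ring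
  rw [e4, abs_neg, abs_mul, abs_of_pos (by positivity : 0 < 1/(p:ℝ))]
  calc _ ≤ 1/(p:ℝ) * (C * e^2 * (ρ⁻¹)^p) := by gcongr
    _ = _ := by ring

set_option maxHeartbeats 1000000 in
lemma aux_S3 (p : ℕ) (hp : 1 ≤ p) : ∃ C e₁ : ℝ, 0 ≤ C ∧ 0 < e₁ ∧ e₁ ≤ 1/2 ∧
    ∀ (r r1 r2 : ℝ → ℝ) (ρ e : ℝ), AuxSp r r1 r2 →
    ρ = 1/(2*π) * (∫ x in (0:ℝ)..(2*π), r x) → 0 ≤ e → e ≤ e₁ →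
    (e * ρ)^2 = 2 * π * (∫ x in (0:ℝ)..(2*π), r1 x ^ 2) →
    -2 * (∫ x in (0:ℝ)..(2*π), r2 x * (((r x)⁻¹)^(p+1) * r2 x
      - (p+1) * ((r x)⁻¹)^(p+2) * (r1 x)^2 - 1/p * ((r x)⁻¹)^p))
      ≤ (ρ⁻¹)^(p+1) * (-6 + C * e) * (∫ x in (0:ℝ)..(2*π), r1 x ^ 2) := by
  obtain ⟨B, hB, h⟩ := aux_pow1 (p+1)
  obtain ⟨B', hB', h'⟩ := aux_pow1 (p+2)
  set D : ℝ := (p+1) * (B' + 1) with hD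
  have hD0 : 0 ≤ D := by positivity
  refine ⟨10 * B + 8 * D, 1 / (2 * (B + D + 1)), by positivity, by positivity, ?_,
    fun r r1 r2 ρ e H hρ he he2 hG => ?_⟩
  · rw [div_le_div_iff₀ (by positivity) (by norm_num)]; linarith
  have hpi := Real.pi_pos
  have hρ0 : 0 < ρ := hρ ▸ H.rho_pos
  have hp0 : 0 < (p:ℝ) := by exact_mod_cast hp
  have he3 : e * (2 * (B + D + 1)) ≤ 1 := by
    rwa [le_div_iff₀ (by positivity)] at he2
  have he4 : e ≤ 1/2 := by nlinarith [mul_nonneg he hB, mul_nonneg he hD0]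
  set G := ∫ x in (0:ℝ)..(2*π), r1 x ^ 2 with hGdef
  set A := ∫ x in (0:ℝ)..(2*π), r2 x ^ 2 with hAdef
  have hW : 4 * G ≤ A := aux_wirt H.h1 H.h2 H.c2 H.p0 H.p1 H.cl
  have hG0 : 0 ≤ G := intervalIntegral.integral_nonneg Real.two_pi_pos.le fun x _ => by positivity
  have hA0 : 0 ≤ A := intervalIntegral.integral_nonneg Real.two_pi_pos.le fun x _ => by positivity
  have hck := H.ck
  have hc1 := H.c1
  have hc2 := H.c2
  have hmean : (∫ x in (0:ℝ)..(2*π), r1 x) = 0 := by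
    rw [intervalIntegral.integral_eq_sub_of_hasDerivAt (fun x _ => H.h1 x)
      (hc1.intervalIntegrable _ _), H.p0, sub_self]
  set M := √(2 * π * A) with hM
  have hr1 : ∀ x ∈ Icc 0 (2*π), |r1 x| ≤ M := fun x hx =>
    Real.abs_le_sqrt (aux_sup H.h2 H.c2 hmean hx)
  -- Cauchy-Schwarz
  have hcs : (∫ x in (0:ℝ)..(2*π), |r1 x| * |r2 x|) ≤ √(G * A) := by
    apply Real.le_sqrt_of_sq_le
    have := aux_cs Real.two_pi_pos.le hc1.abs hc2.abs
    simpa only [sq_abs] using this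
  have hMG : ρ⁻¹ * (M * √(G * A)) = e * A := by
    have : M * √(G * A) = (e * ρ) * A := by
      rw [hM, ← Real.sqrt_mul (by positivity)]
      have : 2 * π * A * (G * A) = ((e * ρ) * A)^2 := by
        rw [mul_pow, hG]; ring
      rw [this, Real.sqrt_sq (by positivity)]
    rw [this]; field_simp
  -- rewrite the integral
  have hpart := H.parts p
  have e1 : -2 * (∫ x in (0:ℝ)..(2*π), r2 x * (((r x)⁻¹)^(p+1) * r2 x
      - (p+1) * ((r x)⁻¹)^(p+2) * (r1 x)^2 - 1/p * ((r x)⁻¹)^p)) =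
      ∫ x in (0:ℝ)..(2*π), (-2 * ((r x)⁻¹)^(p+1) * r2 x ^2
        + 2 * (p+1) * ((r x)⁻¹)^(p+2) * (r1 x)^2 * r2 x + 2 * ((r x)⁻¹)^(p+1) * (r1 x)^2) := by
    rw [← intervalIntegral.integral_const_mul]
    rw [← sub_eq_zero, ← intervalIntegral.integral_sub (Continuous.intervalIntegrable (by fun_prop) _ _)
      (Continuous.intervalIntegrable (by fun_prop) _ _)]
    have : ∀ x, -2 * (r2 x * (((r x)⁻¹)^(p+1) * r2 x
      - (p+1) * ((r x)⁻¹)^(p+2) * (r1 x)^2 - 1/p * ((r x)⁻¹)^p)) -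
      (-2 * ((r x)⁻¹)^(p+1) * r2 x ^2
        + 2 * (p+1) * ((r x)⁻¹)^(p+2) * (r1 x)^2 * r2 x + 2 * ((r x)⁻¹)^(p+1) * (r1 x)^2)
      = 2/p * (((r x)⁻¹)^p * r2 x - p * ((r x)⁻¹)^(p+1) * (r1 x)^2) := by
      intro x; field_simp; ring
    simp_rw [this]
    rw [intervalIntegral.integral_const_mul, hpart, mul_zero]
  rw [e1]
  set K := (ρ⁻¹)^(p+1) with hK
  have hK0 : 0 < K := by positivity
  have hpt : ∀ x ∈ Icc 0 (2*π), (-2 * ((r x)⁻¹)^(p+1) * r2 x ^2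
        + 2 * (p+1) * ((r x)⁻¹)^(p+2) * (r1 x)^2 * r2 x + 2 * ((r x)⁻¹)^(p+1) * (r1 x)^2) ≤
      K * (-2 * (1 - B * e)) * r2 x^2 + K * (2 * D * ρ⁻¹ * M) * (|r1 x| * |r2 x|)
        + K * (2 * (1 + B * e)) * r1 x ^2 := by
    intro x hx
    have hcl := H.close hρ he hG hx
    have b1 := abs_le.1 ((h _ (hcl.trans he4)).trans (mul_le_mul_of_nonneg_left hcl hB))
    have b2 := abs_le.1 ((h' _ (hcl.trans he4)).trans (mul_le_mul_of_nonneg_left hcl hB'))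
    have hrx := H.pos x
    have k1 : ((r x)⁻¹)^(p+1) = K * ((r x / ρ)⁻¹)^(p+1) := by
      rw [hK, ← mul_pow]; congr 1; field_simp
    have k2 : ((r x)⁻¹)^(p+2) = K * ρ⁻¹ * ((r x / ρ)⁻¹)^(p+2) := by
      rw [hK, ← pow_succ, ← mul_pow]; congr 1; field_simp
    have u1 : K * (1 - B * e) ≤ ((r x)⁻¹)^(p+1) := by
      rw [k1]; exact mul_le_mul_of_nonneg_left (by linarith [b1.1]) hK0.le
    have u2 : ((r x)⁻¹)^(p+1) ≤ K * (1 + B * e) := by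
      rw [k1]; exact mul_le_mul_of_nonneg_left (by linarith [b1.2]) hK0.le
    have u3 : ((r x)⁻¹)^(p+2) ≤ K * ρ⁻¹ * (B' + 1) := by
      rw [k2]
      have : B' * e ≤ B' := by nlinarith
      exact mul_le_mul_of_nonneg_left (by linarith [b2.2]) (by positivity)
    have u4 : (r1 x)^2 * r2 x ≤ M * (|r1 x| * |r2 x|) := by
      calc (r1 x)^2 * r2 x ≤ |(r1 x)^2 * r2 x| := le_abs_self _
        _ = |r1 x| * (|r1 x| * |r2 x|) := by rw [abs_mul, abs_pow]; ring
        _ ≤ _ := by gcongr; exact hr1 x hx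
    have t1 : K * (1 - B * e) * r2 x ^2 ≤ ((r x)⁻¹)^(p+1) * r2 x ^2 := by gcongr
    have t2 : ((r x)⁻¹)^(p+1) * r1 x ^2 ≤ K * (1 + B * e) * r1 x ^2 := by gcongr
    have t3 : (p+1) * ((r x)⁻¹)^(p+2) * ((r1 x)^2 * r2 x) ≤
        (p+1) * (K * ρ⁻¹ * (B' + 1)) * (M * (|r1 x| * |r2 x|)) := by
      calc _ ≤ (p+1) * ((r x)⁻¹)^(p+2) * (M * (|r1 x| * |r2 x|)) := by gcongr
        _ ≤ _ := by gcongr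
    rw [hD]
    linarith
  have hint := intervalIntegral.integral_mono_on (μ := volume) Real.two_pi_pos.le
    (Continuous.intervalIntegrable (by fun_prop) _ _)
    (Continuous.intervalIntegrable (by fun_prop) _ _) hpt
  refine hint.trans ?_
  rw [intervalIntegral.integral_add (Continuous.intervalIntegrable (by fun_prop) _ _)
     (Continuous.intervalIntegrable (by fun_prop) _ _),
    intervalIntegral.integral_add (Continuous.intervalIntegrable (by fun_prop) _ _)
     (Continuous.intervalIntegrable (by fun_prop) _ _), intervalIntegral.integral_const_mul,
     intervalIntegral.integral_const_mul, intervalIntegral.integral_const_mul, ← hGdef, ← hAdef]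
  have t : K * (2 * D * ρ⁻¹ * M) * (∫ x in (0:ℝ)..(2*π), |r1 x| * |r2 x|) ≤ K * (2 * D * (e * A)) := by
    rw [← hMG]
    have hρi : 0 < ρ⁻¹ := inv_pos.2 hρ0
    calc _ ≤ K * (2 * D * ρ⁻¹ * M) * √(G * A) := by gcongr
      _ = _ := by ring
  have f1 : 0 ≤ 1 - B * e - D * e := by nlinarith
  have f2 : -2 * (1 - B * e) * A + 2 * D * (e * A) + 2 * (1 + B * e) * G ≤
      (-6 + (10 * B + 8 * D) * e) * G := by nlinarith
  nlinarith [mul_le_mul_of_nonneg_left f2 hK0.le]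

structure AuxOde (p : ℕ) (C₁ C₂ e₁ T : ℝ) (g ρ g' ρ' : ℝ → ℝ) : Prop where
  cg : ContinuousOn g (Ico 0 T)
  cρ : ContinuousOn ρ (Ico 0 T)
  dg : ∀ t ∈ Ioo 0 T, HasDerivAt g (g' t) t
  dρ : ∀ t ∈ Ioo 0 T, HasDerivAt ρ (ρ' t) t
  g0 : ∀ t ∈ Ico 0 T, 0 ≤ g t
  ρ0 : ∀ t ∈ Ico 0 T, 0 < ρ t
  ig : ∀ t ∈ Ioo 0 T, ∀ e, 0 ≤ e → e ≤ e₁ → (e * ρ t)^2 = g t →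
    g' t ≤ ((ρ t)⁻¹)^(p+1) * (-6 + C₁ * e) * g t
  iρ : ∀ t ∈ Ioo 0 T, ∀ e, 0 ≤ e → e ≤ e₁ → (e * ρ t)^2 = g t →
    |ρ' t + 1/p * ((ρ t)⁻¹)^p| ≤ C₂ * e^2 * (1/p * ((ρ t)⁻¹)^p)

noncomputable def auxF (g ρ : ℝ → ℝ) (m : ℕ) (K t : ℝ) : ℝ := g t * ((ρ t)⁻¹)^m * Real.exp (K * ρ t)

lemma AuxOde.cF {p : ℕ} {C₁ C₂ e₁ T : ℝ} {g ρ g' ρ' : ℝ → ℝ} (H : AuxOde p C₁ C₂ e₁ T g ρ g' ρ')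
    (m : ℕ) (K : ℝ) : ContinuousOn (auxF g ρ m K) (Ico 0 T) := by
  have h1 := H.cg
  have h2 := H.cρ
  have h3 : ContinuousOn (fun t => (ρ t)⁻¹) (Ico 0 T) := h2.inv₀ fun t ht => (H.ρ0 t ht).ne'
  unfold auxF
  fun_prop

lemma AuxOde.dF {p : ℕ} {C₁ C₂ e₁ T : ℝ} {g ρ g' ρ' : ℝ → ℝ} (H : AuxOde p C₁ C₂ e₁ T g ρ g' ρ')
    (m : ℕ) (K : ℝ) {t : ℝ} (ht : t ∈ Ioo 0 T) : HasDerivAt (auxF g ρ m K)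
    (((ρ t)⁻¹)^m * Real.exp (K * ρ t) * (g' t - m * g t * (ρ' t * (ρ t)⁻¹) + K * g t * ρ' t)) t := by
  have hρ := (H.ρ0 t ⟨ht.1.le, ht.2⟩).ne'
  have h := (((H.dg t ht).mul (((H.dρ t ht).inv hρ).pow m))).mul (((H.dρ t ht).const_mul K).exp)
  refine h.congr_deriv ?_
  cases m with
  | zero => simp; ring
  | succ n =>
    simp only [Pi.inv_apply, Pi.pow_apply, Pi.mul_apply, Nat.add_sub_cancel]
    push_cast; rw [div_eq_mul_inv, ← inv_pow]; ring

lemma AuxOde.antiF {p : ℕ} {C₁ C₂ e₁ T : ℝ} {g ρ g' ρ' : ℝ → ℝ} (H : AuxOde p C₁ C₂ e₁ T g ρ g' ρ')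
    (m : ℕ) (K : ℝ) {s : ℝ} (hs : s ∈ Ico 0 T)
    (h : ∀ t ∈ Ioo 0 s, g' t - m * g t * (ρ' t * (ρ t)⁻¹) + K * g t * ρ' t ≤ 0) :
    auxF g ρ m K s ≤ auxF g ρ m K 0 := by
  have hsub : Icc 0 s ⊆ Ico 0 T := fun x hx => ⟨hx.1, hx.2.trans_lt hs.2⟩
  have : AntitoneOn (auxF g ρ m K) (Icc 0 s) := by
    apply antitoneOn_of_deriv_nonpos (convex_Icc 0 s) ((H.cF m K).mono hsub)
    · intro t ht
      rw [interior_Icc] at ht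
      exact (H.dF m K ⟨ht.1, ht.2.trans hs.2⟩).differentiableAt.differentiableWithinAt
    · intro t ht
      rw [interior_Icc] at ht
      rw [(H.dF m K ⟨ht.1, ht.2.trans hs.2⟩).deriv]
      have hρ := (H.ρ0 t ⟨ht.1.le, ht.2.trans hs.2⟩)
      exact mul_nonpos_of_nonneg_of_nonpos (by positivity) (h t ht)
  exact this ⟨le_rfl, hs.1⟩ ⟨hs.1, le_rfl⟩ hs.1

/-- smallness condition -/
def AuxSm (C₁ C₂ e₁ e₀ : ℝ) : Prop :=
  0 < e₀ ∧ e₀ ≤ e₁ ∧ e₀ ≤ 1/2 ∧ C₁ * e₀ ≤ 1/2 ∧ C₂ * e₀ ^ 2 ≤ 1/8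

lemma aux_sm (C₁ C₂ e₁ : ℝ) (h1 : 0 ≤ C₁) (h2 : 0 ≤ C₂) (h3 : 0 < e₁) : ∃ e₀, AuxSm C₁ C₂ e₁ e₀ := by
  refine ⟨min e₁ (1 / (2 * C₁ + 8 * C₂ + 2)), ?_, min_le_left _ _, ?_, ?_, ?_⟩
  · have : 0 < 1 / (2 * C₁ + 8 * C₂ + 2) := by positivity
    exact lt_min h3 this
  all_goals
    have ha : min e₁ (1 / (2 * C₁ + 8 * C₂ + 2)) ≤ 1 / (2 * C₁ + 8 * C₂ + 2) := min_le_right _ _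
    have hb : 0 < min e₁ (1 / (2 * C₁ + 8 * C₂ + 2)) := lt_min h3 (by positivity)
    set e := min e₁ (1 / (2 * C₁ + 8 * C₂ + 2))
    rw [le_div_iff₀ (by positivity)] at ha
    have hc := mul_nonneg hb.le h1
    have hd := mul_nonneg hb.le h2
  · linarith
  · linarith
  · have : e ≤ 1 := by linarith
    nlinarith

section
variable {p : ℕ} {C₁ C₂ e₁ T e₀ : ℝ} {g ρ g' ρ' : ℝ → ℝ}

lemma AuxOde.getE (H : AuxOde p C₁ C₂ e₁ T g ρ g' ρ') (hs : AuxSm C₁ C₂ e₁ e₀) {t : ℝ}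
    (ht : t ∈ Ico 0 T) (hg : g t ≤ (e₀ * ρ t)^2) : ∃ e, 0 ≤ e ∧ e ≤ e₀ ∧ (e * ρ t)^2 = g t := by
  have hρ := H.ρ0 t ht
  refine ⟨√(g t) / ρ t, by positivity, ?_, ?_⟩
  · rw [div_le_iff₀ hρ]
    exact Real.sqrt_le_iff.2 ⟨by have := hs.1; positivity, hg⟩
  · rw [div_mul_cancel₀ _ hρ.ne', Real.sq_sqrt (H.g0 t ht)]

/-- basic bounds at a good time -/
lemma AuxOde.basic (H : AuxOde p C₁ C₂ e₁ T g ρ g' ρ') (hp : 1 ≤ p) (hC2 : 0 ≤ C₂)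
    (hs : AuxSm C₁ C₂ e₁ e₀) {t : ℝ} (ht : t ∈ Ioo 0 T) {e : ℝ} (he : 0 ≤ e) (he0 : e ≤ e₀)
    (heg : (e * ρ t)^2 = g t) :
    -(1/p * ((ρ t)⁻¹)^(p+1) * (1 + C₂ * e^2)) ≤ ρ' t * (ρ t)⁻¹ ∧
    ρ' t ≤ - (1/(2*p) * ((ρ t)⁻¹)^p) ∧ C₂ * e^2 ≤ 1/8 := by
  obtain ⟨a1, a2, a3, a4, a5⟩ := hs
  have hp0 : 0 < (p:ℝ) := by exact_mod_cast hp
  have hρ := H.ρ0 t ⟨ht.1.le, ht.2⟩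
  have hρi : 0 < (ρ t)⁻¹ := inv_pos.2 hρ
  have h := abs_le.1 (H.iρ t ht e he (he0.trans a2) heg)
  have h8 : C₂ * e^2 ≤ 1/8 := le_trans (by gcongr) a5
  refine ⟨?_, ?_, h8⟩
  · have : -(1/p * ((ρ t)⁻¹)^p * (1 + C₂ * e^2)) ≤ ρ' t := by linarith [h.1]
    have := mul_le_mul_of_nonneg_right this hρi.le
    rw [pow_succ]
    linarith
  · have hpos : 0 < 1/(p:ℝ) * ((ρ t)⁻¹)^p := by positivity
    have : 1/(2*(p:ℝ)) * ((ρ t)⁻¹)^p = 1/2 * (1/(p:ℝ) * ((ρ t)⁻¹)^p) := by field_simp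
    rw [this]
    nlinarith [h.2]

lemma AuxOde.dec (H : AuxOde p C₁ C₂ e₁ T g ρ g' ρ') (hp : 1 ≤ p) (hC1 : 0 ≤ C₁) (hC2 : 0 ≤ C₂)
    (hs : AuxSm C₁ C₂ e₁ e₀) {t : ℝ} (ht : t ∈ Ioo 0 T) (hg : g t ≤ (e₀ * ρ t)^2)
    (m : ℕ) (hm : m ≤ 4) :
    g' t - m * g t * (ρ' t * (ρ t)⁻¹) + 0 * g t * ρ' t ≤ 0 := by
  obtain ⟨e, he, he0, heg⟩ := H.getE hs ⟨ht.1.le, ht.2⟩ hg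
  obtain ⟨b1, b2, b3⟩ := H.basic hp hC2 hs ht he he0 heg
  have hp0 : 1 ≤ (p:ℝ) := by exact_mod_cast hp
  have hρ := H.ρ0 t ⟨ht.1.le, ht.2⟩
  have hρi : 0 < (ρ t)⁻¹ := inv_pos.2 hρ
  obtain ⟨a1, a2, a3, a4, a5⟩ := hs
  have c1 := H.ig t ht e he (he0.trans a2) heg
  have hg0 := H.g0 t ⟨ht.1.le, ht.2⟩
  set a := ((ρ t)⁻¹)^(p+1) with ha
  have ha0 : 0 < a := by positivity
  have hm' : (m:ℝ) ≤ 4 := by exact_mod_cast hm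
  have d1 : - (ρ' t * (ρ t)⁻¹) ≤ 9/8 * a := by
    have : 1/(p:ℝ) * a ≤ a := by
      rw [div_mul_eq_mul_div, one_mul, div_le_iff₀ (by linarith)]; nlinarith
    have h9 : 1 + C₂ * e^2 ≤ 9/8 := by linarith
    have : 1/(p:ℝ) * a * (1 + C₂ * e^2) ≤ a * (9/8) :=
      mul_le_mul this h9 (by positivity) ha0.le
    linarith
  have d2 : (m:ℝ) * (- (ρ' t * (ρ t)⁻¹)) ≤ 4 * (9/8 * a) := by
    calc (m:ℝ) * (- (ρ' t * (ρ t)⁻¹)) ≤ m * (9/8 * a) := by gcongr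
      _ ≤ _ := by gcongr
  have d3 : C₁ * e ≤ 1/2 := le_trans (by gcongr) a4
  have d4 : g t * ((m:ℝ) * (- (ρ' t * (ρ t)⁻¹))) ≤ g t * (4 * (9/8 * a)) := by gcongr
  have d5 : a * (-6 + C₁ * e) * g t ≤ a * (-6 + 1/2) * g t := by gcongr
  nlinarith [mul_nonneg ha0.le hg0]

lemma auxF_zero (m : ℕ) (t : ℝ) : auxF g ρ m 0 t = g t * ((ρ t)⁻¹)^m := by simp [auxF]

lemma AuxOde.boot (H : AuxOde p C₁ C₂ e₁ T g ρ g' ρ') (hp : 1 ≤ p) (hC1 : 0 ≤ C₁) (hC2 : 0 ≤ C₂)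
    (hs : AuxSm C₁ C₂ e₁ e₀) (hT : 0 < T) (h0 : g 0 < (e₀ * ρ 0)^2) :
    ∀ t ∈ Ico 0 T, g t ≤ (e₀ * ρ t)^2 := by
  have equiv : ∀ t ∈ Ico 0 T, (g t < (e₀ * ρ t)^2 ↔ auxF g ρ 2 0 t < e₀^2) := by
    intro t ht
    have hρ := H.ρ0 t ht
    rw [auxF_zero, inv_pow, ← div_eq_mul_inv, div_lt_iff₀ (by positivity), mul_pow]
  by_contra hcon
  push Not at hcon
  obtain ⟨t₁, ht₁, hbad⟩ := hcon
  have hsub : Icc 0 t₁ ⊆ Ico 0 T := fun x hx => ⟨hx.1, hx.2.trans_lt ht₁.2⟩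
  have hc : ContinuousOn (auxF g ρ 2 0) (Icc 0 t₁) := (H.cF 2 0).mono hsub
  set S := Icc 0 t₁ ∩ (auxF g ρ 2 0) ⁻¹' (Ici (e₀^2)) with hS
  have hSc : IsCompact S := isCompact_Icc.of_isClosed_subset
    (hc.preimage_isClosed_of_isClosed isClosed_Icc isClosed_Ici) inter_subset_left
  have hSn : S.Nonempty := ⟨t₁, ⟨ht₁.1, le_rfl⟩, by
    simp only [mem_preimage, mem_Ici]
    by_contra hlt
    have := (equiv t₁ ht₁).2 (not_le.1 hlt)
    linarith⟩
  obtain ⟨s, hsS, hmin⟩ := hSc.exists_isLeast hSn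
  have hsT := hsub hsS.1
  have hle := H.antiF 2 0 hsT (by
    intro t ht
    refine H.dec hp hC1 hC2 hs ⟨ht.1, ht.2.trans hsT.2⟩ ?_ 2 (by norm_num)
    have htT : t ∈ Ico 0 T := ⟨ht.1.le, ht.2.trans hsT.2⟩
    refine ((equiv t htT).2 ?_).le
    by_contra hge
    have : t ∈ S := ⟨⟨ht.1.le, ht.2.le.trans hsS.1.2⟩, not_lt.1 hge⟩
    exact absurd (hmin this) (not_le.2 ht.2))
  have h0' := (equiv 0 ⟨le_rfl, hT⟩).1 h0
  have h1' : e₀^2 ≤ auxF g ρ 2 0 s := hsS.2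
  linarith

lemma AuxOde.decay (H : AuxOde p C₁ C₂ e₁ T g ρ g' ρ') (hp : 1 ≤ p) (hC1 : 0 ≤ C₁) (hC2 : 0 ≤ C₂)
    (hs : AuxSm C₁ C₂ e₁ e₀) (hT : 0 < T) (hall : ∀ t ∈ Ico 0 T, g t ≤ (e₀ * ρ t)^2) :
    ∃ C, 0 ≤ C ∧ ∀ t ∈ Ico 0 T, g t ≤ C * (ρ t)^(6*p) := by
  have hp0 : 1 ≤ (p:ℝ) := by exact_mod_cast hp
  have h4 : ∀ t ∈ Ico 0 T, g t * ((ρ t)⁻¹)^4 ≤ g 0 * ((ρ 0)⁻¹)^4 := by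
    intro t ht
    have := H.antiF 4 0 ht (fun s hs' =>
      H.dec hp hC1 hC2 hs ⟨hs'.1, hs'.2.trans ht.2⟩ (hall s ⟨hs'.1.le, hs'.2.trans ht.2⟩) 4 le_rfl)
    rwa [auxF_zero, auxF_zero] at this
  have hB0 : 0 ≤ g 0 * ((ρ 0)⁻¹)^4 := by
    have := H.g0 0 ⟨le_rfl, hT⟩
    have := H.ρ0 0 ⟨le_rfl, hT⟩
    positivity
  set B := √(g 0 * ((ρ 0)⁻¹)^4) with hB
  have hBn : 0 ≤ B := Real.sqrt_nonneg _
  set K := 2 * p * ((C₁ + 6 * C₂) * B) with hK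
  have hKn : 0 ≤ K := by positivity
  refine ⟨auxF g ρ (6*p) K 0, ?_, ?_⟩
  · have := H.g0 0 ⟨le_rfl, hT⟩
    have := H.ρ0 0 ⟨le_rfl, hT⟩
    unfold auxF; positivity
  intro t ht
  have main := H.antiF (6*p) K ht (by
    intro s hs'
    have hsT : s ∈ Ioo 0 T := ⟨hs'.1, hs'.2.trans ht.2⟩
    have hsT' : s ∈ Ico 0 T := ⟨hsT.1.le, hsT.2⟩
    obtain ⟨e, he, he0, heg⟩ := H.getE hs hsT' (hall s hsT')
    obtain ⟨b1, b2, b3⟩ := H.basic hp hC2 hs hsT he he0 heg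
    obtain ⟨a1, a2, a3, a4, a5⟩ := hs
    have c1 := H.ig s hsT e he (he0.trans a2) heg
    have hg0 := H.g0 s hsT'
    have hρ := H.ρ0 s hsT'
    have heB : e ≤ B * ρ s := by
      have h := h4 s hsT'
      rw [← heg, ← Real.sq_sqrt hB0, ← hB] at h
      have h' : (e * ρ s)^2 ≤ B^2 * (ρ s)^4 := by
        rw [inv_pow, ← div_eq_mul_inv, div_le_iff₀ (by positivity)] at h
        exact h
      have h'' : e^2 ≤ (B * ρ s)^2 := by
        have h2 : 0 < ρ s ^2 := by positivity
        refine le_of_mul_le_mul_right ?_ h2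
        nlinarith
      exact le_of_sq_le_sq h'' (by positivity)
    set a := ((ρ s)⁻¹)^(p+1) with ha
    have ha0 : 0 < a := by positivity
    have haρ : ((ρ s)⁻¹)^p = a * ρ s := by
      rw [ha, pow_succ, mul_assoc, inv_mul_cancel₀ hρ.ne', mul_one]
    rw [haρ] at b2
    have d1 : (6*p:ℝ) * (- (ρ' s * (ρ s)⁻¹)) ≤ 6 * a * (1 + C₂ * e^2) := by
      calc (6*p:ℝ) * (- (ρ' s * (ρ s)⁻¹)) ≤ (6*p:ℝ) * (1/p * a * (1 + C₂ * e^2)) := by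
            gcongr; linarith
        _ = _ := by field_simp
    have d2 : K * ρ' s ≤ - (a * ((C₁ + 6 * C₂) * (B * ρ s))) := by
      calc K * ρ' s ≤ K * - (1/(2*p) * (a * ρ s)) := by gcongr
        _ = _ := by rw [hK]; field_simp
    have d3 : C₁ * e + 6 * (C₂ * e^2) ≤ (C₁ + 6 * C₂) * (B * ρ s) := by
      have : e^2 ≤ e := by nlinarith
      calc C₁ * e + 6 * (C₂ * e^2) ≤ C₁ * e + 6 * (C₂ * e) := by gcongr
        _ = (C₁ + 6 * C₂) * e := by ring
        _ ≤ _ := by gcongr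
    have d4 := mul_le_mul_of_nonneg_left d3 ha0.le
    have d5 : a * (-6 + C₁ * e) + (6*p:ℝ) * (- (ρ' s * (ρ s)⁻¹)) + K * ρ' s ≤ 0 := by linarith
    have d6 := mul_nonpos_of_nonneg_of_nonpos hg0 d5
    push_cast
    linarith)
  have hρ := H.ρ0 t ht
  have hg0 := H.g0 t ht
  have h1 : 1 ≤ Real.exp (K * ρ t) := Real.one_le_exp (by positivity)
  have : g t * ((ρ t)⁻¹)^(6*p) ≤ auxF g ρ (6*p) K t := by
    unfold auxF
    exact le_mul_of_one_le_right (by positivity) h1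
  have := this.trans main
  rwa [inv_pow, ← div_eq_mul_inv, div_le_iff₀ (by positivity)] at this

lemma AuxOde.zbound (H : AuxOde p C₁ C₂ e₁ T g ρ g' ρ') (hp : 1 ≤ p)
    (hlim : Tendsto ρ (nhdsWithin T (Iio T)) (nhds 0)) {t : ℝ} (ht : t ∈ Ico 0 T) (B : ℝ)
    (hB : ∀ s ∈ Ioo t T, |(p+1) * (ρ s)^p * ρ' s + (p+1)/p| ≤ B) :
    |(ρ t)^(p+1) - (p+1)/p * (T - t)| ≤ B * (T - t) := by
  have key : ∀ s ∈ Ioo t T, |((ρ s)^(p+1) + (p+1)/p * s) - ((ρ t)^(p+1) + (p+1)/p * t)| ≤ B * (s - t) := by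
    intro s hs
    obtain ⟨c, hc, hc'⟩ := exists_hasDerivAt_eq_slope (fun s => (ρ s)^(p+1) + ((p:ℝ)+1)/p * s)
      (fun s => (p+1) * (ρ s)^p * ρ' s + (p+1)/p) hs.1
      (by
        have : ContinuousOn ρ (Icc t s) := H.cρ.mono fun x hx => ⟨ht.1.trans hx.1, hx.2.trans_lt hs.2⟩
        fun_prop)
      (by
        intro x hx
        have h1 := H.dρ x ⟨ht.1.trans_lt hx.1, hx.2.trans hs.2⟩
        have h2 := (h1.pow (p+1)).add ((hasDerivAt_id x).const_mul (((p:ℝ)+1)/p))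
        refine h2.congr_deriv ?_
        simp)
    have h := hB c ⟨hc.1, hc.2.trans hs.2⟩
    rw [hc', abs_div, abs_of_pos (sub_pos.2 hs.1), div_le_iff₀ (sub_pos.2 hs.1)] at h
    exact h
  have hl : Tendsto (fun s => |((ρ s)^(p+1) + (p+1)/p * s) - ((ρ t)^(p+1) + (p+1)/p * t)|)
      (nhdsWithin T (Iio T)) (nhds |((0:ℝ)^(p+1) + (p+1)/p * T) - ((ρ t)^(p+1) + (p+1)/p * t)|) := by
    have hid : Tendsto (fun s : ℝ => s) (nhdsWithin T (Iio T)) (nhds T) := nhdsWithin_le_nhds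
    exact (((hlim.pow (p+1)).add (hid.const_mul _)).sub_const _).abs
  have hr : Tendsto (fun s => B * (s - t)) (nhdsWithin T (Iio T)) (nhds (B * (T - t))) := by
    have hid : Tendsto (fun s : ℝ => s) (nhdsWithin T (Iio T)) (nhds T) := nhdsWithin_le_nhds
    exact (hid.sub_const _).const_mul _
  have := le_of_tendsto_of_tendsto hl hr (by
    filter_upwards [Ioo_mem_nhdsLT ht.2] with s hs using key s hs)
  rw [abs_sub_comm]
  have e : ((0:ℝ)^(p+1) + (p+1)/p * T) - ((ρ t)^(p+1) + (p+1)/p * t) =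
      (p+1)/p * (T - t) - (ρ t)^(p+1) := by
    rw [zero_pow (by omega)]
    ring
  rwa [e] at this

lemma AuxOde.final (H : AuxOde p C₁ C₂ e₁ T g ρ g' ρ') (hp : 1 ≤ p) (hC1 : 0 ≤ C₁) (hC2 : 0 ≤ C₂)
    (hs : AuxSm C₁ C₂ e₁ e₀) (hT : 0 < T) (hall : ∀ t ∈ Ico 0 T, g t ≤ (e₀ * ρ t)^2)
    (hlim : Tendsto ρ (nhdsWithin T (Iio T)) (nhds 0)) :
    ∃ C, 0 ≤ C ∧ ∀ t ∈ Ico 0 T, (∀ e, (e * ρ t)^2 = g t → e^2 ≤ C * (ρ t)^(6*p-2)) ∧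
      |(ρ t)^(p+1) - (p+1)/p * (T - t)| ≤ C * (ρ t)^(6*p-2) * (T - t) ∧
      |(ρ t)^(p+1) - (p+1)/p * (T - t)| ≤ 1/2 * ((p+1)/p * (T - t)) := by
  obtain ⟨C, hC, hdec⟩ := H.decay hp hC1 hC2 hs hT hall
  have hp0 : 1 ≤ (p:ℝ) := by exact_mod_cast hp
  have hE : ∀ t ∈ Ico 0 T, ∀ e, (e * ρ t)^2 = g t → e^2 ≤ C * (ρ t)^(6*p-2) := by
    intro t ht e he
    have h := hdec t ht
    have hρ := H.ρ0 t ht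
    rw [← he, show 6 * p = (6*p-2) + 2 by omega, pow_add, mul_pow, ← mul_assoc] at h
    exact le_of_mul_le_mul_right h (by positivity)
  have hZ : ∀ s ∈ Ioo 0 T, ∀ e, 0 ≤ e → e ≤ e₀ → (e * ρ s)^2 = g s →
      |(p+1) * (ρ s)^p * ρ' s + (p+1)/p| ≤ (p+1)/p * (C₂ * e^2) := by
    intro s hsT e he he0 heg
    have h := H.iρ s hsT e he (he0.trans hs.2.1) heg
    have hρ := H.ρ0 s ⟨hsT.1.le, hsT.2⟩
    have e1 : (p+1) * (ρ s)^p * ρ' s + ((p:ℝ)+1)/p =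
        ((p+1) * (ρ s)^p) * (ρ' s + 1/p * ((ρ s)⁻¹)^p) := by
      rw [inv_pow]; field_simp
    rw [e1, abs_mul, abs_of_pos (by positivity)]
    calc _ ≤ ((p+1) * (ρ s)^p) * (C₂ * e^2 * (1/p * ((ρ s)⁻¹)^p)) := by gcongr
      _ = _ := by rw [inv_pow]; field_simp
  have hanti : ∀ t ∈ Ico 0 T, ∀ s ∈ Ioo t T, ρ s ≤ ρ t := by
    intro t ht s hs'
    have : AntitoneOn ρ (Icc t s) := by
      apply antitoneOn_of_deriv_nonpos (convex_Icc t s)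
        (H.cρ.mono fun x hx => ⟨ht.1.trans hx.1, hx.2.trans_lt hs'.2⟩)
      · intro x hx
        rw [interior_Icc] at hx
        exact (H.dρ x ⟨ht.1.trans_lt hx.1, hx.2.trans hs'.2⟩).differentiableAt.differentiableWithinAt
      · intro x hx
        rw [interior_Icc] at hx
        have hxT : x ∈ Ioo 0 T := ⟨ht.1.trans_lt hx.1, hx.2.trans hs'.2⟩
        have hxT' : x ∈ Ico 0 T := ⟨hxT.1.le, hxT.2⟩
        rw [(H.dρ x hxT).deriv]
        obtain ⟨e, he, he0, heg⟩ := H.getE hs hxT' (hall x hxT')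
        obtain ⟨b1, b2, b3⟩ := H.basic hp hC2 hs hxT he he0 heg
        refine b2.trans ?_
        have := H.ρ0 x hxT'
        simp only [Left.neg_nonpos_iff]
        positivity
    exact this ⟨le_rfl, hs'.1.le⟩ ⟨hs'.1.le, le_rfl⟩ hs'.1.le
  refine ⟨C + (p+1)/p * (C₂ * C), by positivity, fun t ht => ⟨?_, ?_, ?_⟩⟩
  · intro e he
    have := H.ρ0 t ht
    refine (hE t ht e he).trans ?_
    gcongr
    have : 0 ≤ ((p:ℝ)+1)/p * (C₂ * C) := by positivity
    linarith
  · have := H.zbound hp hlim ht ((p+1)/p * (C₂ * (C * (ρ t)^(6*p-2)))) (by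
      intro s hs'
      have hsT : s ∈ Ioo 0 T := ⟨ht.1.trans_lt hs'.1, hs'.2⟩
      have hsT' : s ∈ Ico 0 T := ⟨hsT.1.le, hsT.2⟩
      obtain ⟨e, he, he0, heg⟩ := H.getE hs hsT' (hall s hsT')
      refine (hZ s hsT e he he0 heg).trans ?_
      have h1 := hE s hsT' e heg
      have h2 := hanti t ht s hs'
      have h3 := H.ρ0 s hsT'
      gcongr
      refine h1.trans ?_
      gcongr)
    refine this.trans ?_
    have h3 := H.ρ0 t ht
    have : 0 ≤ T - t := by linarith [ht.2]
    refine mul_le_mul_of_nonneg_right ?_ this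
    rw [add_mul]
    have : 0 ≤ C * (ρ t)^(6*p-2) := by positivity
    linarith
  · have := H.zbound hp hlim ht ((p+1)/p * (1/2)) (by
      intro s hs'
      have hsT : s ∈ Ioo 0 T := ⟨ht.1.trans_lt hs'.1, hs'.2⟩
      have hsT' : s ∈ Ico 0 T := ⟨hsT.1.le, hsT.2⟩
      obtain ⟨e, he, he0, heg⟩ := H.getE hs hsT' (hall s hsT')
      obtain ⟨b1, b2, b3⟩ := H.basic hp hC2 hs hsT he he0 heg
      refine (hZ s hsT e he he0 heg).trans ?_
      gcongr
      linarith)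
    linarith

end

def auxS (T : ℝ) : Set (ℝ × ℝ) := Set.univ ×ˢ Set.Ico 0 T

noncomputable def auxD1 (T : ℝ) (F : ℝ × ℝ → ℝ) (q : ℝ × ℝ) : ℝ := fderivWithin ℝ F (auxS T) q (1, 0)
noncomputable def auxD2 (T : ℝ) (F : ℝ × ℝ → ℝ) (q : ℝ × ℝ) : ℝ := fderivWithin ℝ F (auxS T) q (0, 1)

lemma auxS_ud (T : ℝ) : UniqueDiffOn ℝ (auxS T) := uniqueDiffOn_univ.prod (uniqueDiffOn_Ico 0 T)

lemma auxS_nhds {T θ t : ℝ} (ht : t ∈ Ioo 0 T) : auxS T ∈ nhds (θ, t) :=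
  prod_mem_nhds univ_mem (Ico_mem_nhds ht.1 ht.2)

lemma auxD1_smooth {T : ℝ} {F : ℝ × ℝ → ℝ} (hF : ContDiffOn ℝ (⊤ : ℕ∞) F (auxS T)) :
    ContDiffOn ℝ (⊤ : ℕ∞) (auxD1 T F) (auxS T) :=
  (hF.fderivWithin (auxS_ud T) (m := (⊤ : ℕ∞)) (by simp)).clm_apply contDiffOn_const

lemma auxD2_smooth {T : ℝ} {F : ℝ × ℝ → ℝ} (hF : ContDiffOn ℝ (⊤ : ℕ∞) F (auxS T)) :
    ContDiffOn ℝ (⊤ : ℕ∞) (auxD2 T F) (auxS T) :=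
  (hF.fderivWithin (auxS_ud T) (m := (⊤ : ℕ∞)) (by simp)).clm_apply contDiffOn_const

lemma auxD1_has {T : ℝ} {F : ℝ × ℝ → ℝ} (hF : ContDiffOn ℝ (⊤ : ℕ∞) F (auxS T)) (θ : ℝ) {t : ℝ}
    (ht : t ∈ Ico 0 T) : HasDerivAt (fun x => F (x, t)) (auxD1 T F (θ, t)) θ := by
  have h := ((hF (θ, t) ⟨mem_univ _, ht⟩).differentiableWithinAt (by simp)).hasFDerivWithinAt
  have h2 : HasDerivWithinAt (fun x : ℝ => (x, t)) ((1:ℝ), (0:ℝ)) univ θ :=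
    ((hasDerivAt_id θ).prodMk (hasDerivAt_const θ t)).hasDerivWithinAt
  have hm : MapsTo (fun x : ℝ => (x, t)) univ (auxS T) := fun x _ => ⟨mem_univ _, ht⟩
  have := h.comp_hasDerivWithinAt θ h2 hm
  rw [hasDerivWithinAt_univ] at this
  exact this

lemma auxD2_has {T : ℝ} {F : ℝ × ℝ → ℝ} (hF : ContDiffOn ℝ (⊤ : ℕ∞) F (auxS T)) (θ : ℝ) {t : ℝ}
    (ht : t ∈ Ioo 0 T) : HasDerivAt (fun x => F (θ, x)) (auxD2 T F (θ, t)) t := by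
  have h := (((hF (θ, t) ⟨mem_univ _, ht.1.le, ht.2⟩).differentiableWithinAt
    (by simp)).hasFDerivWithinAt).hasFDerivAt (auxS_nhds ht)
  have h2 : HasDerivAt (fun x : ℝ => (θ, x)) ((0:ℝ), (1:ℝ)) t :=
    ((hasDerivAt_const t θ).prodMk (hasDerivAt_id t))
  exact h.comp_hasDerivAt t h2

lemma auxD_symm {T : ℝ} {F : ℝ × ℝ → ℝ} (hF : ContDiffOn ℝ (⊤ : ℕ∞) F (auxS T)) (θ : ℝ) {t : ℝ}
    (ht : t ∈ Ioo 0 T) : auxD2 T (auxD1 T F) (θ, t) = auxD1 T (auxD2 T F) (θ, t) := by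
  have hm : (θ, t) ∈ auxS T := ⟨mem_univ _, ht.1.le, ht.2⟩
  have hs := (hF (θ, t) hm).isSymmSndFDerivWithinAt (by simp; exact WithTop.coe_le_coe.2 (le_top : (2:ℕ∞) ≤ ⊤)) (auxS_ud T)
    (subset_closure (mem_interior_iff_mem_nhds.2 (auxS_nhds ht))) hm
  have hd : DifferentiableWithinAt ℝ (fderivWithin ℝ F (auxS T)) (auxS T) (θ, t) :=
    ((hF.fderivWithin (auxS_ud T) (m := (⊤ : ℕ∞)) (by simp)) _ hm).differentiableWithinAt (by simp)
  have key : ∀ u v : ℝ × ℝ, fderivWithin ℝ (fun q => fderivWithin ℝ F (auxS T) q u) (auxS T) (θ, t) v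
      = fderivWithin ℝ (fderivWithin ℝ F (auxS T)) (auxS T) (θ, t) v u := by
    intro u v
    have := (hd.hasFDerivWithinAt.clm_apply (hasFDerivWithinAt_const u _ _)).fderivWithin
      ((auxS_ud T) _ hm)
    rw [this]
    simp
  unfold auxD1 auxD2
  rw [key, key]
  exact hs _ _

lemma aux_slice {T : ℝ} {F : ℝ × ℝ → ℝ} (hF : ContinuousOn F (auxS T)) {t : ℝ} (ht : t ∈ Ico 0 T) :
    Continuous (fun x => F (x, t)) := by
  rw [← continuousOn_univ]
  exact hF.comp (Continuous.continuousOn (by fun_prop)) (fun x _ => ⟨mem_univ _, ht⟩)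

lemma aux_cint {T : ℝ} {F : ℝ × ℝ → ℝ} (hF : ContinuousOn F (auxS T)) :
    ContinuousOn (fun t => ∫ x in (0:ℝ)..(2*π), F (x, t)) (Ico 0 T) := by
  intro t ht
  obtain ⟨T1, hT1, hT1'⟩ := exists_between ht.2
  have h1 : Continuous (fun t => ∫ x in (0:ℝ)..(2*π), F (x, max 0 (min t T1))) := by
    apply intervalIntegral.continuous_parametric_intervalIntegral_of_continuous'
    rw [← continuousOn_univ]
    refine hF.comp (f := fun q : ℝ × ℝ => (q.2, max 0 (min q.1 T1)))
      (Continuous.continuousOn (by fun_prop)) (fun q _ => ⟨mem_univ _, le_max_left _ _, ?_⟩)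
    exact max_lt (ht.1.trans_lt ht.2) ((min_le_right _ _).trans_lt hT1')
  refine h1.continuousWithinAt.congr_of_eventuallyEq ?_ ?_
  · filter_upwards [self_mem_nhdsWithin, nhdsWithin_le_nhds (Iio_mem_nhds hT1)] with s hs hs'
    rw [min_eq_left (le_of_lt hs'), max_eq_right hs.1]
  · rw [min_eq_left hT1.le, max_eq_right ht.1]

lemma aux_leib {T : ℝ} {F F' : ℝ × ℝ → ℝ} (hF : ContinuousOn F (auxS T))
    (hF' : ContinuousOn F' (auxS T))
    (hd : ∀ θ, ∀ t ∈ Ioo 0 T, HasDerivAt (fun s => F (θ, s)) (F' (θ, t)) t) {t : ℝ}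
    (ht : t ∈ Ioo 0 T) :
    HasDerivAt (fun t => ∫ x in (0:ℝ)..(2*π), F (x, t)) (∫ x in (0:ℝ)..(2*π), F' (x, t)) t := by
  obtain ⟨a, ha, ha'⟩ := exists_between ht.1
  obtain ⟨b, hb, hb'⟩ := exists_between ht.2
  have hsub : Icc (0:ℝ) (2*π) ×ˢ Icc a b ⊆ auxS T :=
    fun q hq => ⟨mem_univ _, ha.le.trans hq.2.1, hq.2.2.trans_lt hb'⟩
  obtain ⟨C, hC⟩ := (isCompact_Icc.prod isCompact_Icc).exists_bound_of_continuousOn (hF'.mono hsub)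
  refine (intervalIntegral.hasDerivAt_integral_of_dominated_loc_of_deriv_le
    (F := fun t x => F (x, t)) (F' := fun t x => F' (x, t)) (bound := fun _ => C)
    (s := Icc a b) (Icc_mem_nhds ha' hb) ?_ ?_ ?_ ?_ ?_ ?_).2
  · filter_upwards [Ioo_mem_nhds ht.1 ht.2] with s hs
    exact (aux_slice hF ⟨hs.1.le, hs.2⟩).aestronglyMeasurable
  · exact (aux_slice hF ⟨ht.1.le, ht.2⟩).intervalIntegrable _ _
  · exact (aux_slice hF' ⟨ht.1.le, ht.2⟩).aestronglyMeasurable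
  · refine Eventually.of_forall fun x hx s hs => hC (x, s) ⟨?_, hs⟩
    rw [uIoc_of_le Real.two_pi_pos.le] at hx
    exact Ioc_subset_Icc_self hx
  · exact continuous_const.intervalIntegrable _ _
  · exact Eventually.of_forall fun x _ s hs => hd x s ⟨ha.trans_le hs.1, hs.2.trans_lt hb'⟩

structure AuxPde (p : ℕ) (T : ℝ) (R : ℝ × ℝ → ℝ) : Prop where
  sm : ContDiffOn ℝ (⊤ : ℕ∞) R (auxS T)
  per : ∀ θ t, R (θ + 2*π, t) = R (θ, t)
  pos : ∀ θ, ∀ t ∈ Ico 0 T, 0 < R (θ, t)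
  cl : ∀ t ∈ Ico 0 T, (∫ x in (0:ℝ)..(2*π), Complex.exp (Complex.I * x) * (R (x, t) : ℂ)) = 0
  pde : ∀ θ, ∀ t ∈ Ioo 0 T, HasDerivAt (fun s => R (θ, s))
    (((R (θ, t))⁻¹)^(p+1) * auxD1 T (auxD1 T R) (θ, t)
      - (p+1) * ((R (θ, t))⁻¹)^(p+2) * (auxD1 T R (θ, t))^2 - 1/p * ((R (θ, t))⁻¹)^p) t

section
variable {p : ℕ} {T : ℝ} {R : ℝ × ℝ → ℝ}

lemma aux_perD1 {F : ℝ × ℝ → ℝ} (hF : ContDiffOn ℝ (⊤ : ℕ∞) F (auxS T))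
    (hper : ∀ θ, ∀ t ∈ Ico 0 T, F (θ + 2*π, t) = F (θ, t)) (θ : ℝ) {t : ℝ} (ht : t ∈ Ico 0 T) :
    auxD1 T F (θ + 2*π, t) = auxD1 T F (θ, t) := by
  have h1 := (auxD1_has hF (θ + 2*π) ht).comp_add_const θ (2*π)
  have h2 := auxD1_has hF θ ht
  simp only [hper _ _ ht] at h1
  exact h1.unique h2

lemma AuxPde.sp (H : AuxPde p T R) {t : ℝ} (ht : t ∈ Ico 0 T) :
    AuxSp (fun x => R (x, t)) (fun x => auxD1 T R (x, t)) (fun x => auxD1 T (auxD1 T R) (x, t)) where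
  h1 := fun x => auxD1_has H.sm x ht
  h2 := fun x => auxD1_has (auxD1_smooth H.sm) x ht
  c2 := aux_slice (auxD1_smooth (auxD1_smooth H.sm)).continuousOn ht
  p0 := by have := H.per 0 t; simpa using this
  p1 := by have := aux_perD1 H.sm (fun θ t _ => H.per θ t) 0 ht; simpa using this
  pos := fun x => H.pos x t ht
  cl := H.cl t ht

lemma AuxPde.dG (H : AuxPde p T R) {t : ℝ} (ht : t ∈ Ioo 0 T) :
    HasDerivAt (fun t => ∫ x in (0:ℝ)..(2*π), (auxD1 T R (x, t))^2)
      (-2 * (∫ x in (0:ℝ)..(2*π), auxD1 T (auxD1 T R) (x, t) * (((R (x, t))⁻¹)^(p+1) *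
       auxD1 T (auxD1 T R) (x, t)
      - (p+1) * ((R (x, t))⁻¹)^(p+2) * (auxD1 T R (x, t))^2 - 1/p * ((R (x, t))⁻¹)^p))) t := by
  have ht' : t ∈ Ico 0 T := ⟨ht.1.le, ht.2⟩
  have s1 := auxD1_smooth H.sm
  have s11 := auxD1_smooth s1
  have s2 := auxD2_smooth H.sm
  have s21 := auxD2_smooth s1
  have s12 := auxD1_smooth s2
  have h := aux_leib (F := fun q => (auxD1 T R q)^2)
    (F' := fun q => 2 * auxD1 T R q * auxD2 T (auxD1 T R) q)
    (s1.continuousOn.pow 2) ((continuousOn_const.mul s1.continuousOn).mul s21.continuousOn)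
    (fun θ t ht => by
      have := (auxD2_has s1 θ ht).pow 2
      refine this.congr_deriv ?_
      simp) ht
  refine h.congr_deriv ?_
  have c1 := aux_slice s1.continuousOn ht'
  have c11 := aux_slice s11.continuousOn ht'
  have c2 := aux_slice s2.continuousOn ht'
  have c12 := aux_slice s12.continuousOn ht'
  have hD2 : ∀ x, auxD2 T R (x, t) = (((R (x, t))⁻¹)^(p+1) * auxD1 T (auxD1 T R) (x, t)
      - (p+1) * ((R (x, t))⁻¹)^(p+2) * (auxD1 T R (x, t))^2 - 1/p * ((R (x, t))⁻¹)^p) :=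
    fun x => (auxD2_has H.sm x ht).unique (H.pde x t ht)
  simp only [← hD2]
  have hparts : (∫ x in (0:ℝ)..(2*π), (auxD1 T (auxD1 T R) (x, t) * auxD2 T R (x, t)
      + auxD1 T R (x, t) * auxD1 T (auxD2 T R) (x, t))) = 0 := by
    rw [intervalIntegral.integral_eq_sub_of_hasDerivAt
      (fun x _ => (auxD1_has s1 x ht').mul (auxD1_has s2 x ht'))
      (Continuous.intervalIntegrable (by fun_prop) _ _)]
    have p1 := aux_perD1 H.sm (fun θ t _ => H.per θ t) 0 ht'
    have p2 : auxD2 T R (0 + 2*π, t) = auxD2 T R (0, t) := by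
      have h1 := auxD2_has H.sm (0 + 2*π) ht
      simp only [H.per] at h1
      exact h1.unique (auxD2_has H.sm 0 ht)
    rw [zero_add] at p1 p2
    simp [p1, p2]
  rw [intervalIntegral.integral_add (Continuous.intervalIntegrable (by fun_prop) _ _)
     (Continuous.intervalIntegrable (by fun_prop) _ _)] at hparts
  have : ∀ x, 2 * auxD1 T R (x, t) * auxD2 T (auxD1 T R) (x, t) =
      2 * (auxD1 T R (x, t) * auxD1 T (auxD2 T R) (x, t)) := by
    intro x; rw [auxD_symm H.sm x ht]; ring
  simp only [this]
  rw [intervalIntegral.integral_const_mul]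
  linarith

lemma AuxPde.dρ (H : AuxPde p T R) {t : ℝ} (ht : t ∈ Ioo 0 T) :
    HasDerivAt (fun t => 1/(2*π) * ∫ x in (0:ℝ)..(2*π), R (x, t))
      (1/(2*π) * (∫ x in (0:ℝ)..(2*π), (((R (x, t))⁻¹)^(p+1) *
       auxD1 T (auxD1 T R) (x, t)
      - (p+1) * ((R (x, t))⁻¹)^(p+2) * (auxD1 T R (x, t))^2 - 1/p * ((R (x, t))⁻¹)^p))) t := by
  have hD2 : ∀ x, auxD2 T R (x, t) = (((R (x, t))⁻¹)^(p+1) * auxD1 T (auxD1 T R) (x, t)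
      - (p+1) * ((R (x, t))⁻¹)^(p+2) * (auxD1 T R (x, t))^2 - 1/p * ((R (x, t))⁻¹)^p) :=
    fun x => (auxD2_has H.sm x ht).unique (H.pde x t ht)
  simp only [← hD2]
  exact (aux_leib H.sm.continuousOn (auxD2_smooth H.sm).continuousOn
    (fun θ t ht => auxD2_has H.sm θ ht) ht).const_mul _

noncomputable def auxg (T : ℝ) (R : ℝ × ℝ → ℝ) (t : ℝ) : ℝ :=
  2 * π * ∫ x in (0:ℝ)..(2*π), (auxD1 T R (x, t))^2
noncomputable def auxρ (R : ℝ × ℝ → ℝ) (t : ℝ) : ℝ :=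
  1/(2*π) * ∫ x in (0:ℝ)..(2*π), R (x, t)

lemma aux_ode (p : ℕ) (hp : 1 ≤ p) : ∃ C₁ C₂ e₁ : ℝ, 0 ≤ C₁ ∧ 0 ≤ C₂ ∧ 0 < e₁ ∧
    ∀ T R, AuxPde p T R → ∃ g' ρ', AuxOde p C₁ C₂ e₁ T (auxg T R) (auxρ R) g' ρ' := by
  obtain ⟨C₁, e₁, hC1, he1, he1', h3⟩ := aux_S3 p hp
  obtain ⟨C₂, hC2, h4⟩ := aux_S4 p hp
  refine ⟨C₁, C₂, e₁, hC1, hC2, he1, fun T R H =>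
    ⟨fun t => 2 * π * (-2 * (∫ x in (0:ℝ)..(2*π), auxD1 T (auxD1 T R) (x, t) * (((R (x, t))⁻¹)^(p+1) *
       auxD1 T (auxD1 T R) (x, t)
      - (p+1) * ((R (x, t))⁻¹)^(p+2) * (auxD1 T R (x, t))^2 - 1/p * ((R (x, t))⁻¹)^p))),
    fun t => 1/(2*π) * (∫ x in (0:ℝ)..(2*π), (((R (x, t))⁻¹)^(p+1) *
       auxD1 T (auxD1 T R) (x, t)
      - (p+1) * ((R (x, t))⁻¹)^(p+2) * (auxD1 T R (x, t))^2 - 1/p * ((R (x, t))⁻¹)^p)), ?_⟩⟩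
  refine { cg := ?_, cρ := ?_, dg := fun t ht => (H.dG ht).const_mul _, dρ := fun t ht => H.dρ ht, g0 := ?_, ρ0 := ?_, ig := ?_, iρ := ?_ }
  · exact continuousOn_const.mul (aux_cint (F := fun q => (auxD1 T R q)^2)
      ((auxD1_smooth H.sm).continuousOn.pow 2))
  · exact continuousOn_const.mul (aux_cint H.sm.continuousOn)
  · intro t ht
    have : 0 ≤ ∫ x in (0:ℝ)..(2*π), (auxD1 T R (x, t))^2 :=
      intervalIntegral.integral_nonneg Real.two_pi_pos.le fun x _ => by positivity
    have := Real.pi_pos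
    unfold auxg; positivity
  · intro t ht
    exact (H.sp ht).rho_pos
  · intro t ht e he he1 heg
    have := h3 _ _ _ (auxρ R t) e (H.sp ⟨ht.1.le, ht.2⟩) rfl he he1 heg
    have := mul_le_mul_of_nonneg_left this Real.two_pi_pos.le
    refine this.trans (le_of_eq ?_)
    unfold auxg; ring
  · intro t ht e he he1 heg
    exact h4 _ _ _ (auxρ R t) e (H.sp ⟨ht.1.le, ht.2⟩) rfl he (he1.trans he1') heg

end

lemma aux_pde {p : ℕ} (hp : 1 ≤ p) {T : ℝ} {k : ℝ → ℝ → ℝ} {ψ : ℝ → ℝ} (H : IsPCSF p T k ψ) :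
    AuxPde p T (fun q => (k q.1 q.2)⁻¹) := by
  obtain ⟨hsm, hper, hpos, hpde, -, -, -, -, -, hcl⟩ := H
  have sK : ContDiffOn ℝ (⊤ : ℕ∞) (fun q : ℝ × ℝ => k q.1 q.2) (auxS T) := hsm
  have sR : ContDiffOn ℝ (⊤ : ℕ∞) (fun q : ℝ × ℝ => (k q.1 q.2)⁻¹) (auxS T) :=
    sK.inv fun q hq => (hpos q.1 q.2 hq.2).ne'
  refine ⟨sR, fun θ t => by simp [hper], fun θ t ht => inv_pos.2 (hpos θ t ht), fun t ht => ?_, ?_⟩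
  · rw [← hcl t ht]
    refine intervalIntegral.integral_congr fun x _ => ?_
    simp [div_eq_mul_inv]
  · intro θ t ht
    have ht' : t ∈ Ico 0 T := ⟨ht.1.le, ht.2⟩
    have hk : ∀ x, 0 < k x t := fun x => hpos x t ht'
    set K : ℝ × ℝ → ℝ := fun q => k q.1 q.2 with hK
    set R : ℝ × ℝ → ℝ := fun q => (k q.1 q.2)⁻¹ with hR
    have h1 : ∀ x, HasDerivAt (fun x => k x t) (auxD1 T K (x, t)) x := fun x => auxD1_has sK x ht'
    have h2 : ∀ x, HasDerivAt (fun x => auxD1 T K (x, t)) (auxD1 T (auxD1 T K) (x, t)) x :=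
      fun x => auxD1_has (auxD1_smooth sK) x ht'
    have d1 : deriv (fun x => k x t) = fun x => auxD1 T K (x, t) := funext fun x => (h1 x).deriv
    have d2 : deriv (deriv (fun x => k x t)) θ = auxD1 T (auxD1 T K) (θ, t) := by
      rw [d1]; exact (h2 θ).deriv
    have r1 : ∀ x, auxD1 T R (x, t) = -auxD1 T K (x, t) / (k x t)^2 := fun x =>
      (auxD1_has sR x ht').unique ((h1 x).inv (hk x).ne')
    have r2 : auxD1 T (auxD1 T R) (θ, t) = -auxD1 T (auxD1 T K) (θ, t) / (k θ t)^2
        + 2 * (auxD1 T K (θ, t))^2 / (k θ t)^3 := by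
      have e1 := auxD1_has (auxD1_smooth sR) θ ht'
      simp only [r1] at e1
      have e2 := ((h2 θ).neg).div ((h1 θ).pow 2) (pow_ne_zero 2 (hk θ).ne')
      rw [e1.unique e2]
      have := (hk θ).ne'
      simp only [Pi.pow_apply, Pi.neg_apply]
      field_simp
      simp
      ring
    have hd := (hpde θ t ht').inv (hk θ).ne'
    refine hd.congr_deriv ?_
    have hk0 := (hk θ).ne'
    have hp0 : (p:ℝ) ≠ 0 := by positivity
    rw [d2, d1, r2, r1]
    simp only [hR, inv_inv]
    set a := auxD1 T K (θ, t)
    set b := auxD1 T (auxD1 T K) (θ, t)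
    set x := k θ t
    obtain rfl | ⟨n, rfl⟩ : p = 1 ∨ ∃ n, p = n + 2 := by
      rcases p with _ | _ | n
      · omega
      · left; rfl
      · right; exact ⟨n, rfl⟩
    · simp; field_simp; ring
    · have e1 : n + 2 - 1 = n + 1 := rfl
      have e2 : n + 2 - 2 = n := rfl
      rw [e1, e2]
      field_simp
      push_cast
      ring

lemma aux_bdd {ψ : ℝ → ℝ} (hs : ContDiff ℝ (⊤ : ℕ∞) ψ) (hper : ∀ θ, ψ (θ + 2 * π) = ψ θ) :
    ∃ B, ∀ n : ℤ, (n:ℝ)^2 * ‖fCoeff ψ n‖ ≤ B := by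
  have hs1 : ContDiff ℝ (⊤ : ℕ∞) (deriv ψ) := ((contDiff_infty_iff_deriv).1 hs).2
  have hs2 : ContDiff ℝ (⊤ : ℕ∞) (deriv (deriv ψ)) := ((contDiff_infty_iff_deriv).1 hs1).2
  have d1 : ∀ x, HasDerivAt ψ (deriv ψ x) x := fun x => (hs.differentiable (by simp) x).hasDerivAt
  have d2 : ∀ x, HasDerivAt (deriv ψ) (deriv (deriv ψ) x) x :=
    fun x => (hs1.differentiable (by simp) x).hasDerivAt
  have p0 : ψ (2*π) = ψ 0 := by simpa using hper 0
  have p1 : deriv ψ (2*π) = deriv ψ 0 := by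
    have h1 := (d1 (0 + 2*π)).comp_add_const 0 (2*π)
    simp only [hper] at h1
    have := h1.unique (d1 0)
    simpa using this
  have hP := aux_parseval hs2.continuous
  refine ⟨1 + 1/(2*π) * ∫ x in (0:ℝ)..(2*π), (deriv (deriv ψ) x)^2, fun n => ?_⟩
  have h1 := aux_coef_deriv d1 hs1.continuous p0 n
  have h2 := aux_coef_deriv d2 hs2.continuous p1 n
  have h3 : ‖fCoeff (deriv (deriv ψ)) n‖ = (n:ℝ)^2 * ‖fCoeff ψ n‖ := by
    rw [h2, h1]
    simp only [norm_mul, Complex.norm_I, one_mul, Complex.norm_intCast]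
    rw [← mul_assoc, ← sq, sq_abs]
  rw [← h3]
  have h4 := le_hasSum hP n (fun j _ => by positivity)
  nlinarith [sq_nonneg (‖fCoeff (deriv (deriv ψ)) n‖ - 1), norm_nonneg (fCoeff (deriv (deriv ψ)) n)]

lemma aux_c0 {ψ : ℝ → ℝ} : (fCoeff ψ 0).re = 1/(2*π) * ∫ x in (0:ℝ)..(2*π), ψ x := by
  unfold fCoeff
  simp
  rw [intervalIntegral.integral_ofReal]
  norm_cast

lemma aux_init {e₀ : ℝ} (he : 0 < e₀) (he' : e₀ ≤ 1/2) : ∃ cp > (0:ℝ),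
    ∀ (p : ℕ) (T : ℝ), 0 < T → ∀ (k : ℝ → ℝ → ℝ) (ψ : ℝ → ℝ), AuxPde p T (fun q => (k q.1 q.2)⁻¹) →
      IsPCSF p T k ψ → cp * seminorm2 ψ ≤ (fCoeff ψ 0).re →
      auxg T (fun q => (k q.1 q.2)⁻¹) 0 < (e₀ * auxρ (fun q => (k q.1 q.2)⁻¹) 0)^2 := by
  obtain ⟨S, hS, hsum⟩ := aux_sum
  have hpi := Real.pi_pos
  refine ⟨√(2*π*S) / (e₀/7), by positivity, fun p T hT k ψ HP H hcp => ?_⟩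
  obtain ⟨-, -, -, -, hk0, hs, hψpos, hper, -, -⟩ := H
  obtain ⟨B, hB⟩ := aux_bdd hs hper
  have hs1 : ContDiff ℝ (⊤ : ℕ∞) (deriv ψ) := ((contDiff_infty_iff_deriv).1 hs).2
  have d1 : ∀ x, HasDerivAt ψ (deriv ψ x) x := fun x => (hs.differentiable (by simp) x).hasDerivAt
  have p0 : ψ (2*π) = ψ 0 := by simpa using hper 0
  have hc := hs.continuous
  have hc1 := hs1.continuous
  have hA := hsum ψ (deriv ψ) d1 hc1 p0
    ⟨B, by rintro _ ⟨n, rfl⟩; exact (mul_le_mul_of_nonneg_left (Complex.abs_re_le_norm _) (sq_nonneg _)).trans (hB n)⟩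
    ⟨B, by rintro _ ⟨n, rfl⟩; exact (mul_le_mul_of_nonneg_left (Complex.abs_im_le_norm _) (sq_nonneg _)).trans (hB n)⟩
  have hN : 0 ≤ seminorm2 ψ := le_max_of_le_left (Real.iSup_nonneg fun n => by positivity)
  set N := seminorm2 ψ
  set A := ∫ x in (0:ℝ)..(2*π), (deriv ψ x)^2 with hAdef
  set m := (fCoeff ψ 0).re with hm
  have hm' : m = 1/(2*π) * ∫ x in (0:ℝ)..(2*π), ψ x := aux_c0
  have hm0 : 0 < m := by
    rw [hm']
    have := intervalIntegral.intervalIntegral_pos_of_pos_on (hc.intervalIntegrable 0 (2*π))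
        (fun y _ => hψpos y) Real.two_pi_pos
    positivity
  have hA2 : 2*π*A ≤ (e₀/7*m)^2 := by
    have h1 : √(2*π*S) * N ≤ e₀/7 * m := by
      have := mul_le_mul_of_nonneg_left hcp (by positivity : 0 ≤ e₀/7)
      refine le_trans (le_of_eq ?_) this
      field_simp
    calc 2*π*A ≤ 2*π*(S*N^2) := by gcongr
      _ = (√(2*π*S) * N)^2 := by rw [mul_pow, Real.sq_sqrt (by positivity)]; ring
      _ ≤ _ := by gcongr
  have hcl : ∀ x ∈ Icc 0 (2*π), |ψ x - m| ≤ m/2 := by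
    intro x hx
    have h0 : (∫ x in (0:ℝ)..(2*π), (ψ x - m)) = 0 := by
      rw [intervalIntegral.integral_sub (hc.intervalIntegrable _ _) (by simp)]
      simp
      rw [hm']; field_simp; ring
    have h1 := aux_sup (fun x => (d1 x).sub_const m) hc1 h0 hx
    have h2 : (ψ x - m)^2 ≤ (m/2)^2 := by
      refine (h1.trans hA2).trans ?_
      gcongr
      nlinarith
    exact abs_le_of_sq_le_sq h2 (by positivity)
  have hD : ∀ x, auxD1 T (fun q => (k q.1 q.2)⁻¹) (x, 0) = -deriv ψ x / (ψ x)^2 := by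
    intro x
    have h1 := auxD1_has HP.sm x ⟨le_rfl, hT⟩
    simp only [hk0] at h1
    exact h1.unique ((d1 x).inv (hψpos x).ne')
  have hci : Continuous fun x => (ψ x)⁻¹ := hc.inv₀ fun x => (hψpos x).ne'
  have hρ : 2/(3*m) ≤ auxρ (fun q => (k q.1 q.2)⁻¹) 0 := by
    unfold auxρ
    simp only [hk0]
    have : ∫ x in (0:ℝ)..(2*π), 2/(3*m) ≤ ∫ x in (0:ℝ)..(2*π), (ψ x)⁻¹ := by
      apply intervalIntegral.integral_mono_on Real.two_pi_pos.le (by simp) (hci.intervalIntegrable _ _)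
      intro x hx
      have h := abs_le.1 (hcl x hx)
      rw [← one_div, div_le_div_iff₀ (by positivity) (hψpos x)]
      linarith
    simp only [intervalIntegral.integral_const, sub_zero, smul_eq_mul] at this
    calc 2/(3*m) = 1/(2*π) * (2*π*(2/(3*m))) := by field_simp
      _ ≤ _ := by gcongr
  have hg : auxg T (fun q => (k q.1 q.2)⁻¹) 0 ≤ 16/m^4*(2*π*A) := by
    unfold auxg
    simp only [hD]
    have : ∫ x in (0:ℝ)..(2*π), (-deriv ψ x / (ψ x)^2)^2 ≤ ∫ x in (0:ℝ)..(2*π), 16/m^4 * (deriv ψ x)^2 := by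
      apply intervalIntegral.integral_mono_on Real.two_pi_pos.le
      · refine Continuous.intervalIntegrable ?_ _ _
        exact (hc1.neg.div (hc.pow 2) fun x => pow_ne_zero 2 (hψpos x).ne').pow 2
      · exact Continuous.intervalIntegrable (by fun_prop) _ _
      intro x hx
      have h := abs_le.1 (hcl x hx)
      have h2 : (m/2)^4 ≤ (ψ x)^4 := by gcongr; linarith
      have := hψpos x
      calc (-deriv ψ x / (ψ x)^2)^2 = (deriv ψ x)^2 / (ψ x)^4 := by field_simp
        _ ≤ (deriv ψ x)^2 / (m/2)^4 := by gcongr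
        _ = _ := by field_simp; ring
    rw [intervalIntegral.integral_const_mul] at this
    calc _ ≤ 2*π*(16/m^4*A) := by gcongr
      _ = _ := by ring
  calc _ ≤ 16/m^4*(2*π*A) := hg
    _ ≤ 16/m^4*(e₀/7*m)^2 := by gcongr
    _ = (16/49) * (e₀^2/m^2) := by field_simp; ring
    _ < (4/9) * (e₀^2/m^2) := mul_lt_mul_of_pos_right (by norm_num) (by positivity)
    _ = (e₀ * (2/(3*m)))^2 := by field_simp; ring
    _ ≤ _ := by gcongr

lemma aux_rho0 {p : ℕ} {T : ℝ} (hT : 0 < T) {k : ℝ → ℝ → ℝ} {ψ : ℝ → ℝ} (H : IsPCSF p T k ψ)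
    (HP : AuxPde p T (fun q => (k q.1 q.2)⁻¹))
    (hE : ∀ t ∈ Ico 0 T, ∃ e, 0 ≤ e ∧ e ≤ 1/2 ∧ (e * auxρ (fun q => (k q.1 q.2)⁻¹) t)^2 =
      auxg T (fun q => (k q.1 q.2)⁻¹) t) :
    Tendsto (auxρ (fun q => (k q.1 q.2)⁻¹)) (nhdsWithin T (Iio T)) (nhds 0) := by
  obtain ⟨-, -, hpos, -, -, -, -, -, hbl, -⟩ := H
  have h1 : Tendsto (fun t => 2 * (⨆ θ : Set.Icc (0:ℝ) (2 * Real.pi), k (θ : ℝ) t)⁻¹)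
      (nhdsWithin T (Set.Iio T)) (nhds 0) := by
    simpa using (tendsto_inv_atTop_zero.comp hbl).const_mul 2
  have hnhds : ∀ᶠ t in nhdsWithin T (Iio T), t ∈ Ico 0 T := by
    filter_upwards [self_mem_nhdsWithin, nhdsWithin_le_nhds (Ioi_mem_nhds hT)] with t h h'
    exact ⟨le_of_lt h', h⟩
  refine tendsto_of_tendsto_of_tendsto_of_le_of_le' tendsto_const_nhds h1 ?_ ?_
  · filter_upwards [hnhds] with t ht
    exact (HP.sp ht).rho_pos.le
  · filter_upwards [hnhds, hbl.eventually_gt_atTop 0] with t ht hs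
    obtain ⟨e, he, he2, heg⟩ := hE t ht
    have hρ : 0 < auxρ (fun q => (k q.1 q.2)⁻¹) t := (HP.sp ht).rho_pos
    have hle : (⨆ θ : Set.Icc (0:ℝ) (2 * Real.pi), k (θ : ℝ) t) ≤
        2 / auxρ (fun q => (k q.1 q.2)⁻¹) t := by
      have : Nonempty (Set.Icc (0:ℝ) (2 * Real.pi)) := ⟨⟨0, le_rfl, Real.two_pi_pos.le⟩⟩
      refine ciSup_le fun θ => ?_
      have := abs_le.1 ((HP.sp ht).close (ρ := auxρ (fun q => (k q.1 q.2)⁻¹) t) rfl he heg θ.2)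
      have h2 : 1/2 ≤ (k (θ:ℝ) t)⁻¹ / auxρ (fun q => (k q.1 q.2)⁻¹) t := by
        simp only at this; linarith [this.1]
      have hk := hpos θ t ht
      rw [le_div_iff₀ hρ] at h2 ⊢
      have h3 := mul_le_mul_of_nonneg_left h2 hk.le
      rw [mul_inv_cancel₀ hk.ne'] at h3
      linarith
    rw [le_div_iff₀ hρ] at hle
    rw [← div_eq_mul_inv, le_div_iff₀ hs]
    linarith

lemma aux_root (n : ℕ) {x : ℝ} (hx : 0 ≤ x) : |x - 1| ≤ |x^(n+1) - 1| := by
  have h : x^(n+1) - 1 = (x - 1) * (∑ i ∈ Finset.range (n+1), x^i) := by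
    rw [mul_comm, geom_sum_mul]
  rw [h, abs_mul]
  have : 1 ≤ ∑ i ∈ Finset.range (n+1), x^i := by
    rw [Finset.sum_range_succ']
    have : 0 ≤ ∑ i ∈ Finset.range n, x^(i+1) := Finset.sum_nonneg fun i _ => by positivity
    simpa using this
  calc |x-1| = |x-1| * 1 := by ring
    _ ≤ _ := by gcongr; exact this.trans (le_abs_self _)

set_option maxHeartbeats 1000000 in
theorem aux_main (p : ℕ) (hp : 1 ≤ p) :
    ∃ cp > (0:ℝ), ∀ (T : ℝ), 0 < T → ∀ (k : ℝ → ℝ → ℝ) (ψ : ℝ → ℝ),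
      IsPCSF p T k ψ →
      cp * seminorm2 ψ ≤ (fCoeff ψ 0).re →
      ∃ C > (0:ℝ), ∃ τ₀ : ℝ, ∀ τ : ℝ, τ₀ ≤ τ →
        |(1 / (2 * Real.pi)) * (∫ θ in (0:ℝ)..(2 * Real.pi), ktilde p T k θ τ) - 1|
          ≤ C * Real.exp (-(6 * (p : ℝ) - 2) * τ) := by
  obtain ⟨C₁, C₂, e₁, hC1, hC2, he1, hode⟩ := aux_ode p hp
  obtain ⟨e₀, hsm⟩ := aux_sm C₁ C₂ e₁ hC1 hC2 he1
  obtain ⟨C₃, hC3, hmean⟩ := aux_mean 1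
  obtain ⟨cp, hcp, hinit⟩ := aux_init hsm.1 hsm.2.2.1
  refine ⟨cp, hcp, fun T hT k ψ H hbig => ?_⟩
  have HP := aux_pde hp H
  have h0 := hinit p T hT k ψ HP H hbig
  obtain ⟨g', ρ', HO⟩ := hode T _ HP
  have hall := HO.boot hp hC1 hC2 hsm hT h0
  have hE : ∀ t ∈ Ico 0 T, ∃ e, 0 ≤ e ∧ e ≤ 1/2 ∧ (e * auxρ (fun q => (k q.1 q.2)⁻¹) t)^2 =
      auxg T (fun q => (k q.1 q.2)⁻¹) t := by
    intro t ht
    have hρ := HO.ρ0 t ht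
    have hg := HO.g0 t ht
    refine ⟨√(auxg T (fun q => (k q.1 q.2)⁻¹) t) / auxρ (fun q => (k q.1 q.2)⁻¹) t, by positivity, ?_, ?_⟩
    · rw [div_le_iff₀ hρ]
      refine Real.sqrt_le_iff.2 ⟨by positivity, (hall t ht).trans ?_⟩
      have := hsm.2.2.1
      have := hsm.1
      gcongr
    · rw [div_mul_cancel₀ _ hρ.ne', Real.sq_sqrt hg]
  have hlim := aux_rho0 hT H HP hE
  obtain ⟨C, hC, hfin⟩ := HO.final hp hC1 hC2 hsm hT hall hlim
  have hp0 : (0:ℝ) < p := by exact_mod_cast hp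
  set D : ℝ := ((3/2) * ((p+1)/p) * T + 1) with hD
  have hD1 : 1 ≤ D := by rw [hD]; have : 0 ≤ (3/2) * (((p:ℝ)+1)/p) * T := by positivity
                         linarith
  have hD0 : 0 < D := by linarith
  refine ⟨((2*C) * (1 + C₃) + C₃ * C) * D^(6*p-2) + 1, by positivity, 0, fun τ hτ => ?_⟩
  set t := tOf p T τ with htdef
  have hTt : T - t = T * Real.exp (-((p:ℝ)+1)*τ) := by rw [htdef]; unfold tOf; ring
  have ht : t ∈ Ico 0 T := by
    constructor
    · have : Real.exp (-((p:ℝ)+1)*τ) ≤ 1 := Real.exp_le_one_iff.2 (by nlinarith)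
      nlinarith
    · have := Real.exp_pos (-((p:ℝ)+1)*τ)
      nlinarith
  obtain ⟨e, he, he2, heg⟩ := hE t ht
  obtain ⟨f1, f2, f3⟩ := hfin t ht
  have f1 := f1 e heg
  have hm := hmean _ _ _ (auxρ (fun q => (k q.1 q.2)⁻¹) t) e (HP.sp ht) rfl he he2 heg
  have hρ := HO.ρ0 t ht
  set ρ := auxρ (fun q => (k q.1 q.2)⁻¹) t
  simp only [inv_inv, pow_one] at hm
  have hTt0 : 0 < T - t := by linarith [ht.2]
  set lam : ℝ := (((p : ℝ) + 1) / (p : ℝ)) ^ ((1 : ℝ) / ((p : ℝ) + 1))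
    * (T - t) ^ ((1 : ℝ) / ((p : ℝ) + 1)) with hlam
  have hlam0 : 0 < lam := by positivity
  have hlamp : lam^(p+1) = (p+1)/p*(T-t) := by
    rw [hlam, ← Real.mul_rpow (by positivity) hTt0.le, ← Real.rpow_natCast, ← Real.rpow_mul (by positivity)]
    push_cast
    rw [one_div_mul_cancel (by positivity), Real.rpow_one]
  set M := 1/(2*π) * ∫ x in (0:ℝ)..(2*π), k x t with hM
  have hint : (1 / (2 * Real.pi)) * (∫ θ in (0:ℝ)..(2 * Real.pi), ktilde p T k θ τ) = lam * M := by
    unfold ktilde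
    rw [← htdef, ← hlam, intervalIntegral.integral_const_mul, hM]; ring
  rw [hint]
  set Q := ρ^(6*p-2) with hQ
  have hQ0 : 0 < Q := by positivity
  -- comparison of lam and rho
  have hx : |lam/ρ - 1| ≤ 2 * C * Q := by
    refine (aux_root p (by positivity)).trans ?_
    rw [div_pow, hlamp]
    set L := ((p:ℝ)+1)/p*(T-t) with hL
    have hL0 : 0 < L := by positivity
    have hTL : T - t ≤ L := by
      rw [hL]; have : 1 ≤ ((p:ℝ)+1)/p := by rw [le_div_iff₀ hp0]; linarith
      nlinarith
    have hP : L/2 ≤ ρ^(p+1) := by have := abs_le.1 f3; linarith [this.1]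
    have hP0 : 0 < ρ^(p+1) := by positivity
    rw [div_sub_one hP0.ne', abs_div, abs_of_pos hP0, div_le_iff₀ hP0, abs_sub_comm]
    refine f2.trans ?_
    calc C * Q * (T - t) ≤ C * Q * L := by gcongr
      _ ≤ C * Q * (2 * ρ^(p+1)) := by gcongr; linarith
      _ = _ := by ring
  have hMρ : |M * ρ - 1| ≤ C₃ * e^2 := by
    have : M * ρ - 1 = (M - ρ⁻¹) * ρ := by field_simp
    rw [this, abs_mul, abs_of_pos hρ]
    calc _ ≤ C₃ * e^2 * ρ⁻¹ * ρ := by gcongr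
      _ = _ := by field_simp
  have hMρ1 : |M * ρ| ≤ 1 + C₃ := by
    have h2 : C₃ * e^2 ≤ C₃ := by
      have : e^2 ≤ 1 := pow_le_one₀ he (he2.trans (by norm_num))
      exact mul_le_of_le_one_right hC3 this
    have h3 : |M*ρ| ≤ |M*ρ - 1| + |1| := by
      have := abs_add_le (M*ρ-1) 1; simpa using this
    rw [abs_one] at h3; linarith
  have hmain : |lam * M - 1| ≤ ((2*C) * (1 + C₃) + C₃ * C) * Q := by
    have : lam * M - 1 = (lam/ρ - 1) * (M*ρ) + (M*ρ - 1) := by field_simp; ring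
    rw [this]
    refine (abs_add_le _ _).trans ?_
    rw [abs_mul]
    calc _ ≤ 2*C*Q * (1 + C₃) + C₃ * (C * Q) := by
          gcongr
          exact hMρ.trans (by gcongr)
      _ = _ := by ring
  -- bound of rho
  have hρD : ρ ≤ D * Real.exp (-τ) := by
    have hpow : ρ^(p+1) ≤ (D * Real.exp (-τ))^(p+1) := by
      have h1 : ρ^(p+1) ≤ (3/2) * ((p+1)/p) * T * Real.exp (-((p:ℝ)+1)*τ) := by
        have := abs_le.1 f3
        rw [hTt] at this
        linarith [this.2]
      rw [mul_pow, ← Real.exp_nat_mul]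
      have e1 : ((p+1 : ℕ):ℝ) * -τ = -((p:ℝ)+1)*τ := by push_cast; ring
      rw [e1]
      refine h1.trans ?_
      gcongr
      exact (by rw [hD]; linarith : _ ≤ D).trans (le_self_pow₀ hD1 (by omega))
    exact le_of_pow_le_pow_left₀ (by omega) (by positivity) hpow
  have hQD : Q ≤ D^(6*p-2) * Real.exp (-(6 * (p : ℝ) - 2) * τ) := by
    calc Q ≤ (D * Real.exp (-τ))^(6*p-2) := by rw [hQ]; gcongr
      _ = _ := by
        rw [mul_pow, ← Real.exp_nat_mul, Nat.cast_sub (by omega)]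
        push_cast
        congr 2; ring
  refine hmain.trans ?_
  calc _ ≤ ((2*C) * (1 + C₃) + C₃ * C) * (D^(6*p-2) * Real.exp (-(6 * (p : ℝ) - 2) * τ)) := by gcongr
    _ ≤ _ := by
      have := Real.exp_pos (-(6 * (p : ℝ) - 2) * τ)
      rw [← mul_assoc]
      exact mul_le_mul_of_nonneg_right (le_add_of_nonneg_right zero_le_one) this.le

/-- There is `c_p > 0` depending only on `p` such that if `ψ̂(0) ≥ c_p ‖ψ‖₂`,
then there is `C > 0` with `|(1/2π)∫₀^{2π} k̃(θ,τ) dθ - 1| ≤ C e^{-(6p-2)τ}` for all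
sufficiently large `τ`. -/
theorem statement15 (p : ℕ) (hp : 1 ≤ p) :
    ∃ cp > (0:ℝ), ∀ (T : ℝ), 0 < T → ∀ (k : ℝ → ℝ → ℝ) (ψ : ℝ → ℝ),
      IsPCSF p T k ψ →
      cp * seminorm2 ψ ≤ (fCoeff ψ 0).re →
      ∃ C > (0:ℝ), ∃ τ₀ : ℝ, ∀ τ : ℝ, τ₀ ≤ τ →
        |(1 / (2 * Real.pi)) * (∫ θ in (0:ℝ)..(2 * Real.pi), ktilde p T k θ τ) - 1|
          ≤ C * Real.exp (-(6 * (p : ℝ) - 2) * τ) :=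
  aux_main p hp
end
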